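/- The number 1 + 3/√2 belongs to L and also to the closure of M ∖ L; consequently, M ∖ L is not a closed subset of ℝ. -/

import Mathlib

open scoped ENNReal

/-- The distance from a real number to the nearest integer. -/
noncomputable def distNearestInt (x : ℝ) : ℝ := |x - round x|

/-- The best constant of Diophantine approximation of `α`,
`ℓ(α) = limsup_{q → ∞} 1 / (q ⬝ ‖q α‖) ∈ [0, ∞]`. -/
noncomputable def lagrangeVal (α : ℝ) : ℝ≥0∞ :=
  Filter.limsup (fun q : ℕ => ENNReal.ofReal (1 / (q * distNearestInt (q * α)))) Filter.atTop

/-- The Lagrange spectrum: the set of finite values `ℓ(α)` over irrational `α`. -/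
def LagrangeSpectrum : Set ℝ :=
  {t | ∃ α : ℝ, Irrational α ∧ lagrangeVal α ≠ ⊤ ∧ (lagrangeVal α).toReal = t}

/-- The best constant of Diophantine approximation of the binary quadratic form
`h(x,y) = a x² + b x y + c y²`, namely `m(h) = sup_{(p,q) ≠ (0,0)} √Δ(h) / |h(p,q)| ∈ (0, ∞]`. -/
noncomputable def markovVal (a b c : ℝ) : ℝ≥0∞ :=
  ⨆ (pq : ℤ × ℤ) (_ : pq ≠ (0, 0)),
    ENNReal.ofReal (Real.sqrt (b ^ 2 - 4 * a * c)) /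
      ENNReal.ofReal |a * (pq.1 : ℝ) ^ 2 + b * pq.1 * pq.2 + c * (pq.2 : ℝ) ^ 2|

/-- The Markov spectrum: the set of finite values `m(h)` over real indefinite binary
quadratic forms `h` with positive discriminant. -/
def MarkovSpectrum : Set ℝ :=
  {t | ∃ a b c : ℝ, 0 < b ^ 2 - 4 * a * c ∧ markovVal a b c ≠ ⊤ ∧ (markovVal a b c).toReal = t}

/-!
For a continued fraction `[a 0; a 1, …]`, Perron's formula gives `ℓ` as the limsup of the heights
`λ i = [a i; a (i + 1), …] + [0; a (i - 1), a (i - 2), …]`, and if the heights of a bi-infinite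
sequence have a maximum, then that maximum belongs to the Markov spectrum. In a projective
coordinate vanishing at the fixed point `√2 - 1 = [0; 2, 2, …]` the digit `2` acts as
multiplication by `-ρ`, `ρ = 3 - 2√2`, and the height at a `2` adjacent to a `1` exceeds `1 + 3/√2`
by `√2` times an explicit *deviation*, a function of the coordinates of the two adjacent tails.

Write `A`, `B`, `C` for blocks of `2k + 1`, `2k + 2`, `2k + 3` digits `2`, separated by single
digits `1`. In the sequence `… A B C A B C A B A 2 2 2 …` the largest deviation `θ` occurs at the
junction `C | A` of `… C A B C | A B C A B A 2 2 2 …`, so its height `1 + 3/√2 + √2 θ` is in the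
Markov spectrum. It is not in the Lagrange spectrum: in a bi-infinite limit whose heights are
bounded by that value, a junction attaining it forces the window `C A B C | A B C A B` around it.
Comparing with the original sequence shows that this window reappears one period to the left. Hence
if the value were a limsup, the windows would fill a residue class modulo the period, so one of them
would also lie one period to the right of the junction; but the deviation `θ` requires the periodic
pattern to break there.

As `k → ∞` these values tend to `1 + 3/√2`. That number is in the Lagrange spectrum: take the
digits to be `1` at the squares and `2` elsewhere, so that in every limit at most one `1` survives.
-/

namespace MarkovLagrange

open Filter Topology

/-! ### One-sided continued fractions -/

/-- The data of a one-sided continued fraction with digits `a`: `x n = [0; a n, a (n + 1), …]` is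
the tail starting with the digit `a n`, and `y n = [0; a (n - 1), …, a 0 + y 0]` reads the digits
before it backwards, the initial value `y 0 ≥ 0` being free. -/
structure OneSidedCF (a : ℕ → ℕ) (x y : ℕ → ℝ) : Prop where
  one_le : ∀ n, 1 ≤ a n
  x_pos : ∀ n, 0 < x n
  x_lt_one : ∀ n, x n < 1
  x_mul : ∀ n, x n * (a n + x (n + 1)) = 1
  y_nonneg : ∀ n, 0 ≤ y n
  y_mul : ∀ n, y (n + 1) * (a n + y n) = 1

namespace OneSidedCF

/-- The coordinates of the lattice point `(P, Q)` in the `n`-th of the bases of `ℤ²` produced by the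
continued fraction algorithm with digits `a`. -/
def coords (a : ℕ → ℕ) (P Q : ℤ) : ℕ → ℤ × ℤ
  | 0 => (P, Q)
  | n + 1 => ((coords a P Q n).2, (coords a P Q n).1 - a n * (coords a P Q n).2)

/-- The linear form `x P - Q` in the `n`-th coordinates; it is expanded along the algorithm. -/
noncomputable def unstableForm (a : ℕ → ℕ) (x : ℕ → ℝ) (P Q : ℤ) (n : ℕ) : ℝ :=
  x n * (coords a P Q n).1 - (coords a P Q n).2

/-- The linear form `P + y Q` in the `n`-th coordinates; it is contracted along the algorithm. -/
noncomputable def stableForm (a : ℕ → ℕ) (y : ℕ → ℝ) (P Q : ℤ) (n : ℕ) : ℝ :=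
  (coords a P Q n).1 + y n * (coords a P Q n).2

/-- Perron's `λ n = [a n; a (n + 1), …] + [0; a (n - 1), …]`, the reciprocal of the normalised
value of the form at the `n`-th convergent. -/
noncomputable def height (a : ℕ → ℕ) (x y : ℕ → ℝ) (n : ℕ) : ℝ := a n + x (n + 1) + y n

theorem coords_ne_zero (a : ℕ → ℕ) {P Q : ℤ} (hPQ : P ≠ 0 ∨ Q ≠ 0) (n : ℕ) :
    (coords a P Q n).1 ≠ 0 ∨ (coords a P Q n).2 ≠ 0 := by
  induction n with
  | zero => exact hPQ
  | succ n ih =>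
    by_contra! h
    obtain ⟨hsnd, hfst⟩ := h
    simp only [coords] at hsnd hfst
    rw [hsnd, mul_zero, sub_zero] at hfst
    exact ih.elim (· hfst) (· hsnd)

variable {a : ℕ → ℕ} {x y : ℕ → ℝ}

theorem one_le_cast (h : OneSidedCF a x y) (n : ℕ) : (1 : ℝ) ≤ a n := mod_cast h.one_le n

theorem y_succ_pos (h : OneSidedCF a x y) (n : ℕ) : 0 < y (n + 1) := by
  nlinarith [h.y_mul n, h.y_nonneg n, h.y_nonneg (n + 1), h.one_le_cast n]

theorem y_succ_le_one (h : OneSidedCF a x y) (n : ℕ) : y (n + 1) ≤ 1 := by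
  nlinarith [h.y_mul n, h.y_nonneg n, h.y_succ_pos n, h.one_le_cast n]

theorem one_add_mul_pos (h : OneSidedCF a x y) (n : ℕ) : 0 < 1 + x n * y n := by
  have := h.x_pos n
  have := h.y_nonneg n
  positivity

theorem height_pos (h : OneSidedCF a x y) (n : ℕ) : 0 < height a x y n := by
  have := h.one_le_cast n
  have := h.x_pos (n + 1)
  have := h.y_nonneg n
  simp only [height]
  positivity

theorem x_mul_height (h : OneSidedCF a x y) (n : ℕ) : x n * height a x y n = 1 + x n * y n := by
  simp only [height]
  linear_combination h.x_mul n

theorem y_succ_mul_height (h : OneSidedCF a x y) (n : ℕ) :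
    y (n + 1) * height a x y n = 1 + x (n + 1) * y (n + 1) := by
  simp only [height]
  linear_combination h.y_mul n

theorem unstableForm_eq (h : OneSidedCF a x y) (P Q : ℤ) (n : ℕ) :
    unstableForm a x P Q n = -x n * unstableForm a x P Q (n + 1) := by
  simp only [unstableForm, coords]
  push_cast
  linear_combination (coords a P Q n).2 * h.x_mul n

theorem abs_unstableForm (h : OneSidedCF a x y) (P Q : ℤ) (n : ℕ) :
    |unstableForm a x P Q n| = x n * |unstableForm a x P Q (n + 1)| := by
  rw [h.unstableForm_eq, abs_mul, abs_neg, abs_of_pos (h.x_pos n)]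

theorem abs_stableForm_succ (h : OneSidedCF a x y) (P Q : ℤ) (n : ℕ) :
    |stableForm a y P Q (n + 1)| = y (n + 1) * |stableForm a y P Q n| := by
  have : stableForm a y P Q (n + 1) = y (n + 1) * stableForm a y P Q n := by
    simp only [stableForm, coords]
    push_cast
    linear_combination -(coords a P Q n).2 * h.y_mul n
  rw [this, abs_mul, abs_of_pos (h.y_succ_pos n)]

theorem abs_unstableForm_mul_abs_stableForm (h : OneSidedCF a x y) (P Q : ℤ) (n : ℕ) :
    |unstableForm a x P Q n| * |stableForm a y P Q n| * (1 + x 0 * y 0) =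
      |unstableForm a x P Q 0| * |stableForm a y P Q 0| * (1 + x n * y n) := by
  induction n with
  | zero => rfl
  | succ n ih =>
    rw [h.abs_unstableForm P Q n] at ih
    rw [h.abs_stableForm_succ]
    have hstep : x n * (1 + x (n + 1) * y (n + 1)) = y (n + 1) * (1 + x n * y n) := by
      linear_combination y (n + 1) * h.x_mul_height n - x n * h.y_succ_mul_height n
    apply mul_right_cancel₀ (h.one_add_mul_pos n).ne'
    linear_combination (1 + x (n + 1) * y (n + 1)) * ih -
      |unstableForm a x P Q (n + 1)| * |stableForm a y P Q n| * (1 + x 0 * y 0) * hstep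

theorem min_le_abs_mul_abs {x y : ℝ} (hx : 0 < x) (hy : 0 < y) {P Q : ℤ} (hPQ : P ≠ 0 ∨ Q ≠ 0)
    (hstable : x * |P + y * Q| ≤ |x * P - Q|) (hunstable : y * |x * P - Q| ≤ |P + y * Q|) :
    min x y ≤ |x * P - Q| * |P + y * Q| := by
  wlog hd : 0 ≤ x * P - Q generalizing P Q
  · have hneg : x * (-P : ℤ) - (-Q : ℤ) = -(x * P - Q) ∧
        ((-P : ℤ) : ℝ) + y * (-Q : ℤ) = -(P + y * Q) := by
      constructor <;> push_cast <;> ring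
    have := this (P := -P) (Q := -Q) (by simpa using hPQ)
    rw [hneg.1, hneg.2, abs_neg, abs_neg] at this
    exact this hstable hunstable (by linarith)
  have hxy := mul_pos hx hy
  rw [abs_of_nonneg hd] at *
  rcases le_or_gt 0 (P + y * Q) with hv | hv
  · rw [abs_of_nonneg hv] at *
    have hQ : (Q : ℝ) ≤ 0 := by nlinarith
    have hP : (0 : ℝ) ≤ P := by nlinarith
    have hP1 : (1 : ℝ) ≤ P := by
      norm_cast at hP ⊢
      refine hP.lt_of_ne' ?_
      rintro rfl
      have : (Q : ℝ) = 0 := by push_cast at hunstable; nlinarith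
      simp_all
    refine (min_le_left _ _).trans ?_
    nlinarith [mul_nonneg (sub_nonneg.2 hunstable) (neg_nonneg.2 hQ),
      mul_nonneg hy.le (sq_nonneg (Q : ℝ)), mul_le_mul_of_nonneg_left hP1 hx.le]
  · rw [abs_of_neg hv] at *
    have hP : (P : ℝ) ≤ 0 := by nlinarith
    have hQ : (1 : ℝ) ≤ -Q := by
      have : (Q : ℝ) < 0 := by nlinarith
      norm_cast at this ⊢
      omega
    refine (min_le_right _ _).trans ?_
    nlinarith [mul_nonneg (sub_nonneg.2 hstable) (neg_nonneg.2 hP),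
      mul_nonneg hx.le (sq_nonneg (P : ℝ)), mul_le_mul_of_nonneg_left hQ hy.le]

variable {P Q : ℤ}

theorem exists_one_add_mul_le_of_crossing (h : OneSidedCF a x y) (hPQ : P ≠ 0 ∨ Q ≠ 0) {n : ℕ}
    (hn : |unstableForm a x P Q n| ≤ x n * |stableForm a y P Q n|)
    (hn' : x (n + 1) * |stableForm a y P Q (n + 1)| ≤ |unstableForm a x P Q (n + 1)|) :
    ∃ m ≥ n, 1 + x 0 * y 0 ≤ |unstableForm a x P Q 0| * |stableForm a y P Q 0| *
      height a x y m := by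
  have hmin : min (x (n + 1)) (y (n + 1)) ≤
      |unstableForm a x P Q (n + 1)| * |stableForm a y P Q (n + 1)| := by
    refine min_le_abs_mul_abs (h.x_pos _) (h.y_succ_pos n) (coords_ne_zero a hPQ _) hn' ?_
    rw [h.abs_unstableForm] at hn
    exact (mul_le_mul_of_nonneg_left (le_of_mul_le_mul_left hn (h.x_pos n))
      (h.y_nonneg _)).trans_eq (h.abs_stableForm_succ P Q n).symm
  obtain ⟨m, hm, hle⟩ : ∃ m ≥ n, 1 + x (n + 1) * y (n + 1) ≤
      |unstableForm a x P Q (n + 1)| * |stableForm a y P Q (n + 1)| * height a x y m := by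
    rcases min_le_iff.1 hmin with hx | hy
    · exact ⟨n + 1, n.le_succ, h.x_mul_height (n + 1) ▸
        mul_le_mul_of_nonneg_right hx (h.height_pos _).le⟩
    · exact ⟨n, le_rfl, h.y_succ_mul_height n ▸
        mul_le_mul_of_nonneg_right hy (h.height_pos _).le⟩
  refine ⟨m, hm, le_of_mul_le_mul_left ?_ (h.one_add_mul_pos (n + 1))⟩
  have := mul_le_mul_of_nonneg_right hle (h.one_add_mul_pos 0).le
  linear_combination this +
    height a x y m * h.abs_unstableForm_mul_abs_stableForm P Q (n + 1)

theorem two_pow_mul_abs_unstableForm_le (h : OneSidedCF a x y) (m t : ℕ) :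
    2 ^ t * |unstableForm a x P Q m| ≤ |unstableForm a x P Q (m + 2 * t)| := by
  induction t with
  | zero => simp
  | succ t ih =>
    set n := m + 2 * t
    have hxx : x n * x (n + 1) ≤ 1 / 2 := by
      nlinarith [h.x_mul n, h.one_le_cast n, h.x_pos n, h.x_lt_one (n + 1)]
    have heq := h.abs_unstableForm P Q n
    rw [h.abs_unstableForm P Q (n + 1)] at heq
    rw [show m + 2 * (t + 1) = n + 1 + 1 by ring, pow_succ]
    nlinarith [abs_nonneg (unstableForm a x P Q (n + 1 + 1))]

theorem abs_stableForm_antitone (h : OneSidedCF a x y) :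
    Antitone fun n => |stableForm a y P Q n| :=
  antitone_nat_of_succ_le fun n => by
    rw [h.abs_stableForm_succ]
    exact mul_le_of_le_one_left (abs_nonneg _) (h.y_succ_le_one n)

/-- The unstable form grows and the stable one does not, so the point has to cross the sector of
`min_le_abs_mul_abs`. -/
theorem exists_one_add_mul_le (h : OneSidedCF a x y) (hPQ : P ≠ 0 ∨ Q ≠ 0) {m : ℕ}
    (hne : unstableForm a x P Q m ≠ 0)
    (hm : |unstableForm a x P Q m| ≤ x m * |stableForm a y P Q m|) :
    ∃ n ≥ m, 1 + x 0 * y 0 ≤ |unstableForm a x P Q 0| * |stableForm a y P Q 0| *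
      height a x y n := by
  by_contra! hcon
  have hle : ∀ n ≥ m, |unstableForm a x P Q n| ≤ x n * |stableForm a y P Q n| := by
    intro n hn
    induction n, hn using Nat.le_induction with
    | base => exact hm
    | succ n hn ih =>
      by_contra! hlt
      obtain ⟨l, hl, hle⟩ := h.exists_one_add_mul_le_of_crossing hPQ ih hlt.le
      exact (hcon l (hn.trans hl)).not_ge hle
  obtain ⟨t, ht⟩ := pow_unbounded_of_one_lt
    (|stableForm a y P Q m| / |unstableForm a x P Q m|) one_lt_two
  rw [div_lt_iff₀ (abs_pos.2 hne)] at ht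
  have hmt : m ≤ m + 2 * t := Nat.le_add_right _ _
  have := (hle _ hmt).trans
    (mul_le_of_le_one_left (abs_nonneg _) (h.x_lt_one (m + 2 * t)).le)
  linarith [h.two_pow_mul_abs_unstableForm_le (P := P) (Q := Q) m t,
    h.abs_stableForm_antitone (P := P) (Q := Q) hmt]

/-- For `x 0 = Q / P` the unstable form vanishes at `(P, Q)` at all times, so that the first
coordinate would decrease forever. -/
theorem irrational (h : OneSidedCF a x y) : Irrational (x 0) := by
  rintro ⟨r, hr⟩
  have hform (n : ℕ) : unstableForm a x r.den r.num n = 0 := by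
    induction n with
    | zero =>
      rw [unstableForm, ← hr, sub_eq_zero]
      exact_mod_cast r.mul_den_eq_num
    | succ n ih =>
      rw [h.unstableForm_eq] at ih
      exact (mul_eq_zero.1 ih).resolve_left (neg_ne_zero.2 (h.x_pos n).ne')
  have hcoords (n : ℕ) :
      0 < (coords a r.den r.num n).1 ∧ (coords a r.den r.num n).1 + n ≤ r.den := by
    induction n with
    | zero => simpa [coords] using r.den_pos
    | succ n ih =>
      have hx := sub_eq_zero.1 (hform n)
      have hP : (0 : ℝ) < (coords a r.den r.num n).1 := mod_cast ih.1
      have hQ : (0 : ℝ) < (coords a r.den r.num n).2 := hx ▸ mul_pos (h.x_pos n) hP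
      have hQP : ((coords a r.den r.num n).2 : ℝ) < (coords a r.den r.num n).1 := by
        rw [← hx]
        exact mul_lt_of_lt_one_left hP (h.x_lt_one n)
      norm_cast at hQ hQP
      refine ⟨hQ, ?_⟩
      change (coords a r.den r.num n).2 + _ ≤ _
      push_cast
      omega
  have := hcoords (r.den + 1)
  push_cast at this
  omega

end OneSidedCF

theorem distNearestInt_le (x : ℝ) (p : ℤ) : distNearestInt x ≤ |x - p| := round_le x p

theorem distNearestInt_natAbs_mul_le (x : ℝ) (P Q : ℤ) :
    distNearestInt (P.natAbs * x) ≤ |x * P - Q| := by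
  obtain ⟨q, rfl | rfl⟩ := P.eq_nat_or_neg
  · simpa [mul_comm] using distNearestInt_le (q * x) Q
  · have hneg : x * ((-q : ℤ) : ℝ) - Q = -(q * x - (-Q : ℤ)) := by
      push_cast
      ring
    rw [Int.natAbs_neg, Int.natAbs_natCast, hneg, abs_neg]
    exact distNearestInt_le _ _

theorem distNearestInt_add_intCast (x : ℝ) (k : ℤ) :
    distNearestInt (x + k) = distNearestInt x := by
  simp [distNearestInt, round_add_intCast]

theorem lagrangeVal_intCast_add (k : ℤ) (α : ℝ) : lagrangeVal (k + α) = lagrangeVal α := by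
  have hq (q : ℕ) : distNearestInt (q * (k + α)) = distNearestInt (q * α) := by
    rw [mul_add, add_comm]
    exact_mod_cast distNearestInt_add_intCast (q * α) (q * k)
  simp only [lagrangeVal, hq]

theorem limsup_le_limsup_of_eventually_exists_ge {f g : ℕ → ℝ≥0∞}
    (h : ∀ m, ∀ᶠ q in atTop, ∃ n ≥ m, f q ≤ g n) : limsup f atTop ≤ limsup g atTop := by
  refine le_of_forall_gt_imp_ge_of_dense fun b hb => limsup_le_of_le (by isBoundedDefault) ?_
  obtain ⟨m, hm⟩ := eventually_atTop.1 (eventually_lt_of_limsup_lt hb)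
  filter_upwards [h m] with q ⟨n, hn, hle⟩
  exact hle.trans (hm n hn).le

namespace OneSidedCF

variable {a : ℕ → ℕ} {x y : ℕ → ℝ}

theorem exists_abs_unstableForm_eq (h : OneSidedCF a x y) (m : ℕ) :
    ∃ c > 0, ∀ P Q, |unstableForm a x P Q m| = c * |unstableForm a x P Q 0| := by
  induction m with
  | zero => exact ⟨1, one_pos, by simp⟩
  | succ m ih =>
    obtain ⟨c, hc, heq⟩ := ih
    have hx := h.x_pos m
    refine ⟨c / x m, by positivity, fun P Q => ?_⟩
    rw [div_mul_eq_mul_div, ← heq, h.abs_unstableForm P Q m,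
      mul_div_cancel_left₀ _ hx.ne']

theorem exists_abs_stableForm_eq (h : OneSidedCF a x y) (m : ℕ) :
    ∃ c > 0, ∀ P Q, |stableForm a y P Q m| = c * |stableForm a y P Q 0| := by
  induction m with
  | zero => exact ⟨1, one_pos, by simp⟩
  | succ m ih =>
    obtain ⟨c, hc, heq⟩ := ih
    have hy := h.y_succ_pos m
    exact ⟨y (m + 1) * c, by positivity, fun P Q => by rw [h.abs_stableForm_succ, heq, mul_assoc]⟩

theorem distNearestInt_pos (h : OneSidedCF a x y) {q : ℕ} (hq : q ≠ 0) :
    0 < distNearestInt (q * x 0) := by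
  rw [distNearestInt, abs_pos, sub_ne_zero]
  exact (h.irrational.natCast_mul hq).ne_int _

theorem lagrangeVal_le_limsup_height (h : OneSidedCF a x y) (hy : y 0 = 0) :
    lagrangeVal (x 0) ≤ limsup (fun n => ENNReal.ofReal (height a x y n)) atTop := by
  refine limsup_le_limsup_of_eventually_exists_ge fun m => ?_
  obtain ⟨c, hc, hunstable⟩ := h.exists_abs_unstableForm_eq m
  obtain ⟨c', hc', hstable⟩ := h.exists_abs_stableForm_eq m
  have hxm := h.x_pos m
  filter_upwards [eventually_ge_atTop 1,
    tendsto_natCast_atTop_atTop.eventually_ge_atTop (c / (x m * c'))] with q hq1 hq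
  have hdist := h.distNearestInt_pos (q := q) (by omega)
  have hU : |unstableForm a x q (round (q * x 0)) 0| = distNearestInt (q * x 0) := by
    simp [unstableForm, coords, distNearestInt, mul_comm]
  have hS : |stableForm a y q (round (q * x 0)) 0| = q := by simp [stableForm, coords, hy]
  have hdist1 : distNearestInt (q * x 0) ≤ 1 := (abs_sub_round _).trans (by norm_num)
  obtain ⟨n, hn, hle⟩ := h.exists_one_add_mul_le (P := q) (Q := round (q * x 0)) (m := m)
    (Or.inl (by omega))
    (by rw [← abs_pos, hunstable, hU]; positivity)
    (by
      rw [hunstable, hstable, hU, hS, ← mul_assoc]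
      rw [div_le_iff₀ (by positivity)] at hq
      nlinarith)
  refine ⟨n, hn, ENNReal.ofReal_le_ofReal ?_⟩
  rw [hU, hS, hy, mul_zero, add_zero] at hle
  rw [div_le_iff₀ (by positivity)]
  linarith

theorem exists_coords_eq (a : ℕ → ℕ) (n : ℕ) (z : ℤ × ℤ) : ∃ P Q, coords a P Q n = z := by
  induction n generalizing z with
  | zero => exact ⟨z.1, z.2, rfl⟩
  | succ n ih =>
    obtain ⟨P, Q, hPQ⟩ := ih (z.2 + a n * z.1, z.1)
    exact ⟨P, Q, by simp [coords, hPQ]⟩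

theorem two_pow_mul_abs_stableForm_le (h : OneSidedCF a x y) (P Q : ℤ) (t : ℕ) :
    2 ^ t * |stableForm a y P Q (2 * t)| ≤ |stableForm a y P Q 0| := by
  induction t with
  | zero => simp
  | succ t ih =>
    have hyy : y (2 * t + 1 + 1) * y (2 * t + 1) ≤ 1 / 2 := by
      nlinarith [h.y_mul (2 * t + 1), h.one_le_cast (2 * t + 1), h.y_succ_pos (2 * t),
        h.y_succ_pos (2 * t + 1), h.y_succ_le_one (2 * t)]
    rw [show 2 * (t + 1) = 2 * t + 1 + 1 by ring, h.abs_stableForm_succ, h.abs_stableForm_succ,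
      ← mul_assoc (y _), pow_succ]
    refine le_trans ?_ ih
    have := mul_le_mul_of_nonneg_right hyy
      (mul_nonneg (pow_nonneg two_pos.le t) (abs_nonneg (stableForm a y P Q (2 * t))))
    linarith

/-- The point with `n`-th coordinates `(1, 0)` is the `n`-th convergent. -/
theorem limsup_height_le_lagrangeVal (h : OneSidedCF a x y) (hy : y 0 = 0) :
    limsup (fun n => ENNReal.ofReal (height a x y n)) atTop ≤ lagrangeVal (x 0) := by
  refine limsup_le_limsup_of_eventually_exists_ge fun m => ?_
  filter_upwards [eventually_ge_atTop (2 * (m + 1))] with n hn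
  obtain ⟨P, Q, hPQ⟩ := exists_coords_eq a n (1, 0)
  have hS (k : ℕ) (hk : k = 0) : |stableForm a y P Q k| = (P.natAbs : ℝ) := by
    simp [hk, stableForm, coords, hy]
  have hSn : |stableForm a y P Q n| = 1 := by simp [stableForm, hPQ]
  have hlarge : m + 1 ≤ P.natAbs := by
    have hanti := h.abs_stableForm_antitone (P := P) (Q := Q) hn
    have hdecay := h.two_pow_mul_abs_stableForm_le P Q (m + 1)
    simp only [hSn, hS 0 rfl] at hanti hdecay
    have hpow : (2 : ℝ) ^ (m + 1) ≤ P.natAbs :=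
      (le_mul_of_one_le_right (by positivity) hanti).trans hdecay
    exact Nat.lt_two_pow_self.le.trans (mod_cast hpow)
  have hvalue : |unstableForm a x P Q 0| * P.natAbs * height a x y n = 1 := by
    have hinv := h.abs_unstableForm_mul_abs_stableForm P Q n
    have hUn : |unstableForm a x P Q n| = x n := by simp [unstableForm, hPQ, abs_of_pos (h.x_pos n)]
    rw [hUn, hSn, hS 0 rfl, hy, ← h.x_mul_height n] at hinv
    exact mul_left_cancel₀ (h.x_pos n).ne' (by linarith)
  have hdist : distNearestInt (P.natAbs * x 0) ≤ |unstableForm a x P Q 0|:=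
    distNearestInt_natAbs_mul_le (x 0) P Q
  refine ⟨P.natAbs, by omega, ENNReal.ofReal_le_ofReal ?_⟩
  have hpos := h.distNearestInt_pos (q := P.natAbs) (by omega)
  have hP : (0 : ℝ) < P.natAbs := by exact_mod_cast (by omega : 0 < P.natAbs)
  rw [le_div_iff₀ (by positivity)]
  nlinarith [mul_le_mul_of_nonneg_right hdist (mul_pos hP (h.height_pos n)).le]

theorem lagrangeVal_eq_limsup_height (h : OneSidedCF a x y) (hy : y 0 = 0) :
    lagrangeVal (x 0) = limsup (fun n => ENNReal.ofReal (height a x y n)) atTop :=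
  (h.lagrangeVal_le_limsup_height hy).antisymm (h.limsup_height_le_lagrangeVal hy)

/-- The orbit of the fractional part of `α` under the Gauss map. -/
noncomputable def gaussOrbit (α : ℝ) : ℕ → ℝ
  | 0 => Int.fract α
  | n + 1 => Int.fract (1 / gaussOrbit α n)

/-- The continued fractions `[0; a (n - 1), …, a 0]`. -/
noncomputable def backward (a : ℕ → ℕ) : ℕ → ℝ
  | 0 => 0
  | n + 1 => 1 / (a n + backward a n)

theorem backward_nonneg (a : ℕ → ℕ) (n : ℕ) : 0 ≤ backward a n := by
  induction n with
  | zero => exact le_rfl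
  | succ n ih => simp only [backward]; positivity

theorem backward_succ_mul (ha : ∀ n, 1 ≤ a n) (n : ℕ) :
    backward a (n + 1) * (a n + backward a n) = 1 := by
  have hy := backward_nonneg a n
  have han : (1 : ℝ) ≤ a n := mod_cast ha n
  exact one_div_mul_cancel (by positivity)

theorem irrational_gaussOrbit {α : ℝ} (hα : Irrational α) (n : ℕ) :
    Irrational (gaussOrbit α n) := by
  induction n with
  | zero => exact irrational_sub_intCast_iff.2 hα
  | succ n ih =>
    exact irrational_sub_intCast_iff.2 (one_div (gaussOrbit α n) ▸ irrational_inv_iff.2 ih)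

theorem exists_of_irrational {α : ℝ} (hα : Irrational α) :
    ∃ (k : ℤ) (a : ℕ → ℕ) (x y : ℕ → ℝ), OneSidedCF a x y ∧ y 0 = 0 ∧ α = k + x 0 := by
  have hlt (n : ℕ) : gaussOrbit α n < 1 := by cases n <;> exact Int.fract_lt_one _
  have hpos (n : ℕ) : 0 < gaussOrbit α n :=
    lt_of_le_of_ne (by cases n <;> exact Int.fract_nonneg _)
      (irrational_gaussOrbit hα n).ne_zero.symm
  have hfloor (n : ℕ) : 1 ≤ ⌊1 / gaussOrbit α n⌋₊ :=
    Nat.le_floor (mod_cast (one_lt_one_div (hpos n) (hlt n)).le)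
  refine ⟨⌊α⌋, fun n => ⌊1 / gaussOrbit α n⌋₊, gaussOrbit α, backward _,
    ⟨hfloor, hpos, hlt, fun n => ?_, backward_nonneg _, backward_succ_mul hfloor⟩, rfl,
    (Int.floor_add_fract α).symm⟩
  have hsum : (⌊1 / gaussOrbit α n⌋₊ : ℝ) + gaussOrbit α (n + 1) = 1 / gaussOrbit α n := by
    rw [natCast_floor_eq_intCast_floor (one_div_pos.2 (hpos n)).le]
    exact Int.floor_add_fract _
  rw [hsum, mul_one_div_cancel (hpos n).ne']

end OneSidedCF

/-! ### Two-sided continued fractions -/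

/-- The data of a bi-infinite continued fraction with digits `a`: `x i = [0; a i, a (i + 1), …]` and
`y i = [0; a i, a (i - 1), …]`. -/
structure TwoSidedCF (a : ℤ → ℕ) (x y : ℤ → ℝ) : Prop where
  one_le : ∀ i, 1 ≤ a i
  x_pos : ∀ i, 0 < x i
  x_lt_one : ∀ i, x i < 1
  x_mul : ∀ i, x i * (a i + x (i + 1)) = 1
  y_pos : ∀ i, 0 < y i
  y_lt_one : ∀ i, y i < 1
  y_mul : ∀ i, y i * (a i + y (i - 1)) = 1

namespace TwoSidedCF

/-- Perron's `λ i = [a i; a (i + 1), …] + [0; a (i - 1), …]` for a bi-infinite continued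
fraction. -/
noncomputable def height (a : ℤ → ℕ) (x y : ℤ → ℝ) (i : ℤ) : ℝ := a i + x (i + 1) + y (i - 1)

variable {a : ℤ → ℕ} {x y : ℤ → ℝ}

theorem shift (h : TwoSidedCF a x y) (k : ℤ) :
    TwoSidedCF (fun i => a (i + k)) (fun i => x (i + k)) (fun i => y (i + k)) where
  one_le _ := h.one_le _
  x_pos _ := h.x_pos _
  x_lt_one _ := h.x_lt_one _
  x_mul i := add_right_comm i 1 k ▸ h.x_mul (i + k)
  y_pos _ := h.y_pos _
  y_lt_one _ := h.y_lt_one _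
  y_mul i := sub_add_eq_add_sub i 1 k ▸ h.y_mul (i + k)

theorem reverse (h : TwoSidedCF a x y) :
    TwoSidedCF (fun i => a (-i)) (fun i => y (-i)) (fun i => x (-i)) where
  one_le _ := h.one_le _
  x_pos _ := h.y_pos _
  x_lt_one _ := h.y_lt_one _
  x_mul i := neg_add' i 1 ▸ h.y_mul (-i)
  y_pos _ := h.x_pos _
  y_lt_one _ := h.x_lt_one _
  y_mul i := neg_sub' i 1 ▸ h.x_mul (-i)

theorem height_shift (k i : ℤ) :
    height (fun i => a (i + k)) (fun i => x (i + k)) (fun i => y (i + k)) i =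
      height a x y (i + k) := by
  simp only [height, add_right_comm i 1 k, sub_add_eq_add_sub]

theorem height_reverse (i : ℤ) :
    height (fun i => a (-i)) (fun i => y (-i)) (fun i => x (-i)) i = height a x y (-i) := by
  simp only [height, neg_add', neg_sub', sub_neg_eq_add]
  ring

theorem x_mul_height (h : TwoSidedCF a x y) (i : ℤ) :
    x i * height a x y i = 1 + x i * y (i - 1) := by
  simp only [height]
  linear_combination h.x_mul i

theorem toOneSidedCF (h : TwoSidedCF a x y) :
    OneSidedCF (fun n => a n) (fun n => x n) (fun n => y ((n : ℤ) - 1)) where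
  one_le _ := h.one_le _
  x_pos _ := h.x_pos _
  x_lt_one _ := h.x_lt_one _
  x_mul n := mod_cast h.x_mul n
  y_nonneg _ := (h.y_pos _).le
  y_mul n := by simpa using h.y_mul n

section Markov

variable {Λ : ℝ} {P Q : ℤ}

theorem le_abs_mul_abs_of_abs_le (h : TwoSidedCF a x y) (hle : ∀ i, height a x y i ≤ Λ)
    (h0 : height a x y 0 = Λ) (hPQ : P ≠ 0 ∨ Q ≠ 0)
    (hforms : |x 0 * P - Q| ≤ x 0 * |P + y (-1) * Q|) :
    x 0 ≤ |x 0 * P - Q| * |P + y (-1) * Q| := by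
  have hne : x 0 * P - Q ≠ 0 := by
    rcases eq_or_ne P 0 with rfl | hP
    · simpa using hPQ
    · exact sub_ne_zero.2 ((h.toOneSidedCF.irrational.mul_intCast hP).ne_int Q)
  obtain ⟨n, -, hn⟩ := h.toOneSidedCF.exists_one_add_mul_le hPQ (m := 0) hne hforms
  have hxy : x 0 * Λ = 1 + x 0 * y (-1) := h0 ▸ h.x_mul_height 0
  have hx := h.x_pos 0
  have hy := h.y_pos (-1)
  have hΛ : 0 < Λ := pos_of_mul_pos_right (hxy ▸ by positivity) hx.le
  refine le_of_mul_le_mul_right (hxy.le.trans (hn.trans ?_)) hΛ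
  refine mul_le_mul_of_nonneg_left ?_ (by positivity)
  simpa [OneSidedCF.height, height] using hle n

theorem le_abs_mul_abs (h : TwoSidedCF a x y) (hle : ∀ i, height a x y i ≤ Λ)
    (h0 : height a x y 0 = Λ) (hPQ : P ≠ 0 ∨ Q ≠ 0) :
    x 0 ≤ |x 0 * P - Q| * |P + y (-1) * Q| := by
  rcases le_total |x 0 * P - Q| (x 0 * |P + y (-1) * Q|) with hforms | hforms
  · exact h.le_abs_mul_abs_of_abs_le hle h0 hPQ hforms
  have hx := h.x_pos 0
  have hy := h.y_pos 0
  have hxmul : x 0 * (a 0 + x 1) = 1 := h.x_mul 0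
  have hymul : y 0 * (a 0 + y (-1)) = 1 := h.y_mul 0
  have hunstable : y 0 * (P - a 0 * Q : ℤ) - (-Q : ℤ) = y 0 * (P + y (-1) * Q) := by
    push_cast
    linear_combination -(Q : ℝ) * hymul
  have hstable : x 0 * ((P - a 0 * Q : ℤ) + x 1 * (-Q : ℤ)) = x 0 * P - Q := by
    push_cast
    linear_combination -(Q : ℝ) * hxmul
  have hstable' : |((P - a 0 * Q : ℤ) : ℝ) + x 1 * (-Q : ℤ)| = |x 0 * P - Q| / x 0 := by
    rw [← hstable, abs_mul, abs_of_pos hx, mul_div_cancel_left₀ _ hx.ne']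
  have hreverse := h.reverse.le_abs_mul_abs_of_abs_le (Λ := Λ) (P := P - a 0 * Q) (Q := -Q)
    (fun i => height_reverse (x := x) i ▸ hle _) (by simpa [height_reverse] using h0)
    (by rcases eq_or_ne Q 0 with rfl | hQ <;> simp_all)
  simp only [neg_zero, neg_neg, hunstable, hstable', abs_mul, abs_of_pos hy] at hreverse
  have hprod := hreverse (mul_le_mul_of_nonneg_left ((le_div_iff₀' hx).2 hforms) hy.le)
  rw [mul_assoc, le_mul_iff_one_le_right hy, mul_div_left_comm, ← mul_div_assoc,
    one_le_div₀ hx] at hprod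
  exact hprod

/-- The form attached to the bi-infinite continued fraction is `(x P - Q) (P + y Q)`. -/
theorem mem_markovSpectrum (h : TwoSidedCF a x y) (hle : ∀ i, height a x y i ≤ Λ)
    (h0 : height a x y 0 = Λ) : Λ ∈ MarkovSpectrum := by
  have hx := h.x_pos 0
  have hy := h.y_pos (-1)
  have hxy : x 0 * Λ = 1 + x 0 * y (-1) := h0 ▸ h.x_mul_height 0
  have hΛ : 0 < Λ := pos_of_mul_pos_right (hxy ▸ by positivity) hx.le
  have hdisc : (x 0 * y (-1) - 1) ^ 2 - 4 * x 0 * -y (-1) = (x 0 * Λ) ^ 2 := by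
    rw [hxy]
    ring
  have hval : markovVal (x 0) (x 0 * y (-1) - 1) (-y (-1)) = ENNReal.ofReal Λ := by
    rw [markovVal, hdisc, Real.sqrt_sq (mul_pos hx hΛ).le]
    apply le_antisymm
    · refine iSup₂_le fun pq hpq => ?_
      have hform := h.le_abs_mul_abs hle h0 (P := pq.1) (Q := pq.2)
        (by by_contra! hzero; exact hpq (Prod.ext hzero.1 hzero.2))
      rw [← abs_mul] at hform
      rw [← ENNReal.ofReal_div_of_pos (hx.trans_le (hform.trans_eq (by ring_nf)))]
      refine ENNReal.ofReal_le_ofReal (div_le_of_le_mul₀ (abs_nonneg _) hΛ.le ?_)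
      rw [mul_comm]
      exact mul_le_mul_of_nonneg_left (hform.trans_eq (by ring_nf)) hΛ.le
    · refine le_iSup₂_of_le (1, 0) (by simp) ?_
      rw [← ENNReal.ofReal_div_of_pos (by simpa using hx.ne')]
      simp [abs_of_pos hx, hx.ne']
  exact ⟨x 0, x 0 * y (-1) - 1, -y (-1), by rw [hdisc]; positivity, by simp [hval],
    by rw [hval, ENNReal.toReal_ofReal hΛ.le]⟩

end Markov

end TwoSidedCF

theorem exists_tendsto_and_mul_eq_one {ι : Type*} (F : Ultrafilter ι) (X : ι → ℤ → ℝ) {b : ℤ → ℕ}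
    (hb : ∀ i, 1 ≤ b i) (hX : ∀ i, ∀ᶠ t in (F : Filter ι), X t i ∈ Set.Icc (0 : ℝ) 1)
    (hmul : ∀ i, ∀ᶠ t in (F : Filter ι), X t i * (b i + X t (i + 1)) = 1) :
    ∃ x : ℤ → ℝ, (∀ i, Tendsto (fun t => X t i) F (𝓝 (x i))) ∧
      ∀ i, 0 < x i ∧ x i < 1 ∧ x i * (b i + x (i + 1)) = 1 := by
  have hlim (i : ℤ) : ∃ l ∈ Set.Icc (0 : ℝ) 1, Tendsto (fun t => X t i) F (𝓝 l) :=
    isCompact_Icc.ultrafilter_le_nhds (F.map fun t => X t i) (le_principal_iff.2 (hX i))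
  choose x hx hxlim using hlim
  have hxmul (i : ℤ) : x i * (b i + x (i + 1)) = 1 :=
    tendsto_nhds_unique ((hxlim i).mul ((hxlim (i + 1)).const_add (b i : ℝ)))
      (tendsto_const_nhds.congr' ((hmul i).mono fun _ ht => ht.symm))
  have hpos (i : ℤ) : 0 < x i :=
    (hx i).1.lt_of_ne' fun hzero => by simpa [hzero] using hxmul i
  refine ⟨x, hxlim, fun i => ⟨hpos i, ?_, hxmul i⟩⟩
  have hbi : (1 : ℝ) ≤ b i := mod_cast hb i
  nlinarith [hxmul i, hpos i, hpos (i + 1)]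

/-- The finite continued fraction `[0; a i, …, a (i + t - 1) + 1]` of length `t`. -/
noncomputable def finiteCF (a : ℤ → ℕ) : ℕ → ℤ → ℝ
  | 0, _ => 1
  | t + 1, i => 1 / (a i + finiteCF a t (i + 1))

theorem finiteCF_mem_Icc {a : ℤ → ℕ} (ha : ∀ i, 1 ≤ a i) (t : ℕ) (i : ℤ) :
    finiteCF a t i ∈ Set.Icc (0 : ℝ) 1 := by
  induction t generalizing i with
  | zero => simp [finiteCF]
  | succ t ih =>
    have hnonneg := (ih (i + 1)).1
    have hai : (1 : ℝ) ≤ a i := mod_cast ha i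
    exact ⟨by simp only [finiteCF]; positivity, div_le_one_of_le₀ (by linarith) (by linarith)⟩

theorem exists_mul_eq_one {a : ℤ → ℕ} (ha : ∀ i, 1 ≤ a i) :
    ∃ x : ℤ → ℝ, ∀ i, 0 < x i ∧ x i < 1 ∧ x i * (a i + x (i + 1)) = 1 := by
  obtain ⟨x, -, hx⟩ := exists_tendsto_and_mul_eq_one (hyperfilter ℕ)
    (fun N i => finiteCF a (N - i).toNat i) ha
    (fun i => Eventually.of_forall fun N => finiteCF_mem_Icc ha _ i) fun i => by
      filter_upwards [Nat.hyperfilter_le_atTop (eventually_ge_atTop (i.toNat + 1))] with N hN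
      have hnonneg := (finiteCF_mem_Icc ha (N - (i + 1)).toNat (i + 1)).1
      have hai : (1 : ℝ) ≤ a i := mod_cast ha i
      rw [show ((N : ℤ) - i).toNat = (N - (i + 1)).toNat + 1 by omega, finiteCF]
      exact one_div_mul_cancel (by positivity)
  exact ⟨x, hx⟩

theorem TwoSidedCF.exists {a : ℤ → ℕ} (ha : ∀ i, 1 ≤ a i) : ∃ x y, TwoSidedCF a x y := by
  obtain ⟨x, hx⟩ := exists_mul_eq_one ha
  obtain ⟨y, hy⟩ := exists_mul_eq_one (a := fun i => a (-i)) (fun i => ha _)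
  refine ⟨x, fun i => y (-i), ha, fun i => (hx i).1, fun i => (hx i).2.1, fun i => (hx i).2.2,
    fun i => (hy _).1, fun i => (hy _).2.1, fun i => ?_⟩
  simpa [neg_add_eq_sub] using (hy (-i)).2.2

namespace OneSidedCF

variable {a : ℕ → ℕ} {x y : ℕ → ℝ}

theorem exists_eventually_digit_eq (F : Ultrafilter ℕ) (hF : (F : Filter ℕ) ≤ atTop) {B : ℕ}
    (hB : ∀ᶠ n in atTop, a n ≤ B) (i : ℤ) :
    ∃ d, ∀ᶠ n : ℕ in (F : Filter ℕ), a (n + i).toNat = d := by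
  obtain ⟨N, hN⟩ := eventually_atTop.1 hB
  have hmem : ∀ᶠ n : ℕ in (F : Filter ℕ), ∃ d ∈ Set.Iic B, a (n + i).toNat = d := by
    filter_upwards [hF (eventually_ge_atTop (N + i.natAbs))] with n hn
    exact ⟨_, hN _ (by omega), rfl⟩
  obtain ⟨d, -, hd⟩ := (Ultrafilter.eventually_exists_mem_iff (Set.finite_Iic B)).1 hmem
  exact ⟨d, hd⟩

theorem exists_twoSidedCF_limit (h : OneSidedCF a x y) (F : Ultrafilter ℕ)
    (hF : (F : Filter ℕ) ≤ atTop) {B : ℕ} (hB : ∀ᶠ n in atTop, a n ≤ B) :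
    ∃ b X Y, TwoSidedCF b X Y ∧ (∀ i : ℤ, ∀ᶠ n : ℕ in (F : Filter ℕ), a (n + i).toNat = b i) ∧
      ∀ i : ℤ, Tendsto (fun n : ℕ => height a x y (n + i).toNat) F
        (𝓝 (TwoSidedCF.height b X Y i)) := by
  have hge (i : ℤ) : ∀ᶠ n : ℕ in (F : Filter ℕ), i.natAbs + 1 ≤ n := hF (eventually_ge_atTop _)
  choose b hb using exists_eventually_digit_eq F hF hB
  have hb1 (i : ℤ) : 1 ≤ b i := by
    obtain ⟨n, hn⟩ := (hb i).exists
    exact hn ▸ h.one_le _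
  obtain ⟨X, hX, hX'⟩ := exists_tendsto_and_mul_eq_one F (fun n i => x (n + i).toNat) hb1
    (fun i => Eventually.of_forall fun n => ⟨(h.x_pos _).le, (h.x_lt_one _).le⟩) fun i => by
      filter_upwards [hb i, hge i] with n hn hni
      rw [← hn, show ((n : ℤ) + (i + 1)).toNat = ((n : ℤ) + i).toNat + 1 by omega]
      exact h.x_mul _
  obtain ⟨Y, hY, hY'⟩ := exists_tendsto_and_mul_eq_one F (fun n i => y ((n + -i).toNat + 1))
    (b := fun i => b (-i)) (fun i => hb1 _)
    (fun i => Eventually.of_forall fun n => ⟨h.y_nonneg _, h.y_succ_le_one _⟩) fun i => by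
      filter_upwards [hb (-i), hge i] with n hn hni
      rw [← hn, show ((n : ℤ) + -(i + 1)).toNat + 1 = ((n : ℤ) + -i).toNat by omega]
      exact h.y_mul _
  refine ⟨b, X, fun i => Y (-i), ⟨hb1, fun i => (hX' i).1, fun i => (hX' i).2.1,
    fun i => (hX' i).2.2, fun i => (hY' _).1, fun i => (hY' _).2.1, fun i => ?_⟩, hb, fun i => ?_⟩
  · simpa [neg_add_eq_sub] using (hY' (-i)).2.2
  · refine (((hX (i + 1)).const_add (b i : ℝ)).add (hY (-(i - 1)))).congr' ?_
    filter_upwards [hb i, hge i] with n hn hni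
    rw [height, hn, show ((n : ℤ) + (i + 1)).toNat = ((n : ℤ) + i).toNat + 1 by omega,
      show ((n : ℤ) + -(-(i - 1))).toNat + 1 = ((n : ℤ) + i).toNat by omega]

end OneSidedCF

/-! ### Projective coordinates centred at the fixed point `√2 - 1` -/

/-- The multiplier, up to sign, of the action of the digit `2` at its fixed point `√2 - 1`. -/
noncomputable def rho : ℝ := 3 - 2 * √2

/-- The projective coordinate in which the digit `2` acts as `t ↦ -rho * t`: it sends the attracting
fixed point `√2 - 1` to `0` and the repelling one to `∞`. -/
noncomputable def coord (x : ℝ) : ℝ := (x - (√2 - 1)) / (x + (√2 + 1))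

/-- The action `x ↦ 1 / (1 + x)` of the digit `1`, in the coordinate `coord`. -/
noncomputable def oneMap (t : ℝ) : ℝ := (√2 - 1 - (3 - √2) * t) / (3 + √2 + (1 + √2) * t)

/-- The deviation from `1 + 3 / √2`, divided by `√2`, of the height at a digit `2` adjacent to a
digit `1`. Here `u` is the coordinate of the tail starting with the `2` and `v` the coordinate of
the tail following the `1` in the opposite direction. -/
noncomputable def deviation (u v : ℝ) : ℝ := -2 * u / (rho + u) - v / (1 + v)

theorem lt_sqrt_two : 1.414213562 < √2 := Real.lt_sqrt_of_sq_lt (by norm_num)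

theorem sqrt_two_lt : √2 < 1.414213563 := (Real.sqrt_lt' (by norm_num)).2 (by norm_num)

theorem sqrt_two_mul_self : √2 * √2 = 2 := Real.mul_self_sqrt (by norm_num)

theorem three_div_sqrt_two : 3 / √2 = 3 * √2 / 2 := by
  rw [div_eq_div_iff (by positivity) (by norm_num)]
  linear_combination -3 * sqrt_two_mul_self

theorem lt_rho : 0.171572874 < rho := by
  have := sqrt_two_lt
  unfold rho
  linarith

theorem rho_lt : rho < 0.171572876 := by
  have := lt_sqrt_two
  unfold rho
  linarith

theorem rho_pos : 0 < rho := by linarith [lt_rho]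

theorem rho_lt_one : rho < 1 := by linarith [rho_lt]

theorem rho_sq : rho ^ 2 = 6 * rho - 1 := by
  unfold rho
  linear_combination 4 * sqrt_two_mul_self

section oneMap

variable {s t : ℝ}

theorem oneMap_denom_pos (ht : -0.02 ≤ t) : 4 < 3 + √2 + (1 + √2) * t := by
  have := lt_sqrt_two
  have := sqrt_two_lt
  nlinarith

theorem oneMap_sub (hs : -0.02 ≤ s) (ht : -0.02 ≤ t) :
    oneMap s - oneMap t =
      -(8 / ((3 + √2 + (1 + √2) * s) * (3 + √2 + (1 + √2) * t))) * (s - t) := by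
  have := oneMap_denom_pos hs
  have := oneMap_denom_pos ht
  unfold oneMap
  rw [div_sub_div _ _ (by linarith) (by linarith), ← neg_div, div_mul_eq_mul_div]
  congr 1
  ring

/-- `L` and `U` bound the denominator of `oneMap` on the interval `[l, u]`. -/
theorem exists_oneMap_sub_eq {l u L U : ℝ} (hl : -0.02 ≤ l) (hL : L ≤ 3 + √2 + (1 + √2) * l)
    (hL0 : 0 < L) (hU : 3 + √2 + (1 + √2) * u ≤ U) (hs : s ∈ Set.Icc l u)
    (ht : t ∈ Set.Icc l u) :
    ∃ c, 8 / U ^ 2 ≤ c ∧ c ≤ 8 / L ^ 2 ∧ oneMap s - oneMap t = -c * (s - t) := by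
  have : 0 < 1 + √2 := by positivity
  have hmono {r r' : ℝ} (h : r ≤ r') : 3 + √2 + (1 + √2) * r ≤ 3 + √2 + (1 + √2) * r' := by gcongr
  have hLs := hL.trans (hmono hs.1)
  have hLt := hL.trans (hmono ht.1)
  have hsU := (hmono hs.2).trans hU
  have htU := (hmono ht.2).trans hU
  have hs0 := hL0.trans_le hLs
  have ht0 := hL0.trans_le hLt
  have hU0 := hs0.trans_le hsU
  refine ⟨_, ?_, ?_, oneMap_sub (hl.trans hs.1) (hl.trans ht.1)⟩ <;> rw [sq] <;> gcongr

theorem exists_oneMap_sub_eq_coarse (hs : s ∈ Set.Icc (-0.02) 0.11)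
    (ht : t ∈ Set.Icc (-0.02) 0.11) :
    ∃ c, 0.36 ≤ c ∧ c ≤ 0.42 ∧ oneMap s - oneMap t = -c * (s - t) := by
  have := lt_sqrt_two
  have := sqrt_two_lt
  obtain ⟨c, hlow, hup, heq⟩ := exists_oneMap_sub_eq (L := 4.365) (U := 4.68) le_rfl
    (by linarith) (by norm_num) (by linarith) hs ht
  exact ⟨c, by norm_num at hlow; linarith, by norm_num at hup; linarith, heq⟩

theorem exists_oneMap_sub_eq_fine (hs : s ∈ Set.Icc (-0.0006) 0.0031)
    (ht : t ∈ Set.Icc (-0.0006) 0.0031) :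
    ∃ c, 0.409 ≤ c ∧ c ≤ 0.411 ∧ oneMap s - oneMap t = -c * (s - t) := by
  have := lt_sqrt_two
  have := sqrt_two_lt
  obtain ⟨c, hlow, hup, heq⟩ := exists_oneMap_sub_eq (L := 4.4127) (U := 4.4218) (by norm_num)
    (by linarith) (by norm_num) (by linarith) hs ht
  exact ⟨c, by norm_num at hlow; linarith, by norm_num at hup; linarith, heq⟩

theorem oneMap_le_oneMap (hs : -0.02 ≤ s) (hst : s ≤ t) : oneMap t ≤ oneMap s := by
  have := oneMap_denom_pos hs
  have := oneMap_denom_pos (hs.trans hst)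
  have hsub := oneMap_sub (hs.trans hst) hs
  have : 0 ≤ 8 / ((3 + √2 + (1 + √2) * t) * (3 + √2 + (1 + √2) * s)) * (t - s) :=
    mul_nonneg (by positivity) (sub_nonneg.2 hst)
  linarith

theorem le_oneMap {b : ℝ} (ht : -0.02 ≤ t)
    (hb : b * (3 + √2 + (1 + √2) * t) ≤ √2 - 1 - (3 - √2) * t) : b ≤ oneMap t := by
  rwa [oneMap, le_div_iff₀ (by linarith [oneMap_denom_pos ht])]

theorem oneMap_le {b : ℝ} (ht : -0.02 ≤ t)
    (hb : √2 - 1 - (3 - √2) * t ≤ b * (3 + √2 + (1 + √2) * t)) : oneMap t ≤ b := by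
  rwa [oneMap, div_le_iff₀ (by linarith [oneMap_denom_pos ht])]

theorem oneMap_mem_Icc {l u L U : ℝ} (hl : -0.02 ≤ l)
    (hL : L * (3 + √2 + (1 + √2) * u) ≤ √2 - 1 - (3 - √2) * u)
    (hU : √2 - 1 - (3 - √2) * l ≤ U * (3 + √2 + (1 + √2) * l)) (ht : t ∈ Set.Icc l u) :
    oneMap t ∈ Set.Icc L U :=
  ⟨(le_oneMap (hl.trans (ht.1.trans ht.2)) hL).trans (oneMap_le_oneMap (hl.trans ht.1) ht.2),
    (oneMap_le_oneMap hl ht.1).trans (oneMap_le hl hU)⟩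

theorem oneMap_zero_mem_Icc : oneMap 0 ∈ Set.Icc 0.093836 0.093837 := by
  have := lt_sqrt_two
  have := sqrt_two_lt
  exact oneMap_mem_Icc (l := 0) (u := 0) (by norm_num) (by linarith) (by linarith) (by simp)

theorem oneMap_mem_Icc_of_tail (ht : t ∈ Set.Icc (-0.0183) 0.1062) :
    oneMap t ∈ Set.Icc 0.0526 0.1015 := by
  have := lt_sqrt_two
  have := sqrt_two_lt
  exact oneMap_mem_Icc (by norm_num) (by linarith) (by linarith) ht

theorem oneMap_mem_Icc_of_one (ht : t ∈ Set.Icc 0.0526 0.1015) :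
    oneMap t ∈ Set.Icc 0.0543 0.0729 := by
  have := lt_sqrt_two
  have := sqrt_two_lt
  exact oneMap_mem_Icc (by norm_num) (by linarith) (by linarith) ht

theorem oneMap_mem_Icc_of_two_two (ht : t ∈ Set.Icc (-0.0006) 0.0031) :
    oneMap t ∈ Set.Icc 0.0925 0.0942 := by
  have := lt_sqrt_two
  have := sqrt_two_lt
  exact oneMap_mem_Icc (by norm_num) (by linarith) (by linarith) ht

end oneMap

section coord

variable {x y : ℝ}

theorem coord_mem_Icc (hx : x ∈ Set.Icc (4 / 11) (3 / 4)) :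
    coord x ∈ Set.Icc (-0.0183) 0.1062 := by
  have := lt_sqrt_two
  have := sqrt_two_lt
  obtain ⟨hl, hu⟩ := hx
  refine ⟨?_, ?_⟩ <;> unfold coord
  · rw [le_div_iff₀ (by linarith)]
    linarith
  · rw [div_le_iff₀ (by linarith)]
    linarith

theorem coord_of_mul_two_add_eq_one (hx : 0 < x) (hy : 0 < y) (h : x * (2 + y) = 1) :
    coord x = -rho * coord y := by
  unfold coord rho
  rw [mul_div_assoc', div_eq_div_iff (by positivity) (by positivity)]
  linear_combination (4 - 2 * √2) * h + (2 * √2 - 4 + 2 * x - 2 * y) * sqrt_two_mul_self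

theorem coord_mul_add (hx : 0 < x) : coord x * (x + (√2 + 1)) = x - (√2 - 1) :=
  div_mul_cancel₀ _ (by positivity)

theorem oneMap_coord (hy : 0 < y) :
    oneMap (coord y) = ((1 - √2) * y + (2 - √2)) / ((√2 + 1) * y + (2 + √2)) := by
  have hsqrt := sqrt_two_mul_self
  have hmul := coord_mul_add hy
  have hnum : (√2 - 1 - (3 - √2) * coord y) * (y + (√2 + 1)) =
      2 * √2 * ((1 - √2) * y + (2 - √2)) := by
    linear_combination -(3 - √2) * hmul + (2 * y + 2) * hsqrt
  have hdenom : (3 + √2 + (1 + √2) * coord y) * (y + (√2 + 1)) =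
      2 * √2 * ((√2 + 1) * y + (2 + √2)) := by
    linear_combination (1 + √2) * hmul - (2 + 2 * y) * hsqrt
  rw [oneMap, ← mul_div_mul_right _ _ (by positivity : y + (√2 + 1) ≠ 0), hnum, hdenom,
    mul_div_mul_left _ _ (by positivity)]

theorem coord_of_mul_one_add_eq_one (hx : 0 < x) (hy : 0 < y) (h : x * (1 + y) = 1) :
    coord x = oneMap (coord y) := by
  rw [oneMap_coord hy, coord, div_eq_div_iff (by positivity) (by positivity)]
  linear_combination 2 * √2 * h

theorem deviation_coord_coord (hx : 0 < x) (hy : 0 < y) :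
    1 / x + 1 / (1 + y) = 1 + 3 / √2 + √2 * deviation (coord x) (coord y) := by
  have hsqrt := sqrt_two_mul_self
  have hsub : 0 < 2 - √2 := by linarith [sqrt_two_lt]
  have hx' : rho + coord x = 2 * (2 - √2) * x / (x + (√2 + 1)) := by
    rw [eq_div_iff (by positivity), add_mul, coord_mul_add hx, rho]
    linear_combination -2 * hsqrt
  have hy' : 1 + coord y = (2 * y + 2) / (y + (√2 + 1)) := by
    rw [eq_div_iff (by positivity), add_mul, coord_mul_add hy]
    ring
  have hfst : √2 * (-2 * coord x / (rho + coord x)) = 1 / x - (√2 + 1) := by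
    rw [hx', coord]
    field_simp
    linear_combination (1 - x) * hsqrt
  have hsnd : √2 * (coord y / (1 + coord y)) = √2 / 2 - 1 / (1 + y) := by
    rw [hy', coord]
    field_simp
    linear_combination (-1 - y) * hsqrt
  rw [deviation, mul_sub, hfst, hsnd, three_div_sqrt_two]
  ring

end coord

/-! ### Tails with digits `1` and `2` -/

/-- The coordinates `t n` of the tails of a one-sided continued fraction with digits
`d n ∈ {1, 2}` in which the block `1 2 1` does not occur. -/
structure TailCoords (d : ℕ → ℕ) (t : ℕ → ℝ) : Prop where
  digit : ∀ n, d n = 1 ∨ d n = 2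
  of_two : ∀ n, d n = 2 → t n = -rho * t (n + 1)
  of_one : ∀ n, d n = 1 → t n = oneMap (t (n + 1))
  two_two : ∀ n, d n = 1 → d (n + 1) = 2 → d (n + 2) = 2
  mem_Icc : ∀ n, t n ∈ Set.Icc (-0.0183) 0.1062

namespace TailCoords

variable {d : ℕ → ℕ} {t : ℕ → ℝ}

theorem shift (h : TailCoords d t) (m : ℕ) :
    TailCoords (fun n => d (m + n)) (fun n => t (m + n)) where
  digit _ := h.digit _
  of_two _ := h.of_two _
  of_one _ := h.of_one _
  two_two _ := h.two_two _
  mem_Icc _ := h.mem_Icc _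

theorem le_of_two (h : TailCoords d t) {n : ℕ} (hn : d n = 2) : t n ≤ 0.0032 := by
  rw [h.of_two n hn]
  nlinarith [(h.mem_Icc (n + 1)).1, lt_rho, rho_lt]

theorem mem_Icc_of_one_coarse (h : TailCoords d t) {n : ℕ} (hn : d n = 1) :
    t n ∈ Set.Icc 0.0526 0.1015 :=
  h.of_one n hn ▸ oneMap_mem_Icc_of_tail (h.mem_Icc _)

theorem le_coarse (h : TailCoords d t) (n : ℕ) : t n ≤ 0.1015 := by
  rcases h.digit n with hn | hn
  · exact (h.mem_Icc_of_one_coarse hn).2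
  · linarith [h.le_of_two hn]

theorem mem_Icc_of_one_one (h : TailCoords d t) {n : ℕ} (hn : d n = 1) (hn' : d (n + 1) = 1) :
    t n ∈ Set.Icc 0.0543 0.0729 :=
  h.of_one n hn ▸ oneMap_mem_Icc_of_one (h.mem_Icc_of_one_coarse hn')

theorem mem_Icc_of_two_two (h : TailCoords d t) {n : ℕ} (hn : d n = 2) (hn' : d (n + 1) = 2) :
    t n ∈ Set.Icc (-0.0006) 0.0031 := by
  have heq : t n = (6 * rho - 1) * t (n + 2) := by
    rw [h.of_two n hn, h.of_two _ hn', ← rho_sq]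
    ring
  have := (h.mem_Icc (n + 2)).1
  have := h.le_coarse (n + 2)
  have := lt_rho
  have := rho_lt
  rw [heq]
  constructor <;> nlinarith

theorem mem_Icc_of_one_two (h : TailCoords d t) {n : ℕ} (hn : d n = 1) (hn' : d (n + 1) = 2) :
    t n ∈ Set.Icc 0.0925 0.0942 :=
  h.of_one n hn ▸ oneMap_mem_Icc_of_two_two (h.mem_Icc_of_two_two hn' (h.two_two n hn hn'))

theorem ge_of_one (h : TailCoords d t) {n : ℕ} (hn : d n = 1) : 0.0543 ≤ t n := by
  rcases h.digit (n + 1) with hn' | hn'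
  · exact (h.mem_Icc_of_one_one hn hn').1
  · linarith [(h.mem_Icc_of_one_two hn hn').1]

theorem le (h : TailCoords d t) (n : ℕ) : t n ≤ 0.0942 := by
  rcases h.digit n with hn | hn
  · rcases h.digit (n + 1) with hn' | hn'
    · linarith [(h.mem_Icc_of_one_one hn hn').2]
    · exact (h.mem_Icc_of_one_two hn hn').2
  · linarith [h.le_of_two hn]

theorem eq_neg_rho_pow_mul (h : TailCoords d t) {m : ℕ} (hm : ∀ n < m, d n = 2) :
    t 0 = (-rho) ^ m * t m := by
  induction m with
  | zero => simp
  | succ m ih =>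
    rw [ih fun n hn => hm n (by omega), h.of_two m (hm m (by omega))]
    ring

/-- An upper bound at the scale `s = (-rho) ^ m` forces `m` initial digits `2`, unless the sign of
`t 0` is wrong: a first digit `1` in place `n < m` makes `t 0` of size `rho ^ n`. -/
theorem nonpos_or_forall_two (h : TailCoords d t) {m : ℕ} {s : ℝ} (hs : (-rho) ^ m = s)
    (hm : s * t 0 < 1.8 * s ^ 2) : s * t 0 ≤ 0 ∨ ∀ n < m, d n = 2 := by
  classical
  by_contra! hcon
  obtain ⟨hpos, hex⟩ := hcon
  obtain ⟨hlt, hne⟩ := Nat.find_spec hex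
  have hfind (i : ℕ) (hi : i < Nat.find hex) : d i = 2 := by
    by_contra hi'
    exact Nat.find_min hex hi ⟨hi.trans hlt, hi'⟩
  generalize Nat.find hex = n at hlt hne hfind
  have hge := h.ge_of_one ((h.digit n).resolve_right hne)
  obtain ⟨r, rfl⟩ := Nat.exists_eq_add_of_le hlt.le
  have hsq : 0 < ((-rho) ^ n) ^ 2 := sq_pos_iff.2 (pow_ne_zero n (neg_ne_zero.2 rho_pos.ne'))
  rw [h.eq_neg_rho_pow_mul hfind, ← hs, pow_add] at hm hpos
  replace hpos : 0 < (-rho) ^ r * t n := pos_of_mul_pos_right (by linarith) hsq.le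
  replace hm : (-rho) ^ r * t n < 1.8 * ((-rho) ^ r) ^ 2 :=
    lt_of_mul_lt_mul_left (by linarith) hsq.le
  have hr := pos_of_mul_pos_left hpos (by linarith)
  have hsmall : (-rho) ^ r ≤ rho ^ 2 := by
    have heven : Even r := by
      by_contra hodd
      have := (Nat.not_even_iff_odd.1 hodd).pow_neg (neg_neg_of_pos rho_pos)
      linarith
    rw [heven.neg_pow]
    exact pow_le_pow_of_le_one rho_pos.le rho_lt_one.le (by obtain ⟨l, rfl⟩ := heven; omega)
  rw [rho_sq] at hsmall
  nlinarith [rho_lt]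

theorem mul_le_of_mul_lt (h : TailCoords d t) {m : ℕ} {s : ℝ} (hs : (-rho) ^ m = s)
    (hm : s * t 0 < 1.8 * s ^ 2) : s * t 0 ≤ 0.0942 * s ^ 2 := by
  rcases h.nonpos_or_forall_two hs hm with hle | htwo
  · nlinarith [sq_nonneg s]
  · rw [h.eq_neg_rho_pow_mul htwo, hs]
    nlinarith [sq_nonneg s, h.le m]

theorem digits_of_window (h : TailCoords d t) {m : ℕ} {s : ℝ} (hs : (-rho) ^ m = s)
    (hupper : s * t 0 < 1.8 * s ^ 2) (hlower : 0.0729 * s ^ 2 < s * t 0) :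
    (∀ n < m, d n = 2) ∧ d m = 1 ∧ d (m + 1) = 2 ∧ t (m + 1) ∈ Set.Icc (-0.0006) 0.0031 := by
  have htwo := (h.nonpos_or_forall_two hs hupper).resolve_left (by nlinarith [sq_nonneg s])
  have htm : 0.0729 < t m := by
    rw [h.eq_neg_rho_pow_mul htwo, hs] at hlower
    nlinarith [sq_nonneg s]
  have hm : d m = 1 := (h.digit m).resolve_right fun hm => by linarith [h.le_of_two hm]
  have hm' : d (m + 1) = 2 :=
    (h.digit _).resolve_left fun hm' => by linarith [(h.mem_Icc_of_one_one hm hm').2]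
  exact ⟨htwo, hm, hm', h.mem_Icc_of_two_two hm' (h.two_two m hm hm')⟩

theorem abs_sub_le (h : TailCoords d t) {d' : ℕ → ℕ} {t' : ℕ → ℝ} (h' : TailCoords d' t') {m : ℕ}
    (hd : ∀ n < m, d n = d' n) : |t 0 - t' 0| ≤ 0.42 ^ m * 0.2 := by
  induction m generalizing d t d' t' with
  | zero =>
    rw [abs_le]
    constructor <;> linarith [(h.mem_Icc 0).1, (h.mem_Icc 0).2, (h'.mem_Icc 0).1, (h'.mem_Icc 0).2]
  | succ m ih =>
    have htail : |t 1 - t' 1| ≤ 0.42 ^ m * 0.2 :=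
      ih (h.shift 1) (h'.shift 1) fun n hn => hd _ (by omega)
    have hcontract : |t 0 - t' 0| ≤ 0.42 * |t 1 - t' 1| := by
      have hd0 := hd 0 (by omega)
      rcases h.digit 0 with h0 | h0
      · have hsub : Set.Icc (-0.0183 : ℝ) 0.1062 ⊆ Set.Icc (-0.02) 0.11 :=
          Set.Icc_subset_Icc (by norm_num) (by norm_num)
        obtain ⟨c, hc, hc', heq⟩ :=
          exists_oneMap_sub_eq_coarse (hsub (h.mem_Icc 1)) (hsub (h'.mem_Icc 1))
        rw [h.of_one 0 h0, h'.of_one 0 (hd0 ▸ h0), heq, abs_mul, abs_neg,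
          abs_of_nonneg (by linarith)]
        gcongr
      · rw [h.of_two 0 h0, h'.of_two 0 (hd0 ▸ h0), ← mul_sub, abs_mul, abs_neg, abs_of_pos rho_pos]
        have := rho_lt
        gcongr
        linarith
    rw [pow_succ']
    linarith

theorem eq_of_digits_eq (h : TailCoords d t) {d' : ℕ → ℕ} {t' : ℕ → ℝ} (h' : TailCoords d' t')
    (hd : ∀ n, d n = d' n) : t 0 = t' 0 := by
  have hlim : Tendsto (fun m : ℕ => (0.42 : ℝ) ^ m * 0.2) atTop (𝓝 0) := by
    simpa using (tendsto_pow_atTop_nhds_zero_of_lt_one (r := (0.42 : ℝ)) (by norm_num)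
      (by norm_num)).mul_const 0.2
  have hle := ge_of_tendsto' hlim fun m => h.abs_sub_le h' (m := m) fun n _ => hd n
  exact sub_eq_zero.1 (abs_nonpos_iff.1 hle)

end TailCoords

/-! ### Two-sided sequences -/

/-- The coordinates of the tails of a two-sided sequence of digits `1`, `2` in which the block
`1 2 1` does not occur: `f i` belongs to the right tail, which starts at `i + 1`, and `g i` to the
left tail, which starts at `i - 1`. -/
structure TwoSidedCoords (a : ℤ → ℕ) (f g : ℤ → ℝ) : Prop where
  digit : ∀ i, a i = 1 ∨ a i = 2
  two_two : ∀ i, a i = 1 → a (i + 1) = 2 → a (i + 2) = 2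
  f_of_two : ∀ i, a (i + 1) = 2 → f i = -rho * f (i + 1)
  f_of_one : ∀ i, a (i + 1) = 1 → f i = oneMap (f (i + 1))
  g_of_two : ∀ i, a (i - 1) = 2 → g i = -rho * g (i - 1)
  g_of_one : ∀ i, a (i - 1) = 1 → g i = oneMap (g (i - 1))
  f_mem_Icc : ∀ i, f i ∈ Set.Icc (-0.0183) 0.1062
  g_mem_Icc : ∀ i, g i ∈ Set.Icc (-0.0183) 0.1062

/-- A maximal block of digits `2`, between the digits `1` at `i` and at `j`. -/
structure TwosBlock (a : ℤ → ℕ) (i j : ℤ) : Prop where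
  left : a i = 1
  two : ∀ t, i < t → t < j → a t = 2
  right : a j = 1

theorem TwosBlock.reverse {a : ℤ → ℕ} {i j : ℤ} (h : TwosBlock a i j) :
    TwosBlock (fun t => a (-t)) (-j) (-i) where
  left := by simpa using h.right
  two t hi hj := h.two _ (by omega) (by omega)
  right := by simpa using h.left

/-- The gaps in the set of coordinates of tails: at every scale `s = (-rho) ^ m` there is no
coordinate between `0.0942 * s` and `1.8 * s`. -/
def HasGaps (t : ℝ) : Prop :=
  ∀ ⦃m : ℕ⦄ ⦃s : ℝ⦄, (-rho) ^ m = s → s * t < 1.8 * s ^ 2 → s * t ≤ 0.0942 * s ^ 2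

namespace TwoSidedCoords

variable {a : ℤ → ℕ} {f g : ℤ → ℝ}

theorem reverse (h : TwoSidedCoords a f g) :
    TwoSidedCoords (fun i => a (-i)) (fun i => g (-i)) (fun i => f (-i)) where
  digit _ := h.digit _
  two_two i hone htwo := by
    refine (h.digit _).resolve_left fun hone' => ?_
    have := h.two_two _ hone' (by convert htwo using 2; ring)
    rw [show -(i + 2) + 2 = -i by ring] at this
    omega
  f_of_two i := by simpa only [neg_add'] using h.g_of_two (-i)
  f_of_one i := by simpa only [neg_add'] using h.g_of_one (-i)
  g_of_two i := by simpa only [neg_sub, neg_add_eq_sub] using h.f_of_two (-i)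
  g_of_one i := by simpa only [neg_sub, neg_add_eq_sub] using h.f_of_one (-i)
  f_mem_Icc _ := h.g_mem_Icc _
  g_mem_Icc _ := h.f_mem_Icc _

theorem tail (h : TwoSidedCoords a f g) (j : ℤ) :
    TailCoords (fun n => a (j + 1 + n)) (fun n => f (j + n)) where
  digit _ := h.digit _
  of_two n hn := by
    rw [h.f_of_two _ (by rwa [add_right_comm]), Nat.cast_succ, add_assoc]
  of_one n hn := by
    rw [h.f_of_one _ (by rwa [add_right_comm]), Nat.cast_succ, add_assoc]
  two_two n hone htwo := by
    have := h.two_two _ hone (by convert htwo using 2; push_cast; ring)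
    convert this using 2
    push_cast
    ring
  mem_Icc _ := h.f_mem_Icc _

theorem f_le (h : TwoSidedCoords a f g) (i : ℤ) : f i ≤ 0.0942 := by
  simpa using (h.tail i).le 0

theorem g_le (h : TwoSidedCoords a f g) (i : ℤ) : g i ≤ 0.0942 := by
  simpa using h.reverse.f_le (-i)

theorem f_hasGaps (h : TwoSidedCoords a f g) (i : ℤ) : HasGaps (f i) := fun _ _ hs hlt => by
  simpa using (h.tail i).mul_le_of_mul_lt hs (by simpa using hlt)

theorem g_hasGaps (h : TwoSidedCoords a f g) (i : ℤ) : HasGaps (g i) := by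
  simpa using h.reverse.f_hasGaps (-i)

theorem digit_of_f_neg (h : TwoSidedCoords a f g) {i : ℤ} (hf : f i < 0) : a (i + 1) = 2 := by
  refine (h.digit _).resolve_left fun hone => ?_
  have := (h.tail i).ge_of_one (n := 0) (by simpa using hone)
  simp only [Nat.cast_zero, add_zero] at this
  linarith

theorem digit_of_g_neg (h : TwoSidedCoords a f g) {i : ℤ} (hg : g i < 0) : a (i - 1) = 2 := by
  simpa [neg_add_eq_sub] using h.reverse.digit_of_f_neg (i := -i) (by simpa using hg)

theorem f_eq_of_twosBlock (h : TwoSidedCoords a f g) {i j : ℤ} (hb : TwosBlock a i j) {m : ℕ}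
    {s : ℝ} (hs : (-rho) ^ m = s) (hj : j = i + m + 1) : f i = s * oneMap (f j) := by
  have hf : f i = s * f (i + m) := by
    simpa [hs] using
      (h.tail i).eq_neg_rho_pow_mul (m := m) fun n hn => hb.two _ (by omega) (by omega)
  rw [hf, h.f_of_one _ (by rw [← hj]; exact hb.right), ← hj]

theorem g_eq_of_twosBlock (h : TwoSidedCoords a f g) {i j : ℤ} (hb : TwosBlock a i j) {m : ℕ}
    {s : ℝ} (hs : (-rho) ^ m = s) (hj : j = i + m + 1) : g j = s * oneMap (g i) := by
  simpa using h.reverse.f_eq_of_twosBlock hb.reverse hs (by omega)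

end TwoSidedCoords

/-- A block of digits `2` followed to the right from the `1` at `j` to the `1` at `j'`, when the
next digit is again `2`; `s = (-rho) ^ m` for a block of length `m`. -/
structure RightStep (a : ℤ → ℕ) (f g : ℤ → ℝ) (s : ℝ) (j j' : ℤ) : Prop where
  block : TwosBlock a j j'
  two_before : a (j' - 1) = 2
  two_after : a (j' + 1) = 2
  f_eq : f j = s * oneMap (f j')
  g_eq : g j' = s * oneMap (g j)
  mem_Icc : f j' ∈ Set.Icc (-0.0006) 0.0031

/-- The mirror image of `RightStep`: a block of digits `2` followed to the left from the `1` at `j`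
to the `1` at `j'`. -/
structure LeftStep (a : ℤ → ℕ) (f g : ℤ → ℝ) (s : ℝ) (j j' : ℤ) : Prop where
  block : TwosBlock a j' j
  two_before : a (j' + 1) = 2
  two_after : a (j' - 1) = 2
  g_eq : g j = s * oneMap (g j')
  f_eq : f j' = s * oneMap (f j)
  mem_Icc : g j' ∈ Set.Icc (-0.0006) 0.0031

section steps

variable {a : ℤ → ℕ} {f g : ℤ → ℝ} {s : ℝ} {j j' : ℤ} {m : ℕ}

theorem RightStep.of_reverse
    (h : RightStep (fun i => a (-i)) (fun i => g (-i)) (fun i => f (-i)) s (-j) (-j')) :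
    LeftStep a f g s j j' where
  block := by simpa using h.block.reverse
  two_before := by simpa [add_comm] using h.two_before
  two_after := by simpa [neg_add_eq_sub] using h.two_after
  g_eq := by simpa using h.f_eq
  f_eq := by simpa using h.g_eq
  mem_Icc := by simpa using h.mem_Icc

namespace TwoSidedCoords

theorem rightStep_of_twosBlock (h : TwoSidedCoords a f g) (hs : (-rho) ^ m = s) (hm : 1 ≤ m)
    (hb : TwosBlock a j j') (hj' : j' = j + m + 1) (htwo : a (j' + 1) = 2) :
    RightStep a f g s j j' where
  block := hb
  two_before := hb.two _ (by omega) (by omega)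
  two_after := htwo
  f_eq := h.f_eq_of_twosBlock hb hs hj'
  g_eq := h.g_eq_of_twosBlock hb hs hj'
  mem_Icc := by
    simpa using (h.tail j').mem_Icc_of_two_two (n := 0) (by simpa using htwo)
      (by simpa [add_assoc] using h.two_two _ hb.right htwo)

theorem leftStep_of_twosBlock (h : TwoSidedCoords a f g) (hs : (-rho) ^ m = s) (hm : 1 ≤ m)
    (hb : TwosBlock a j' j) (hj' : j' = j - m - 1) (htwo : a (j' - 1) = 2) :
    LeftStep a f g s j j' :=
  (h.reverse.rightStep_of_twosBlock hs hm hb.reverse (by omega)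
    (by simpa [neg_add_eq_sub] using htwo)).of_reverse

theorem rightStep (h : TwoSidedCoords a f g) (hs : (-rho) ^ m = s) (hm : 1 ≤ m) (hj : a j = 1)
    (hj' : j' = j + m + 1) (hupper : s * f j < 1.8 * s ^ 2) (hlower : 0.0729 * s ^ 2 < s * f j) :
    RightStep a f g s j j' := by
  obtain ⟨htwo, hone, htwo', -⟩ :=
    (h.tail j).digits_of_window hs (by simpa using hupper) (by simpa using hlower)
  have hb : TwosBlock a j j' := by
    refine ⟨hj, fun t ht ht' => ?_, by rwa [hj', add_right_comm]⟩
    have := htwo (t - j - 1).toNat (by omega)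
    rwa [show j + 1 + ((t - j - 1).toNat : ℤ) = t by omega] at this
  refine h.rightStep_of_twosBlock hs hm hb hj' ?_
  convert htwo' using 2
  push_cast
  omega

end TwoSidedCoords

end steps

/-- Coordinates for which the heights at the digits `2` adjacent to a digit `1` are at most
`1 + 3 / √2 + √2 * θ`. -/
structure AdmissibleCoords (θ : ℝ) (a : ℤ → ℕ) (f g : ℤ → ℝ) : Prop
    extends TwoSidedCoords a f g where
  right_le : ∀ j, a j = 1 → a (j + 1) = 2 → deviation (f j) (g j) ≤ θ
  left_le : ∀ j, a j = 1 → a (j - 1) = 2 → deviation (g j) (f j) ≤ θ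

theorem AdmissibleCoords.reverse {θ : ℝ} {a : ℤ → ℕ} {f g : ℤ → ℝ}
    (h : AdmissibleCoords θ a f g) :
    AdmissibleCoords θ (fun i => a (-i)) (fun i => g (-i)) (fun i => f (-i)) where
  toTwoSidedCoords := h.toTwoSidedCoords.reverse
  right_le j := by simpa only [neg_add'] using h.left_le (-j)
  left_le j := by simpa only [neg_sub, neg_add_eq_sub] using h.right_le (-j)

/-! ### Continued fractions with small heights -/

namespace TwoSidedCF

variable {a : ℤ → ℕ} {x y : ℤ → ℝ}

theorem x_mem_Icc (h : TwoSidedCF a x y) (hdigit : ∀ i, a i = 1 ∨ a i = 2) (i : ℤ) :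
    x i ∈ Set.Icc (4 / 11) (3 / 4) := by
  have hone_le (i) : (1 : ℝ) ≤ a i := by exact_mod_cast h.one_le i
  have hle_two (i) : (a i : ℝ) ≤ 2 := by
    exact_mod_cast (hdigit i).elim (fun h => h ▸ one_le_two) fun h => h.le
  have hlower (i) : 1 / 3 ≤ x i := by
    nlinarith [h.x_mul i, h.x_pos i, h.x_lt_one (i + 1), hle_two i]
  have hupper (i) : x i ≤ 3 / 4 := by
    nlinarith [h.x_mul i, h.x_pos i, hlower (i + 1), hone_le i]
  exact ⟨by nlinarith [h.x_mul i, h.x_pos i, hupper (i + 1), hle_two i], hupper i⟩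

theorem y_mem_Icc (h : TwoSidedCF a x y) (hdigit : ∀ i, a i = 1 ∨ a i = 2) (i : ℤ) :
    y i ∈ Set.Icc (4 / 11) (3 / 4) := by
  simpa using h.reverse.x_mem_Icc (fun _ => hdigit _) (-i)

theorem x_eq_inv (h : TwoSidedCF a x y) (i : ℤ) : x i = 1 / (a i + x (i + 1)) :=
  eq_one_div_of_mul_eq_one_left (h.x_mul i)

theorem height_add_one (h : TwoSidedCF a x y) {j : ℤ} (hj : a j = 1) :
    height a x y (j + 1) =
      1 + 3 / √2 + √2 * deviation (coord (x (j + 1))) (coord (y (j - 1))) := by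
  have hy : y j = 1 / (1 + y (j - 1)) := by
    simpa [hj] using eq_one_div_of_mul_eq_one_left (h.y_mul j)
  rw [← deviation_coord_coord (h.x_pos _) (h.y_pos _), ← hy, h.x_eq_inv, one_div_one_div, height,
    add_sub_cancel_right]

theorem height_sub_one (h : TwoSidedCF a x y) {j : ℤ} (hj : a j = 1) :
    height a x y (j - 1) =
      1 + 3 / √2 + √2 * deviation (coord (y (j - 1))) (coord (x (j + 1))) := by
  have := h.reverse.height_add_one (j := -j) (by simpa using hj)
  rw [height_reverse] at this
  simpa only [neg_add_rev, neg_neg, neg_add_eq_sub, neg_sub, sub_neg_eq_add, add_comm 1 j,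
    ← sub_eq_neg_add] using this

theorem twoSidedCoords (h : TwoSidedCF a x y) (hdigit : ∀ i, a i = 1 ∨ a i = 2)
    (htwo : ∀ i, a i = 1 → a (i + 1) = 2 → a (i + 2) = 2) :
    TwoSidedCoords a (fun i => coord (x (i + 1))) (fun i => coord (y (i - 1))) where
  digit := hdigit
  two_two := htwo
  f_of_two i hi := coord_of_mul_two_add_eq_one (h.x_pos _) (h.x_pos _) (by
    simpa [hi] using h.x_mul (i + 1))
  f_of_one i hi := coord_of_mul_one_add_eq_one (h.x_pos _) (h.x_pos _) (by
    simpa [hi] using h.x_mul (i + 1))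
  g_of_two i hi := coord_of_mul_two_add_eq_one (h.y_pos _) (h.y_pos _) (by
    simpa [hi] using h.y_mul (i - 1))
  g_of_one i hi := coord_of_mul_one_add_eq_one (h.y_pos _) (h.y_pos _) (by
    simpa [hi] using h.y_mul (i - 1))
  f_mem_Icc _ := coord_mem_Icc (h.x_mem_Icc hdigit _)
  g_mem_Icc _ := coord_mem_Icc (h.y_mem_Icc hdigit _)

theorem digit_le_two (h : TwoSidedCF a x y) (hle : ∀ i, height a x y i ≤ 3.13) (i : ℤ) :
    a i ≤ 2 := by
  have hle_three (i) : a i ≤ 3 := by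
    by_contra! hlt
    have : (4 : ℝ) ≤ a i := by exact_mod_cast hlt
    have := hle i
    rw [height] at this
    linarith [h.x_pos (i + 1), h.y_pos (i - 1)]
  have hle_three' (i) : (a i : ℝ) ≤ 3 := by exact_mod_cast hle_three i
  have hx : 1 / 4 < x (i + 1) := by
    nlinarith [h.x_mul (i + 1), h.x_pos (i + 1), h.x_lt_one (i + 1 + 1), hle_three' (i + 1)]
  have hy : 1 / 4 < y (i - 1) := by
    nlinarith [h.y_mul (i - 1), h.y_pos (i - 1), h.y_lt_one (i - 1 - 1), hle_three' (i - 1)]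
  by_contra! hlt
  have : (3 : ℝ) ≤ a i := by exact_mod_cast hlt
  have := hle i
  rw [height] at this
  linarith

theorem digit_eq_two_of_one_two (h : TwoSidedCF a x y) (hle : ∀ i, height a x y i ≤ 3.13)
    (hdigit : ∀ i, a i = 1 ∨ a i = 2) {i : ℤ} (hi : a i = 1) (hi' : a (i + 1) = 2) :
    a (i + 2) = 2 := by
  refine (hdigit _).resolve_left fun hone => ?_
  have hx : x (i + 2) * (1 + x (i + 2 + 1)) = 1 := by simpa [hone] using h.x_mul (i + 2)
  have hy : y i * (1 + y (i - 1)) = 1 := by simpa [hi] using h.y_mul i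
  have hheight := hle (i + 1)
  rw [height, show i + 1 + 1 = i + 2 by ring, add_sub_cancel_right, hi', Nat.cast_two] at hheight
  nlinarith [(h.x_mem_Icc hdigit (i + 2 + 1)).2, (h.y_mem_Icc hdigit (i - 1)).2,
    (h.x_mem_Icc hdigit (i + 2)).1, (h.y_mem_Icc hdigit i).1]

theorem admissibleCoords (h : TwoSidedCF a x y) {θ : ℝ} (hθ : θ ≤ 0.0004)
    (hle : ∀ i, height a x y i ≤ 1 + 3 / √2 + √2 * θ) :
    AdmissibleCoords θ a (fun i => coord (x (i + 1))) (fun i => coord (y (i - 1))) := by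
  have hpos : 0 < √2 := by positivity
  have hle' (i) : height a x y i ≤ 3.13 := by
    refine (hle i).trans ?_
    rw [three_div_sqrt_two]
    nlinarith [sqrt_two_lt]
  have hdigit (i) : a i = 1 ∨ a i = 2 := by
    have := h.one_le i
    have := h.digit_le_two hle' i
    omega
  refine
    { toTwoSidedCoords := h.twoSidedCoords hdigit fun i => h.digit_eq_two_of_one_two hle' hdigit
      right_le := fun j hj _ => ?_
      left_le := fun j hj _ => ?_ }
  · have := hle (j + 1)
    rw [h.height_add_one hj] at this
    exact le_of_mul_le_mul_left (by linarith) hpos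
  · have := hle (j - 1)
    rw [h.height_sub_one hj] at this
    exact le_of_mul_le_mul_left (by linarith) hpos

theorem height_lt_three_of_one (h : TwoSidedCF a x y) {i : ℤ} (hi : a i = 1) :
    height a x y i < 3 := by
  rw [height, hi, Nat.cast_one]
  linarith [h.x_lt_one (i + 1), h.y_lt_one (i - 1)]

theorem height_lt_three_of_two (h : TwoSidedCF a x y) {i : ℤ} (hi : a i = 2)
    (hprev : a (i - 1) = 2) (hnext : a (i + 1) = 2) : height a x y i < 3 := by
  have hx := h.x_mul (i + 1)
  have hy := h.y_mul (i - 1)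
  rw [hnext, Nat.cast_two] at hx
  rw [hprev, Nat.cast_two] at hy
  rw [height, hi, Nat.cast_two]
  nlinarith [h.x_pos (i + 1), h.x_pos (i + 1 + 1), h.y_pos (i - 1), h.y_pos (i - 1 - 1)]

end TwoSidedCF

/-! ### The scale of the long blocks -/

theorem le_oneMap_of_le_small {s : ℝ} (hs : -0.02 ≤ s) (hs' : s ≤ 0.0000001) :
    0.0938358 ≤ oneMap s := by
  refine le_trans ?_ (oneMap_le_oneMap hs hs')
  obtain ⟨c, _, hc, heq⟩ := exists_oneMap_sub_eq_coarse (s := 0.0000001) (t := 0)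
    (by norm_num) (by norm_num)
  linarith [oneMap_zero_mem_Icc.1]

theorem oneMap_le_of_ge_small {s : ℝ} (hs : -0.0000001 ≤ s) : oneMap s ≤ 0.0938372 := by
  refine (oneMap_le_oneMap (by norm_num) hs).trans ?_
  obtain ⟨c, _, hc, heq⟩ := exists_oneMap_sub_eq_coarse (s := -0.0000001) (t := 0)
    (by norm_num) (by norm_num)
  linarith [oneMap_zero_mem_Icc.2]

theorem rho_sq_mem_Ioo : rho ^ 2 ∈ Set.Ioo 0.0294372 0.0294373 := by
  rw [rho_sq]
  constructor <;> linarith [lt_rho, rho_lt]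

theorem rho_cube_mem_Ioo : rho ^ 3 ∈ Set.Ioo 0.0050506 0.0050507 := by
  obtain ⟨hlower, hupper⟩ := rho_sq_mem_Ioo
  rw [pow_succ]
  constructor <;> nlinarith [lt_rho, rho_lt]

/-- The scale `e = rho ^ (2 * k + 1)` of the long blocks of digits `2`, which have length
`A = 2 * k + 1`, `B = 2 * k + 2` or `C = 2 * k + 3`. -/
structure Scale (k : ℕ) (e : ℝ) : Prop where
  one_le : 1 ≤ k
  rho_pow : rho ^ (2 * k + 1) = e
  le_small : e ≤ 0.0000001

/-- A deviation `θ` comparable to the scale `e`, in the range of the deviations at a digit `1`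
between blocks of lengths `C` and `A`. -/
structure ScaledDeviation (k : ℕ) (e θ : ℝ) : Prop extends Scale k e where
  mul_le : 1.0965 * e ≤ θ
  le_mul : θ ≤ 1.0967 * e

namespace Scale

variable {k : ℕ} {e : ℝ}

theorem pos (hk : Scale k e) : 0 < e := hk.rho_pow ▸ pow_pos rho_pos _

theorem pow_A (hk : Scale k e) : (-rho) ^ (2 * k + 1) = -e := by
  rw [← hk.rho_pow, Odd.neg_pow ⟨k, rfl⟩]

theorem pow_B (hk : Scale k e) : (-rho) ^ (2 * k + 2) = e * rho := by
  rw [pow_succ, hk.pow_A]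
  ring

theorem pow_C (hk : Scale k e) : (-rho) ^ (2 * k + 3) = -(e * rho ^ 2) := by
  rw [pow_succ, hk.pow_B]
  ring

theorem pow_two_mul (hk : Scale k e) : (-rho) ^ (2 * k) = e / rho := by
  rw [eq_div_iff rho_pos.ne', ← hk.rho_pow, pow_succ, Even.neg_pow ⟨k, two_mul k⟩]

theorem pow_two_mul_sub_two (hk : Scale k e) : (-rho) ^ (2 * k - 2) = e / rho ^ 3 := by
  have := hk.one_le
  rw [eq_div_iff (pow_pos rho_pos 3).ne', ← hk.rho_pow, Even.neg_pow ⟨k - 1, by omega⟩, ← pow_add]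
  congr 1
  omega

theorem mul_rho_mem_Ioo (hk : Scale k e) :
    e * rho ∈ Set.Ioo (0.171572874 * e) (0.171572876 * e) := by
  constructor <;> nlinarith [hk.pos, lt_rho, rho_lt]

theorem mul_rho_sq_mem_Ioo (hk : Scale k e) :
    e * rho ^ 2 ∈ Set.Ioo (0.0294372 * e) (0.0294373 * e) := by
  constructor <;> nlinarith [hk.pos, rho_sq_mem_Ioo.1, rho_sq_mem_Ioo.2]

theorem div_rho_mem_Ioo (hk : Scale k e) : e / rho ∈ Set.Ioo (5.8284 * e) (5.82843 * e) := by
  have := hk.pos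
  refine ⟨(lt_div_iff₀ rho_pos).2 ?_, (div_lt_iff₀ rho_pos).2 ?_⟩ <;> nlinarith [lt_rho, rho_lt]

theorem div_rho_cube_mem_Ioo (hk : Scale k e) :
    e / rho ^ 3 ∈ Set.Ioo (197.9 * e) (198 * e) := by
  have := hk.pos
  have hpos := pow_pos rho_pos 3
  refine ⟨(lt_div_iff₀ hpos).2 ?_, (div_lt_iff₀ hpos).2 ?_⟩ <;>
    nlinarith [rho_cube_mem_Ioo.1, rho_cube_mem_Ioo.2]

end Scale

theorem ScaledDeviation.nonneg {k : ℕ} {e θ : ℝ} (h : ScaledDeviation k e θ) : 0 ≤ θ :=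
  (mul_nonneg (by norm_num) h.pos.le).trans h.mul_le

namespace HasGaps

variable {k : ℕ} {e t : ℝ}

theorem le_of_lt_mul (ht : HasGaps t) {m : ℕ} {s : ℝ} (hs : (-rho) ^ m = s) (hpos : 0 < s)
    (hlt : t < 1.8 * s) : t ≤ 0.0942 * s := by
  have := ht hs (by nlinarith)
  exact le_of_mul_le_mul_left (by linarith) hpos

theorem ge_of_gt_mul (ht : HasGaps t) {m : ℕ} {s : ℝ} (hs : (-rho) ^ m = -s) (hpos : 0 < s)
    (hlt : -1.8 * s < t) : -0.0942 * s ≤ t := by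
  have := ht hs (by nlinarith)
  exact le_of_mul_le_mul_left (by linarith) hpos

theorem ge_A (ht : HasGaps t) (hk : Scale k e) (hlt : -1.8 * e < t) : -0.0942 * e ≤ t :=
  ht.ge_of_gt_mul hk.pow_A hk.pos hlt

theorem ge_C (ht : HasGaps t) (hk : Scale k e) (hlt : -0.0529 * e < t) :
    -0.0027731 * e ≤ t := by
  obtain ⟨hlower, hupper⟩ := hk.mul_rho_sq_mem_Ioo
  have := hk.pos
  have := ht.ge_of_gt_mul hk.pow_C (by linarith) (by linarith)
  linarith

theorem le_B (ht : HasGaps t) (hk : Scale k e) (hlt : t < 0.3088 * e) : t ≤ 0.016163 * e := by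
  obtain ⟨hlower, hupper⟩ := hk.mul_rho_mem_Ioo
  have := hk.pos
  have := ht.le_of_lt_mul hk.pow_B (by linarith) (by linarith)
  linarith

theorem le_two_mul (ht : HasGaps t) (hk : Scale k e) (hlt : t < 10.49 * e) :
    t ≤ 0.54905 * e := by
  obtain ⟨hlower, hupper⟩ := hk.div_rho_mem_Ioo
  have := hk.pos
  have := ht.le_of_lt_mul hk.pow_two_mul (by linarith) (by linarith)
  linarith

theorem le_two_mul_sub_two (ht : HasGaps t) (hk : Scale k e) (hlt : t < 350 * e) :
    t ≤ 18.66 * e := by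
  obtain ⟨hlower, hupper⟩ := hk.div_rho_cube_mem_Ioo
  have := hk.pos
  have := ht.le_of_lt_mul hk.pow_two_mul_sub_two (by linarith) (by linarith)
  linarith

end HasGaps

section steps

variable {k : ℕ} {e : ℝ} {a : ℤ → ℕ} {f g : ℤ → ℝ} {j j' : ℤ}

namespace TwoSidedCoords

theorem rightStep_A (h : TwoSidedCoords a f g) (hk : Scale k e) (hj : a j = 1)
    (hj' : j' = j + (2 * k + 2)) (hlower : -1.8 * e < f j) (hupper : f j < -0.0729 * e) :
    RightStep a f g (-e) j j' := by
  have := hk.pos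
  exact h.rightStep hk.pow_A (by omega) hj (by push_cast; omega) (by nlinarith) (by nlinarith)

theorem rightStep_B (h : TwoSidedCoords a f g) (hk : Scale k e) (hj : a j = 1)
    (hj' : j' = j + (2 * k + 3)) (hlower : 0.0126 * e < f j) (hupper : f j < 0.3088 * e) :
    RightStep a f g (e * rho) j j' := by
  have := hk.pos
  obtain ⟨hl, hu⟩ := hk.mul_rho_mem_Ioo
  exact h.rightStep hk.pow_B (by omega) hj (by push_cast; omega) (by nlinarith) (by nlinarith)

theorem rightStep_C (h : TwoSidedCoords a f g) (hk : Scale k e) (hj : a j = 1)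
    (hj' : j' = j + (2 * k + 4)) (hlower : -0.0529 * e < f j) (hupper : f j < -0.0022 * e) :
    RightStep a f g (-(e * rho ^ 2)) j j' := by
  have := hk.pos
  obtain ⟨hl, hu⟩ := hk.mul_rho_sq_mem_Ioo
  exact h.rightStep hk.pow_C (by omega) hj (by push_cast; omega) (by nlinarith) (by nlinarith)

theorem leftStep_A (h : TwoSidedCoords a f g) (hk : Scale k e) (hj : a j = 1)
    (hj' : j' = j - (2 * k + 2)) (hlower : -1.8 * e < g j) (hupper : g j < -0.0729 * e) :
    LeftStep a f g (-e) j j' :=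
  (h.reverse.rightStep_A hk (by simpa using hj) (by omega) (by simpa using hlower)
    (by simpa using hupper)).of_reverse

theorem leftStep_B (h : TwoSidedCoords a f g) (hk : Scale k e) (hj : a j = 1)
    (hj' : j' = j - (2 * k + 3)) (hlower : 0.0126 * e < g j) (hupper : g j < 0.3088 * e) :
    LeftStep a f g (e * rho) j j' :=
  (h.reverse.rightStep_B hk (by simpa using hj) (by omega) (by simpa using hlower)
    (by simpa using hupper)).of_reverse

theorem leftStep_C (h : TwoSidedCoords a f g) (hk : Scale k e) (hj : a j = 1)
    (hj' : j' = j - (2 * k + 4)) (hlower : -0.0529 * e < g j) (hupper : g j < -0.0022 * e) :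
    LeftStep a f g (-(e * rho ^ 2)) j j' :=
  (h.reverse.rightStep_C hk (by simpa using hj) (by omega) (by simpa using hlower)
    (by simpa using hupper)).of_reverse

end TwoSidedCoords

end steps

section deviation

variable {e θ u v : ℝ}

theorem neg_two_mul_div_le_iff {M : ℝ} (hu : -0.0183 ≤ u) :
    -2 * u / (rho + u) ≤ M ↔ -2 * u ≤ M * (rho + u) :=
  div_le_iff₀ (by linarith [lt_rho])

theorem div_one_add_le_self (hv : -0.0183 ≤ v) : v / (1 + v) ≤ v := by
  rw [div_le_iff₀ (by linarith)]
  nlinarith [sq_nonneg v]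

theorem ge_of_deviation_le (he : 0 < e) (hθ : θ ≤ 1.0967 * e) (hv : v ≤ 0.02 * e)
    (hv' : -0.0183 ≤ v) (hu : -0.0183 ≤ u) (hdev : deviation u v ≤ θ) : -0.0958 * e ≤ u := by
  have hle : -2 * u / (rho + u) ≤ 1.1167 * e := by
    have := div_one_add_le_self hv'
    rw [deviation] at hdev
    linarith
  rw [neg_two_mul_div_le_iff hu] at hle
  by_contra! hlt
  have hneg : u < 0 := by nlinarith
  nlinarith [rho_lt, mul_pos he (neg_pos.2 hneg)]

theorem ge_of_deviation_neg_mul_oneMap_le {s : ℝ} (he : 0 < e) (he' : e ≤ 0.0000001)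
    (hθ : θ ≤ 1.0967 * e) (hs : s ≤ 0.02 * e) (hs' : -0.0183 ≤ s) (hv : -0.0183 ≤ v)
    (hdev : deviation (-e * oneMap s) v ≤ θ) : -0.003 * e ≤ v := by
  have hlower := le_oneMap_of_le_small (s := s) (by linarith) (by linarith)
  have hupper : oneMap s ≤ 0.2 :=
    (oneMap_mem_Icc_of_tail ⟨hs', by linarith⟩).2.trans (by norm_num)
  have hmain : 1.0937 * e ≤ -2 * (-e * oneMap s) / (rho + -e * oneMap s) := by
    rw [le_div_iff₀ (by nlinarith [lt_rho])]
    have : 0 ≤ e * oneMap s := by positivity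
    nlinarith [rho_lt]
  have := div_one_add_le_self hv
  rw [deviation] at hdev
  linarith

end deviation

namespace AdmissibleCoords

variable {k : ℕ} {e θ : ℝ} {a : ℤ → ℕ} {f g : ℤ → ℝ} {j : ℤ}

theorem f_ge_of_g_le (h : AdmissibleCoords θ a f g) (hk : ScaledDeviation k e θ) (hj : a j = 1)
    (hj' : a (j + 1) = 2) (hg : g j ≤ 0.02 * e) : -0.0942 * e ≤ f j := by
  have := ge_of_deviation_le hk.pos hk.le_mul hg (h.g_mem_Icc _).1 (h.f_mem_Icc _).1
    (h.right_le j hj hj')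
  exact (h.f_hasGaps j).ge_A hk.toScale (by linarith [hk.pos])

theorem g_ge_of_f_le (h : AdmissibleCoords θ a f g) (hk : ScaledDeviation k e θ) (hj : a j = 1)
    (hj' : a (j - 1) = 2) (hf : f j ≤ 0.02 * e) : -0.0942 * e ≤ g j := by
  simpa using h.reverse.f_ge_of_g_le hk (j := -j) (by simpa using hj)
    (by simpa [neg_add_eq_sub] using hj') (by simpa using hf)

theorem f_ge_of_g_eq (h : AdmissibleCoords θ a f g) (hk : ScaledDeviation k e θ) {s : ℝ}
    (hj : a j = 1) (hj' : a (j - 1) = 2) (hg : g j = -e * oneMap s) (hs : s ≤ 0.02 * e)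
    (hs' : -0.0183 ≤ s) : -0.00278 * e ≤ f j := by
  have := ge_of_deviation_neg_mul_oneMap_le hk.pos hk.le_small hk.le_mul hs hs' (h.f_mem_Icc _).1
    (hg ▸ h.left_le j hj hj')
  have := (h.f_hasGaps j).ge_C hk.toScale (by linarith [hk.pos])
  linarith [hk.pos]

theorem g_ge_of_f_eq (h : AdmissibleCoords θ a f g) (hk : ScaledDeviation k e θ) {s : ℝ}
    (hj : a j = 1) (hj' : a (j + 1) = 2) (hf : f j = -e * oneMap s) (hs : s ≤ 0.02 * e)
    (hs' : -0.0183 ≤ s) : -0.00278 * e ≤ g j := by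
  simpa using h.reverse.f_ge_of_g_eq hk (j := -j) (by simpa using hj)
    (by simpa [add_comm] using hj') (by simpa using hf) hs hs'

end AdmissibleCoords

/-! ### Comparison with the reference tails -/

theorem deviation_sub {u v u' v' : ℝ} (hu : rho + u ≠ 0) (hu' : rho + u' ≠ 0) (hv : 1 + v ≠ 0)
    (hv' : 1 + v' ≠ 0) : deviation u v - deviation u' v' =
      -(2 * rho * (u - u') / ((rho + u) * (rho + u'))) - (v - v') / ((1 + v) * (1 + v')) := by
  unfold deviation
  rw [sub_sub_sub_comm, div_sub_div _ _ hu hu', div_sub_div _ _ hv hv', ← neg_div]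
  congr 2 <;> ring

theorem slope_ratio_mem_Icc {q c d x x' y y' : ℝ} (hq : 0.1715 < q) (hq' : q < 0.1716)
    (hc : c ∈ Set.Icc 0.409 0.411) (hd : d ∈ Set.Icc 0.409 0.411)
    (hx : x ∈ Set.Icc (-0.00000001) 0) (hx' : x' ∈ Set.Icc (-0.00000001) 0)
    (hy : y ∈ Set.Icc (-0.00000001) 0) (hy' : y' ∈ Set.Icc (-0.00000001) 0) :
    d * ((q + x) * (q + x')) / (c * q ^ 2 * ((1 + y) * (1 + y'))) ∈ Set.Icc 0.99 1.01 := by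
  obtain ⟨hc, hc'⟩ := hc
  obtain ⟨hd, hd'⟩ := hd
  have near {b s t : ℝ} (hb : 0.1 < b) (hs : s ∈ Set.Icc (-0.00000001) 0)
      (ht : t ∈ Set.Icc (-0.00000001) 0) :
      (b + s) * (b + t) ∈ Set.Icc ((b - 0.00000001) * (b - 0.00000001)) (b * b) :=
    ⟨mul_le_mul (by linarith [hs.1]) (by linarith [ht.1]) (by linarith) (by linarith [hs.1]),
      mul_le_mul (by linarith [hs.2]) (by linarith [ht.2]) (by linarith [ht.1]) (by linarith)⟩
  obtain ⟨hnum, hnum'⟩ := near (b := q) (by linarith) hx hx'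
  obtain ⟨hden, hden'⟩ := near (b := 1) (by norm_num) hy hy'
  have : 0 < (1 + y) * (1 + y') := lt_of_lt_of_le (by norm_num) hden
  have : 0 < c := by linarith
  constructor
  · rw [le_div_iff₀ (by positivity)]
    have : c * q ^ 2 * ((1 + y) * (1 + y')) ≤ 0.411 * q ^ 2 * (1 * 1) := by gcongr
    have : 0.409 * ((q - 0.00000001) * (q - 0.00000001)) ≤ d * ((q + x) * (q + x')) :=
      mul_le_mul hd hnum (by nlinarith) (by linarith)
    nlinarith
  · rw [div_le_iff₀ (by positivity)]
    have : 0.409 * q ^ 2 * ((1 - 0.00000001) * (1 - 0.00000001)) ≤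
        c * q ^ 2 * ((1 + y) * (1 + y')) := by gcongr
    have : d * ((q + x) * (q + x')) ≤ 0.411 * (q * q) :=
      mul_le_mul hd' hnum' (by nlinarith) (by norm_num)
    nlinarith

/-- The heights at two junctions with a block of length `A` to the right and one of length `C` to
the left are compared by the coordinates beyond these blocks. -/
theorem exists_deviation_sub_eq {e u v u' v' : ℝ} (he : 0 < e) (he' : e ≤ 0.0000001)
    (hu : u ∈ Set.Icc (-0.0006) 0.0031) (hv : v ∈ Set.Icc (-0.0006) 0.0031)
    (hu' : u' ∈ Set.Icc (-0.0006) 0.0031) (hv' : v' ∈ Set.Icc (-0.0006) 0.0031) :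
    ∃ κ ρ : ℝ, 0 < κ ∧ 0.99 ≤ ρ ∧ ρ ≤ 1.01 ∧
      deviation (-e * oneMap u) (-(e * rho ^ 2) * oneMap v) -
        deviation (-e * oneMap u') (-(e * rho ^ 2) * oneMap v') =
        -κ * (2 * (u - u') + ρ * rho ^ 3 * (v - v')) := by
  obtain ⟨c, hc, hc', hsub⟩ := exists_oneMap_sub_eq_fine hu hu'
  obtain ⟨d, hd, hd', hsub'⟩ := exists_oneMap_sub_eq_fine hv hv'
  have hlt := lt_rho
  have hlt' := rho_lt
  have := rho_pos
  have small {σ t : ℝ} (hσ : 0 ≤ σ) (hσ' : σ ≤ e) (ht : t ∈ Set.Icc (-0.0006) 0.0031) :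
      -σ * oneMap t ∈ Set.Icc (-0.00000001) 0 := by
    obtain ⟨hl, hr⟩ := oneMap_mem_Icc_of_two_two ht
    constructor <;> nlinarith
  have heC : e * rho ^ 2 ≤ e := mul_le_of_le_one_right he.le (by linarith [rho_sq_mem_Ioo.2])
  have hx := small he.le le_rfl hu
  have hx' := small he.le le_rfl hu'
  have hy := small (by positivity) heC hv
  have hy' := small (by positivity) heC hv'
  have hX : -e * oneMap u - -e * oneMap u' = e * c * (u - u') := by linear_combination (-e) * hsub
  have hY : -(e * rho ^ 2) * oneMap v - -(e * rho ^ 2) * oneMap v' =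
      e * rho ^ 2 * d * (v - v') := by linear_combination (-(e * rho ^ 2)) * hsub'
  generalize -e * oneMap u = x at *
  generalize -e * oneMap u' = x' at *
  generalize -(e * rho ^ 2) * oneMap v = y at *
  generalize -(e * rho ^ 2) * oneMap v' = y' at *
  have hxpos : 0 < rho + x := by linarith [hx.1]
  have hxpos' : 0 < rho + x' := by linarith [hx'.1]
  have hypos : 0 < 1 + y := by linarith [hy.1]
  have hypos' : 0 < 1 + y' := by linarith [hy'.1]
  have : 0 < c := by linarith
  obtain ⟨hρ, hρ'⟩ := slope_ratio_mem_Icc (q := rho) (by linarith) (by linarith) ⟨hc, hc'⟩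
    ⟨hd, hd'⟩ hx hx' hy hy'
  refine ⟨rho * e * c / ((rho + x) * (rho + x')), _, by positivity, hρ, hρ', ?_⟩
  rw [deviation_sub hxpos.ne' hxpos'.ne' hypos.ne' hypos'.ne', hX, hY]
  clear hρ hρ' hx hx' hy hy' hX hY
  field_simp
  ring

/-- The linear relation `2 * u = -(ρ * c * v)` for some factor `ρ` between `l` and `m`. It ties
the difference `u` of the right tails of two configurations to the difference `v` of their left
tails. -/
def Tied (l m c u v : ℝ) : Prop := ∃ ρ, l ≤ ρ ∧ ρ ≤ m ∧ 2 * u = -(ρ * c * v)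

namespace Tied

variable {l m c u v : ℝ}

theorem mono (h : Tied l m c u v) {l' m' : ℝ} (hl : l' ≤ l) (hm : m ≤ m') :
    Tied l' m' c u v := by
  obtain ⟨ρ, hρ, hρ', heq⟩ := h
  exact ⟨ρ, hl.trans hρ, hρ'.trans hm, heq⟩

theorem of_mul_oneMap {σ τ c' x x' y y' : ℝ}
    (h : Tied l m c (σ * oneMap x - σ * oneMap x') (τ * oneMap y - τ * oneMap y'))
    (hσ : σ ≠ 0) (hc : c * τ = c' * σ) (hl : 0 ≤ l) (hx : x ∈ Set.Icc (-0.0006) 0.0031)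
    (hx' : x' ∈ Set.Icc (-0.0006) 0.0031) (hy : y ∈ Set.Icc (-0.0006) 0.0031)
    (hy' : y' ∈ Set.Icc (-0.0006) 0.0031) :
    Tied (0.995 * l) (1.005 * m) c' (x - x') (y - y') := by
  obtain ⟨ρ, hρ, hρ', heq⟩ := h
  obtain ⟨p, hp, hp', hsub⟩ := exists_oneMap_sub_eq_fine hx hx'
  obtain ⟨q, hq, hq', hsub'⟩ := exists_oneMap_sub_eq_fine hy hy'
  have hp0 : 0 < p := by linarith
  refine ⟨ρ * (q / p), ?_, ?_, ?_⟩
  · have : 0.995 ≤ q / p := by rw [le_div_iff₀ hp0]; linarith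
    nlinarith
  · have : q / p ≤ 1.005 := by rw [div_le_iff₀ hp0]; linarith
    nlinarith
  · have hmul : p * (2 * (x - x')) = -(ρ * q * c' * (y - y')) := by
      refine mul_left_cancel₀ hσ ?_
      linear_combination
        -heq + 2 * σ * hsub + ρ * c * τ * hsub' - ρ * q * (y - y') * hc
    field_simp
    linear_combination hmul

end Tied

/-- Successive coordinates along blocks of lengths `B`, `C`, `A`, `B` to the right. -/
structure RightChain (e u₁ u₂ u₃ u₄ u₅ : ℝ) : Prop where
  eq₁ : u₁ = e * rho * oneMap u₂
  eq₂ : u₂ = -(e * rho ^ 2) * oneMap u₃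
  eq₃ : u₃ = -e * oneMap u₄
  eq₄ : u₄ = e * rho * oneMap u₅
  mem₁ : u₁ ∈ Set.Icc (-0.0006) 0.0031
  mem₂ : u₂ ∈ Set.Icc (-0.0006) 0.0031
  mem₃ : u₃ ∈ Set.Icc (-0.0006) 0.0031
  mem₄ : u₄ ∈ Set.Icc (-0.0006) 0.0031
  mem₅ : u₅ ∈ Set.Icc (-0.0006) 0.0031

/-- Successive coordinates along blocks of lengths `B`, `A`, `C` to the left. -/
structure LeftChain (e v₁ v₂ v₃ v₄ : ℝ) : Prop where
  eq₁ : v₁ = e * rho * oneMap v₂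
  eq₂ : v₂ = -e * oneMap v₃
  eq₃ : v₃ = -(e * rho ^ 2) * oneMap v₄
  mem₁ : v₁ ∈ Set.Icc (-0.0006) 0.0031
  mem₂ : v₂ ∈ Set.Icc (-0.0006) 0.0031
  mem₃ : v₃ ∈ Set.Icc (-0.0006) 0.0031
  mem₄ : v₄ ∈ Set.Icc (-0.0006) 0.0031

/-- The coordinates of the tails of a reference configuration: beyond a junction where the
deviation is `θ`, with a block of length `A` to its right and one of length `C` to its left, they
run through blocks of lengths `B`, `C`, `A`, `B` to the right and `B`, `A`, `C`, `B` to the left.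
The bounds on `u 5` and `v 5` say that the right tail then breaks the periodic pattern. -/
structure ReferenceTails (k : ℕ) (e θ : ℝ) (u v : ℕ → ℝ) : Prop extends
    ScaledDeviation k e θ where
  deviation_eq : deviation (-e * oneMap (u 1)) (-(e * rho ^ 2) * oneMap (v 1)) = θ
  right : RightChain e (u 1) (u 2) (u 3) (u 4) (u 5)
  left : LeftChain e (v 1) (v 2) (v 3) (v 4)
  v_four : v 4 = e * rho * oneMap (v 5)
  u_five : u 5 ∈ Set.Icc (-0.0000001) (-0.09 * e)
  v_five : v 5 ∈ Set.Icc (-0.0000001) 0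

theorem oneMap_mem_Icc_of_small {s : ℝ} (hs : -0.0000001 ≤ s) (hs' : s ≤ 0.0000001) :
    oneMap s ∈ Set.Icc 0.0938358 0.0938372 :=
  ⟨le_oneMap_of_le_small (by linarith) hs', oneMap_le_of_ge_small hs⟩

namespace Scale

variable {k : ℕ} {e s : ℝ}

theorem blockA_mem_Icc (hk : Scale k e) (hs : -0.0000001 ≤ s) (hs' : s ≤ 0.0000001) :
    -e * oneMap s ∈ Set.Icc (-0.0938372 * e) (-0.0938358 * e) := by
  obtain ⟨hl, hu⟩ := oneMap_mem_Icc_of_small hs hs'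
  have := hk.pos
  constructor <;> nlinarith

theorem blockB_mem_Icc (hk : Scale k e) (hs : -0.0000001 ≤ s) (hs' : s ≤ 0.0000001) :
    e * rho * oneMap s ∈ Set.Icc (0.016099 * e) (0.016101 * e) := by
  obtain ⟨hl, hu⟩ := oneMap_mem_Icc_of_small hs hs'
  obtain ⟨hB, hB'⟩ := hk.mul_rho_mem_Ioo
  have := hk.pos
  constructor <;> nlinarith

theorem blockC_mem_Icc (hk : Scale k e) (hs : -0.0000001 ≤ s) (hs' : s ≤ 0.0000001) :
    -(e * rho ^ 2) * oneMap s ∈ Set.Icc (-0.0027624 * e) (-0.0027622 * e) := by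
  obtain ⟨hl, hu⟩ := oneMap_mem_Icc_of_small hs hs'
  obtain ⟨hC, hC'⟩ := hk.mul_rho_sq_mem_Ioo
  have := hk.pos
  constructor <;> nlinarith

end Scale

namespace ReferenceTails

variable {k : ℕ} {e θ : ℝ} {u v : ℕ → ℝ}

theorem u_four (h : ReferenceTails k e θ u v) : u 4 ∈ Set.Icc (0.016099 * e) (0.016101 * e) :=
  h.right.eq₄ ▸ h.blockB_mem_Icc h.u_five.1 (by linarith [h.u_five.2, h.pos])

theorem v_four_mem_Icc (h : ReferenceTails k e θ u v) :
    v 4 ∈ Set.Icc (0.016099 * e) (0.016101 * e) :=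
  h.v_four ▸ h.blockB_mem_Icc h.v_five.1 (by linarith [h.v_five.2])

theorem u_three (h : ReferenceTails k e θ u v) :
    u 3 ∈ Set.Icc (-0.0938372 * e) (-0.0938358 * e) := by
  obtain ⟨hl, hu⟩ := h.u_four
  have := h.pos
  have := h.le_small
  exact h.right.eq₃ ▸ h.blockA_mem_Icc (by linarith) (by linarith)

theorem v_three (h : ReferenceTails k e θ u v) :
    v 3 ∈ Set.Icc (-0.0027624 * e) (-0.0027622 * e) := by
  obtain ⟨hl, hu⟩ := h.v_four_mem_Icc
  have := h.pos
  have := h.le_small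
  exact h.left.eq₃ ▸ h.blockC_mem_Icc (by linarith) (by linarith)

theorem u_two (h : ReferenceTails k e θ u v) :
    u 2 ∈ Set.Icc (-0.0027624 * e) (-0.0027622 * e) := by
  obtain ⟨hl, hu⟩ := h.u_three
  have := h.pos
  have := h.le_small
  exact h.right.eq₂ ▸ h.blockC_mem_Icc (by linarith) (by linarith)

theorem v_two (h : ReferenceTails k e θ u v) :
    v 2 ∈ Set.Icc (-0.0938372 * e) (-0.0938358 * e) := by
  obtain ⟨hl, hu⟩ := h.v_three
  have := h.pos
  have := h.le_small
  exact h.left.eq₂ ▸ h.blockA_mem_Icc (by linarith) (by linarith)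

theorem u_one (h : ReferenceTails k e θ u v) : u 1 ∈ Set.Icc (0.016099 * e) (0.016101 * e) := by
  obtain ⟨hl, hu⟩ := h.u_two
  have := h.pos
  have := h.le_small
  exact h.right.eq₁ ▸ h.blockB_mem_Icc (by linarith) (by linarith)

theorem v_one (h : ReferenceTails k e θ u v) : v 1 ∈ Set.Icc (0.016099 * e) (0.016101 * e) := by
  obtain ⟨hl, hu⟩ := h.v_two
  have := h.pos
  have := h.le_small
  exact h.left.eq₁ ▸ h.blockB_mem_Icc (by linarith) (by linarith)

theorem tied_of_deviation_eq (h : ReferenceTails k e θ u v) {s t : ℝ}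
    (hs : s ∈ Set.Icc (-0.0006) 0.0031) (ht : t ∈ Set.Icc (-0.0006) 0.0031)
    (hdev : deviation (-e * oneMap s) (-(e * rho ^ 2) * oneMap t) = θ) :
    Tied 0.99 1.01 (rho ^ 3) (s - u 1) (t - v 1) := by
  obtain ⟨κ, ρ, hκ, hρ, hρ', heq⟩ :=
    exists_deviation_sub_eq h.pos h.le_small hs ht h.right.mem₁ h.left.mem₁
  rw [hdev, h.deviation_eq, sub_self, zero_eq_mul] at heq
  have := heq.resolve_left (neg_ne_zero.2 hκ.ne')
  exact ⟨ρ, hρ, hρ', by linarith⟩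

theorem exists_of_deviation_le (h : ReferenceTails k e θ u v) {s t : ℝ}
    (hs : s ∈ Set.Icc (-0.0006) 0.0031) (ht : t ∈ Set.Icc (-0.0006) 0.0031)
    (hdev : deviation (-e * oneMap s) (-(e * rho ^ 2) * oneMap t) ≤ θ) :
    ∃ ρ : ℝ, 0.99 ≤ ρ ∧ 0 ≤ 2 * (s - u 1) + ρ * rho ^ 3 * (t - v 1) := by
  obtain ⟨κ, ρ, hκ, hρ, -, heq⟩ :=
    exists_deviation_sub_eq h.pos h.le_small hs ht h.right.mem₁ h.left.mem₁
  rw [h.deviation_eq] at heq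
  exact ⟨ρ, hρ, nonneg_of_mul_nonneg_right (by linarith) hκ⟩

end ReferenceTails

/-! ### The critical junction -/

section bounds

variable {k : ℕ} {e θ u v : ℝ}

theorem neg_of_deviation_eq (he : 0 < e) (hθ : 1.0965 * e ≤ θ) (hu : u ≤ 0.0942)
    (hv : -0.0183 ≤ v) (hdev : deviation u v = θ) (hdev' : v < 0 → deviation v u ≤ θ) :
    u < 0 := by
  by_contra! hu0
  have hlt := lt_rho
  have hlt' := rho_lt
  unfold deviation at hdev hdev'
  have hlarge : 7 * u ≤ 2 * u / (rho + u) := by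
    rw [le_div_iff₀ (by linarith)]
    nlinarith
  have hsum : θ + 7 * u ≤ -v / (1 + v) := by
    rw [neg_mul, neg_div] at hdev
    rw [neg_div]
    linarith
  rw [le_div_iff₀ (by linarith)] at hsum
  have : 0 < θ := by linarith
  have hv0 : v < 0 := by nlinarith
  have hlarge' : 11 * -v ≤ -2 * v / (rho + v) := by
    rw [le_div_iff₀ (by linarith)]
    nlinarith
  have := div_one_add_le_self (v := u) (by linarith)
  nlinarith [hdev' hv0]

theorem mem_Icc_of_deviation_eq_of_neg (hk : ScaledDeviation k e θ) (hu : -0.0183 ≤ u)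
    (hv : -0.0942 * e ≤ v) (hv' : v < 0) (hdev : deviation u v = θ) :
    u ∈ Set.Icc (-0.0942 * e) (-0.0859 * e) := by
  have := hk.pos
  obtain ⟨⟨-, -, he'⟩, hθ, hθ'⟩ := hk
  have hlt := lt_rho
  have hlt' := rho_lt
  have hpos : 0 < rho + u := by linarith
  have hle := div_one_add_le_self (v := v) (by linarith)
  have hge : -0.0943 * e ≤ v / (1 + v) := by
    rw [le_div_iff₀ (by linarith)]
    nlinarith
  unfold deviation at hdev
  have hupper : -2 * u / (rho + u) ≤ 1.0967 * e := by linarith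
  have hlower : 1.0022 * e ≤ -2 * u / (rho + u) := by linarith
  rw [div_le_iff₀ hpos] at hupper
  rw [le_div_iff₀ hpos] at hlower
  have : u < 0 := by nlinarith
  constructor <;> nlinarith

theorem le_of_deviation_eq_of_nonneg (hk : ScaledDeviation k e θ) (hu : -0.0942 * e ≤ u)
    (hv : 0 ≤ v) (hdev : deviation u v = θ) : v ≤ 0.002 * e ∧ u ≤ -0.0859 * e := by
  have he := hk.pos
  obtain ⟨⟨-, -, he'⟩, hθ, -⟩ := hk
  have hlt := lt_rho
  have hpos : 0 < rho + u := by linarith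
  have hnonneg : 0 ≤ v / (1 + v) := by positivity
  unfold deviation at hdev
  have hupper : -2 * u / (rho + u) ≤ 1.09815 * e := by
    rw [div_le_iff₀ hpos]
    nlinarith
  have hlower : 1.0965 * e ≤ -2 * u / (rho + u) := by linarith
  rw [le_div_iff₀ hpos] at hlower
  have hle : v / (1 + v) ≤ 0.00165 * e := by linarith
  rw [div_le_iff₀ (by linarith)] at hle
  constructor <;> nlinarith

theorem mem_Ioo_of_deviation_neg_eq {R : ℝ} (hR : 0 < R) (he : e ≤ rho ^ 2 * (rho * R))
    (hθ : θ ≤ 1.0967 * e) (hu : u ∈ Set.Icc (0.0543 * (rho * R)) (0.0942 * (rho * R)))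
    (hu' : u ≤ 0.0183) (hv : 0 ≤ v) (hv' : v ≤ 0.0942) (hθ0 : 0 ≤ θ)
    (hdev : deviation (-u) v = θ) : v ∈ Set.Ioo (0.0942 * R) (1.8 * R) := by
  obtain ⟨hul, huu⟩ := hu
  have hlt := lt_rho
  have hlt' := rho_lt
  have hlt'' := rho_sq_mem_Ioo.2
  have hQ : 0 < rho * R := mul_pos rho_pos hR
  have hpos : 0 < rho + -u := by linarith
  unfold deviation at hdev
  have hle : v / (1 + v) ≤ v := div_one_add_le_self (by linarith)
  have hlower : 0.632 * (rho * R) ≤ -2 * -u / (rho + -u) := by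
    rw [le_div_iff₀ hpos]
    nlinarith
  have hupper : -2 * -u / (rho + -u) ≤ 1.3 * (rho * R) := by
    rw [div_le_iff₀ hpos]
    nlinarith
  have hle' : v / (1 + v) ≤ 1.3 * (rho * R) := by linarith
  rw [div_le_iff₀ (by linarith)] at hle'
  have hvu : v ≤ 1.5 * (rho * R) := by nlinarith
  have hθu : θ ≤ 0.033 * (rho * R) := by nlinarith
  have : 0.599 * (rho * R) ≤ v := by linarith
  constructor <;> nlinarith

theorem mem_Icc_of_deviation_neg_mul_oneMap_eq (hk : ScaledDeviation k e θ) (hu : -0.00278 * e ≤ u)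
    (hu' : u ≤ 0.0031) (hv : -0.0183 ≤ v) (hdev : deviation (-e * oneMap u) v = θ) :
    v ∈ Set.Icc (-0.019 * e) (-0.0025 * e) := by
  have he := hk.pos
  obtain ⟨⟨-, -, he'⟩, hθ, hθ'⟩ := hk
  have hlt := lt_rho
  have hlt' := rho_lt
  have hle := oneMap_le_of_ge_small (s := u) (by linarith)
  have hge := (oneMap_mem_Icc_of_two_two (t := u) ⟨by linarith, hu'⟩).1
  have hlower : 0.0925 * e ≤ e * oneMap u := by nlinarith
  have hupper : e * oneMap u ≤ 0.0938372 * e := by nlinarith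
  rw [neg_mul] at hdev
  generalize e * oneMap u = G at *
  have hpos : 0 < rho + -G := by linarith
  unfold deviation at hdev
  have hfst : -2 * -G / (rho + -G) ≤ 1.0939 * e := by
    rw [div_le_iff₀ hpos]
    nlinarith
  have hfst' : 1.078 * e ≤ -2 * -G / (rho + -G) := by
    rw [le_div_iff₀ hpos]
    nlinarith [mul_lt_mul_of_pos_left hlt' he]
  have hsnd : v / (1 + v) ≤ -0.0026 * e := by linarith
  have hsnd' : -0.01875 * e ≤ v / (1 + v) := by linarith
  rw [div_le_iff₀ (by linarith)] at hsnd
  rw [le_div_iff₀ (by linarith)] at hsnd'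
  constructor <;> nlinarith

end bounds

theorem TailCoords.exists_first_one {d : ℕ → ℕ} {t : ℕ → ℝ} (h : TailCoords d t) {m : ℕ}
    (hm : ¬ ∀ n < m, d n = 2) : ∃ n < m, (∀ i < n, d i = 2) ∧ d n = 1 := by
  classical
  push Not at hm
  refine ⟨Nat.find hm, (Nat.find_spec hm).1, fun i hi => ?_,
    (h.digit _).resolve_right (Nat.find_spec hm).2⟩
  by_contra hne
  exact Nat.find_min hm hi ⟨hi.trans (Nat.find_spec hm).1, hne⟩

section junction

variable {k : ℕ} {e θ : ℝ} {a : ℤ → ℕ} {f g : ℤ → ℝ} {j : ℤ}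

namespace TwoSidedCoords

theorem exists_first_one_of_f_le (h : TwoSidedCoords a f g) (hk : Scale k e)
    (hf : f j ≤ -1.8 * e) : ∃ n < 2 * k + 1, ∃ t, f j = (-rho) ^ n * t ∧ 0.0543 ≤ t ∧
      t ≤ 0.0942 := by
  have ht := h.tail j
  have hnot : ¬ ∀ n < 2 * k + 1, a (j + 1 + n) = 2 := fun htwo => by
    have heq := ht.eq_neg_rho_pow_mul htwo
    rw [hk.pow_A] at heq
    simp only [Nat.cast_zero, add_zero] at heq
    nlinarith [hk.pos, ht.le (2 * k + 1)]
  obtain ⟨n, hn, htwo, hone⟩ := ht.exists_first_one hnot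
  exact ⟨n, hn, _, by simpa using ht.eq_neg_rho_pow_mul htwo, ht.ge_of_one hone, ht.le n⟩

/-- A smaller scale `rho ^ (2 * r + 1)` of the right tail would force the left tail into a gap. -/
theorem lt_f_of_deviation_eq (h : TwoSidedCoords a f g) (hk : ScaledDeviation k e θ) (hg : 0 ≤ g j)
    (hdev : deviation (f j) (g j) = θ) : -1.8 * e < f j := by
  by_contra! hf
  have he := hk.pos
  obtain ⟨n, hn, t, heq, hge, hle⟩ := h.exists_first_one_of_f_le hk.toScale hf
  obtain ⟨r, rfl⟩ : Odd n := by
    by_contra! hpar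
    rw [Nat.not_odd_iff_even] at hpar
    rw [hpar.neg_pow] at heq
    nlinarith [pow_pos rho_pos n]
  have hR : 0 < rho ^ (2 * r) := pow_pos rho_pos _
  rw [Odd.neg_pow ⟨r, rfl⟩, pow_succ'] at heq
  have hQ := mul_pos rho_pos hR
  have heQ : e ≤ rho ^ 2 * (rho * rho ^ (2 * r)) := by
    rw [← hk.rho_pow, ← pow_succ', ← pow_add]
    exact pow_le_pow_of_le_one rho_pos.le rho_lt_one.le (by omega)
  obtain ⟨hlower, hupper⟩ := mem_Ioo_of_deviation_neg_eq (u := -f j) hR heQ hk.le_mul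
    ⟨by nlinarith, by nlinarith⟩ (by linarith [(h.f_mem_Icc j).1]) hg (h.g_le _)
    (by linarith [hk.mul_le]) (by rwa [neg_neg])
  have := (h.g_hasGaps j).le_of_lt_mul (Even.neg_pow ⟨r, two_mul r⟩ _) hR hupper
  linarith

/-- The left tail at `i` is below the scale `B`, since in the next gap it would, by the relation,
leave a right tail too small for the block of length `B` that it starts with. -/
theorem rightStep_of_tied (h : TwoSidedCoords a f g) (hk : Scale k e) {i j' : ℤ} {u v : ℝ}
    (hj : a j = 1) (hj' : j' = j + (2 * k + 3)) (hu : u ∈ Set.Icc (0.016099 * e) (0.016101 * e))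
    (hv : v ∈ Set.Icc (0.016099 * e) (0.016101 * e))
    (htied : Tied 0.96 1.04 (rho ^ 3) (f j - u) (g i - v)) (hf : -0.00278 * e ≤ f j)
    (hg : -0.0942 * e ≤ g i) :
    RightStep a f g (e * rho) j j' ∧ g i ≤ 0.016163 * e := by
  obtain ⟨ρ, hρ, hρ', heq⟩ := htied
  obtain ⟨hu, hu'⟩ := hu
  obtain ⟨hv, hv'⟩ := hv
  have he := hk.pos
  obtain ⟨hcube, hcube'⟩ := rho_cube_mem_Ioo
  have hc : 0.00484 < ρ * rho ^ 3 := by nlinarith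
  have hc' : ρ * rho ^ 3 < 0.00526 := by nlinarith
  generalize ρ * rho ^ 3 = c at *
  have hlt : g i < 10.49 * e := by
    by_contra! hge
    nlinarith
  have hle := (h.g_hasGaps i).le_two_mul hk hlt
  have hr := h.rightStep_B hk hj hj' (by nlinarith) (by nlinarith)
  refine ⟨hr, (h.g_hasGaps i).le_B hk ?_⟩
  by_contra! hge
  have : 0.01587 * e ≤ f j := by
    have := (oneMap_mem_Icc_of_two_two hr.mem_Icc).1
    have : 0.01587 ≤ rho * oneMap (f j') := by nlinarith [lt_rho]
    rw [hr.f_eq]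
    nlinarith
  nlinarith

end TwoSidedCoords

namespace AdmissibleCoords

theorem f_neg_of_deviation_eq (h : AdmissibleCoords θ a f g) (hk : ScaledDeviation k e θ)
    (hj : a j = 1) (hdev : deviation (f j) (g j) = θ) : f j < 0 :=
  neg_of_deviation_eq hk.pos hk.mul_le (h.f_le _) (h.g_mem_Icc _).1 hdev fun hg =>
    h.left_le j hj (h.digit_of_g_neg hg)

theorem rightStep_of_deviation_eq (h : AdmissibleCoords θ a f g) (hk : ScaledDeviation k e θ)
    {j' : ℤ} (hj : a j = 1) (hdev : deviation (f j) (g j) = θ) (hj' : j' = j + (2 * k + 2)) :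
    RightStep a f g (-e) j j' ∧ g j ∈ Set.Icc (-0.0942 * e) (0.002 * e) := by
  have he := hk.pos
  have hf := h.f_neg_of_deviation_eq hk hj hdev
  rcases lt_or_ge (g j) 0 with hg | hg
  · have hlower := h.g_ge_of_f_le hk hj (h.digit_of_g_neg hg) (by linarith)
    obtain ⟨hl, hu⟩ := mem_Icc_of_deviation_eq_of_neg hk (h.f_mem_Icc _).1 hlower hg hdev
    exact ⟨h.rightStep_A hk.toScale hj hj' (by linarith) (by linarith), hlower, by linarith⟩
  · have hlower := (h.f_hasGaps j).ge_A hk.toScale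
      (h.lt_f_of_deviation_eq hk hg hdev)
    obtain ⟨hg', hu⟩ := le_of_deviation_eq_of_nonneg hk hlower hg hdev
    exact ⟨h.rightStep_A hk.toScale hj hj' (by linarith) (by linarith), by linarith, hg'⟩

theorem leftStep_of_deviation_eq (h : AdmissibleCoords θ a f g) (hk : ScaledDeviation k e θ)
    {j' i' : ℤ} (hj : a j = 1) (hdev : deviation (f j) (g j) = θ) (hj' : j' = j + (2 * k + 2))
    (hi' : i' = j - (2 * k + 4)) :
    LeftStep a f g (-(e * rho ^ 2)) j i' ∧ -0.00278 * e ≤ f j' := by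
  have he := hk.pos
  obtain ⟨hr, -, hg⟩ := h.rightStep_of_deviation_eq hk hj hdev hj'
  have hf := h.f_ge_of_g_eq hk hr.block.right hr.two_before hr.g_eq (by linarith)
    (h.g_mem_Icc _).1
  rw [hr.f_eq] at hdev
  obtain ⟨hl, hu⟩ :=
    mem_Icc_of_deviation_neg_mul_oneMap_eq hk hf hr.mem_Icc.2 (h.g_mem_Icc _).1 hdev
  exact ⟨h.leftStep_C hk.toScale hj hi' (by linarith) (by linarith), hf⟩

end AdmissibleCoords

end junction

/-! ### The window around a critical junction -/

theorem oneMap_sub_oneMap_le {s t p : ℝ} (hp : 0 ≤ p) (hs : s ∈ Set.Icc (-0.0006) 0.0031)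
    (ht : t ∈ Set.Icc (-0.0006) 0.0031) (hle : t - s ≤ p) :
    oneMap s - oneMap t ≤ 0.411 * p := by
  obtain ⟨c, hc, hc', hsub⟩ := exists_oneMap_sub_eq_fine hs ht
  nlinarith

theorem Scale.mul_oneMap_le {k : ℕ} {e s t : ℝ} (hk : Scale k e) (hs : s ≤ e * rho)
    (ht : t ∈ Set.Icc (-0.0183) 0.1062) : s * oneMap t ≤ 0.02 * e := by
  have := hk.pos
  obtain ⟨hl, hu⟩ := oneMap_mem_Icc_of_tail ht
  have : s * oneMap t ≤ e * rho * oneMap t := by gcongr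
  nlinarith [hk.mul_rho_mem_Ioo.2]

namespace ReferenceTails

variable {k : ℕ} {e θ u v : ℝ} {U V : ℕ → ℝ}

theorem le_of_tied_first (ht : ReferenceTails k e θ U V) {u' : ℝ}
    (htied : Tied 0.99 1.01 (rho ^ 3) (u - U 1) (v - V 1)) (hu : u = e * rho * oneMap u')
    (hu' : -0.0942 * e ≤ u') (hu'' : u' ≤ 0.0031) : 0.016 * e ≤ v := by
  obtain ⟨ρ, hρ, -, heq⟩ := htied
  have he := ht.pos
  have he' := ht.le_small
  have hB := ht.mul_rho_mem_Ioo.2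
  have hle : u - U 1 ≤ 0.000000001 * e := by
    have := oneMap_sub_oneMap_le (p := 0.0915 * e) (by positivity) ⟨by linarith, hu''⟩
      ht.right.mem₂ (by linarith [ht.u_two.2])
    calc u - U 1 = e * rho * (oneMap u' - oneMap (U 2)) := by rw [hu, ht.right.eq₁]; ring
      _ ≤ e * rho * (0.411 * (0.0915 * e)) := by gcongr; exact (mul_pos he rho_pos).le
      _ ≤ 0.000000001 * e := by
        have : e * rho ≤ 0.00000002 := by linarith
        nlinarith
  have := rho_cube_mem_Ioo.1
  have := ht.v_one.1
  have hc : 0.0049 ≤ ρ * rho ^ 3 := by nlinarith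
  by_contra! hlt
  nlinarith

theorem bounds_of_tied_second (ht : ReferenceTails k e θ U V)
    (htied : Tied 0.98505 1.01505 (rho ^ 3) (u - U 2) (v - V 2)) (hu : -0.0942 * e ≤ u)
    (hv : -0.0942 * e ≤ v) :
    u ≤ -0.00276 * e ∧ (u ≤ -0.0529 * e → v ∈ Set.Icc (19 * e) (38 * e)) ∧
      (-0.0027731 * e ≤ u → v ≤ -0.08 * e) := by
  obtain ⟨ρ, hρ, hρ', heq⟩ := htied
  have he := ht.pos
  obtain ⟨hU, hU'⟩ := ht.u_two
  obtain ⟨hV, hV'⟩ := ht.v_two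
  obtain ⟨hcube, hcube'⟩ := rho_cube_mem_Ioo
  have hc : 0.00497 ≤ ρ * rho ^ 3 := by nlinarith
  have hc' : ρ * rho ^ 3 ≤ 0.00513 := by nlinarith
  generalize ρ * rho ^ 3 = c at *
  refine ⟨by nlinarith, fun hlt => ⟨?_, ?_⟩, fun hge => ?_⟩ <;> by_contra! hlt <;> nlinarith

theorem le_of_tied_third (ht : ReferenceTails k e θ U V)
    (htied : Tied 0.98 1.021 rho (u - U 3) (v - V 3)) (hv : -0.00278 * e ≤ v) :
    u ≤ -0.0938 * e := by
  obtain ⟨ρ, hρ, hρ', heq⟩ := htied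
  have := ht.pos
  have := ht.u_three.2
  have := ht.v_three.2
  have hc : 0.168 ≤ ρ * rho := by nlinarith [lt_rho]
  have hc' : ρ * rho ≤ 0.1752 := by nlinarith [rho_lt]
  nlinarith

theorem le_of_tied_fourth (ht : ReferenceTails k e θ U V) {u' : ℝ}
    (htied : Tied 0.98 1.021 rho (u - U 3) (v - V 3)) (hu : u = -e * oneMap u')
    (hu' : -0.00278 * e ≤ u') (hu'' : u' ≤ 0.0031) : v ≤ -0.00276 * e := by
  obtain ⟨ρ, hρ, -, heq⟩ := htied
  have he := ht.pos
  have he' := ht.le_small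
  have hle : U 3 - u ≤ 0.000000001 * e := by
    have := oneMap_sub_oneMap_le (p := 0.0189 * e) (by positivity) ⟨by linarith, hu''⟩
      ht.right.mem₄ (by linarith [ht.u_four.2])
    rw [hu, ht.right.eq₃]
    nlinarith
  have := ht.v_three.2
  have hc : 0.168 ≤ ρ * rho := by nlinarith [lt_rho]
  by_contra! hlt
  have : 0.168 * (0.0000022 * e) ≤ ρ * rho * (v - V 3) :=
    mul_le_mul hc (by linarith) (by positivity) (by linarith)
  nlinarith

end ReferenceTails

theorem TwoSidedCoords.steps_of_tied_second {k : ℕ} {e θ : ℝ} {a : ℤ → ℕ} {f g : ℤ → ℝ}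
    {U V : ℕ → ℝ} {i i' j j' : ℤ} (h : TwoSidedCoords a f g) (ht : ReferenceTails k e θ U V)
    (hi : a i = 1) (hj : a j = 1) (hi' : i' = i - (2 * k + 2)) (hj' : j' = j + (2 * k + 4))
    (hf : -0.0942 * e ≤ f j) (hg : -0.0942 * e ≤ g i)
    (htied : Tied 0.98505 1.01505 (rho ^ 3) (f j - U 2) (g i - V 2)) :
    RightStep a f g (-(e * rho ^ 2)) j j' ∧ LeftStep a f g (-e) i i' := by
  have := ht.pos
  obtain ⟨hf', hlarge, hsmall⟩ := ht.bounds_of_tied_second htied hf hg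
  have hf'' : -0.0529 * e < f j := by
    by_contra! hle
    obtain ⟨hl, hu⟩ := hlarge hle
    have := (h.g_hasGaps i).le_two_mul_sub_two ht.toScale (by linarith)
    linarith
  have hg' := hsmall ((h.f_hasGaps j).ge_C ht.toScale hf'')
  exact ⟨h.rightStep_C ht.toScale hj hj' hf'' (by linarith),
    h.leftStep_A ht.toScale hi hi' (by linarith) (by linarith)⟩

namespace AdmissibleCoords

variable {k : ℕ} {e θ s : ℝ} {a : ℤ → ℕ} {f g : ℤ → ℝ} {U V : ℕ → ℝ} {i i' j j' : ℤ}

theorem f_ge_of_rightStep (h : AdmissibleCoords θ a f g) (hk : ScaledDeviation k e θ)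
    (hr : RightStep a f g s j j') (hs : s ≤ e * rho) : -0.0942 * e ≤ f j' :=
  h.f_ge_of_g_le hk hr.block.right hr.two_after
    (hr.g_eq ▸ hk.mul_oneMap_le hs (h.g_mem_Icc _))

theorem g_ge_of_leftStep (h : AdmissibleCoords θ a f g) (hk : ScaledDeviation k e θ)
    (hl : LeftStep a f g s j j') (hs : s ≤ e * rho) : -0.0942 * e ≤ g j' :=
  h.g_ge_of_f_le hk hl.block.left hl.two_after
    (hl.f_eq ▸ hk.mul_oneMap_le hs (h.f_mem_Icc _))

theorem steps_of_tied_first (h : AdmissibleCoords θ a f g) (ht : ReferenceTails k e θ U V)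
    (hi : a i = 1) (hj : a j = 1) (hi' : i' = i - (2 * k + 3)) (hj' : j' = j + (2 * k + 3))
    (hf : -0.00278 * e ≤ f j) (hg : -0.0942 * e ≤ g i)
    (htied : Tied 0.99 1.01 (rho ^ 3) (f j - U 1) (g i - V 1)) :
    RightStep a f g (e * rho) j j' ∧ LeftStep a f g (e * rho) i i' := by
  have := ht.pos
  obtain ⟨hr, hg'⟩ := h.rightStep_of_tied ht.toScale hj hj' ht.u_one ht.v_one
    (htied.mono (by norm_num) (by norm_num)) hf hg
  have := ht.le_of_tied_first htied hr.f_eq (h.f_ge_of_rightStep ht.toScaledDeviation hr le_rfl)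
    hr.mem_Icc.2
  exact ⟨hr, h.leftStep_B ht.toScale hi hi' (by linarith) (by linarith)⟩

theorem steps_of_tied_third (h : AdmissibleCoords θ a f g) (ht : ReferenceTails k e θ U V)
    (hi : a i = 1) (hj : a j = 1) (hi' : i' = i - (2 * k + 4)) (hj' : j' = j + (2 * k + 2))
    (hf : -0.0942 * e ≤ f j) (hg : -0.00278 * e ≤ g i) (hgj : g j ≤ 0.02 * e)
    (htied : Tied 0.98 1.021 rho (f j - U 3) (g i - V 3)) :
    RightStep a f g (-e) j j' ∧ LeftStep a f g (-(e * rho ^ 2)) i i' ∧ -0.00278 * e ≤ f j' := by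
  have := ht.pos
  have hf' := ht.le_of_tied_third htied hg
  have hr := h.rightStep_A ht.toScale hj hj' (by linarith) (by linarith)
  have hfj := h.f_ge_of_g_eq ht.toScaledDeviation hr.block.right hr.two_before hr.g_eq hgj
    (h.g_mem_Icc _).1
  have hg' := ht.le_of_tied_fourth htied hr.f_eq hfj hr.mem_Icc.2
  exact ⟨hr, h.leftStep_C ht.toScale hi hi' (by linarith) (by linarith), hfj⟩

end AdmissibleCoords

/-- The blocks of lengths `A`, `B`, `C`, `A`, `B` to the right of a critical junction at `j`. -/
structure RightWindow (k : ℕ) (a : ℤ → ℕ) (j : ℤ) : Prop where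
  block₁ : TwosBlock a j (j + (2 * k + 2))
  block₂ : TwosBlock a (j + (2 * k + 2)) (j + (4 * k + 5))
  block₃ : TwosBlock a (j + (4 * k + 5)) (j + (6 * k + 9))
  block₄ : TwosBlock a (j + (6 * k + 9)) (j + (8 * k + 11))
  block₅ : TwosBlock a (j + (8 * k + 11)) (j + (10 * k + 14))
  two : a (j + (10 * k + 14) + 1) = 2

/-- The blocks of lengths `C`, `B`, `A`, `C` to the left of a critical junction at `j`. -/
structure LeftWindow (k : ℕ) (a : ℤ → ℕ) (j : ℤ) : Prop where
  block₁ : TwosBlock a (j - (2 * k + 4)) j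
  block₂ : TwosBlock a (j - (4 * k + 7)) (j - (2 * k + 4))
  block₃ : TwosBlock a (j - (6 * k + 9)) (j - (4 * k + 7))
  block₄ : TwosBlock a (j - (8 * k + 13)) (j - (6 * k + 9))
  two : a (j - (8 * k + 13) - 1) = 2

/-- The blocks `C A B C | A B C A B` around a critical junction at `j`. -/
structure Window (k : ℕ) (a : ℤ → ℕ) (j : ℤ) : Prop where
  right : RightWindow k a j
  left : LeftWindow k a j

section window

variable {k : ℕ} {e θ : ℝ} {a : ℤ → ℕ} {f g : ℤ → ℝ} {U V : ℕ → ℝ} {j : ℤ}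

theorem AdmissibleCoords.window (h : AdmissibleCoords θ a f g) (ht : ReferenceTails k e θ U V)
    (hj : a j = 1) (hdev : deviation (f j) (g j) = θ) : Window k a j := by
  have hk := ht.toScaledDeviation
  have he := hk.pos
  have hB := mul_pos he rho_pos
  have hC := mul_pos he (pow_pos rho_pos 2)
  obtain ⟨r₁, -⟩ := h.rightStep_of_deviation_eq hk hj hdev rfl
  obtain ⟨l₁, hf₁⟩ := h.leftStep_of_deviation_eq hk hj hdev rfl rfl
  rw [r₁.f_eq, l₁.g_eq] at hdev
  have htied₁ := ht.tied_of_deviation_eq r₁.mem_Icc l₁.mem_Icc hdev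
  obtain ⟨r₂, l₂⟩ := h.steps_of_tied_first (j' := j + (4 * k + 5)) (i' := j - (4 * k + 7)) ht
    l₁.block.left r₁.block.right (by ring) (by ring) hf₁
    (h.g_ge_of_leftStep hk l₁ (by linarith)) htied₁
  rw [r₂.f_eq, ht.right.eq₁, l₂.g_eq, ht.left.eq₁] at htied₁
  have htied₂ := htied₁.of_mul_oneMap hB.ne' rfl (by norm_num) r₂.mem_Icc ht.right.mem₂ l₂.mem_Icc
    ht.left.mem₂
  obtain ⟨r₃, l₃⟩ := h.toTwoSidedCoords.steps_of_tied_second (j' := j + (6 * k + 9))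
    (i' := j - (6 * k + 9)) ht l₂.block.left r₂.block.right (by ring) (by ring)
    (h.f_ge_of_rightStep hk r₂ le_rfl) (h.g_ge_of_leftStep hk l₂ le_rfl)
    (htied₂.mono (by norm_num) (by norm_num))
  rw [r₃.f_eq, ht.right.eq₂, l₃.g_eq, ht.left.eq₂] at htied₂
  have htied₃ := htied₂.of_mul_oneMap (c' := rho) (neg_ne_zero.2 hC.ne') (by ring) (by norm_num)
    r₃.mem_Icc ht.right.mem₃ l₃.mem_Icc ht.left.mem₃
  obtain ⟨r₄, l₄, hf₄⟩ := h.steps_of_tied_third (j' := j + (8 * k + 11)) (i' := j - (8 * k + 13)) ht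
    l₃.block.left r₃.block.right (by ring) (by ring) (h.f_ge_of_rightStep hk r₃ (by linarith))
    (h.g_ge_of_f_eq hk l₃.block.left l₃.two_before l₃.f_eq
      (l₂.f_eq ▸ hk.mul_oneMap_le le_rfl (h.f_mem_Icc _)) (h.f_mem_Icc _).1)
    (r₃.g_eq ▸ hk.mul_oneMap_le (by linarith) (h.g_mem_Icc _))
    (htied₃.mono (by norm_num) (by norm_num))
  rw [r₄.f_eq, ht.right.eq₃, l₄.g_eq, ht.left.eq₃] at htied₃
  have htied₄ := htied₃.of_mul_oneMap (c' := rho ^ 3) (neg_ne_zero.2 he.ne') (by ring)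
    (by norm_num) r₄.mem_Icc ht.right.mem₄ l₄.mem_Icc ht.left.mem₄
  obtain ⟨r₅, -⟩ := h.rightStep_of_tied (j' := j + (10 * k + 14)) hk.toScale r₄.block.right
    (by ring) ht.u_four ht.v_four_mem_Icc (htied₄.mono (by norm_num) (by norm_num)) hf₄
    (h.g_ge_of_leftStep hk l₄ (by linarith))
  exact ⟨⟨r₁.block, r₂.block, r₃.block, r₄.block, r₅.block, r₅.two_after⟩,
    l₁.block, l₂.block, l₃.block, l₄.block, l₄.two_after⟩

theorem TwosBlock.congr {b : ℤ → ℕ} {d i j i' j' : ℤ} (h : TwosBlock a i j) (hi : i' = i + d)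
    (hj : j' = j + d) (hij : i ≤ j) (hab : ∀ t, i ≤ t → t ≤ j → b (t + d) = a t) :
    TwosBlock b i' j' where
  left := by rw [hi, hab i le_rfl hij, h.left]
  two t ht ht' := by
    rw [← h.two (t - d) (by omega) (by omega), ← hab (t - d) (by omega) (by omega),
      sub_add_cancel]
  right := by rw [hj, hab j hij le_rfl, h.right]

theorem Window.congr {b : ℤ → ℕ} {d j' : ℤ} (h : Window k a j) (hj' : j' = j + d)
    (hab : ∀ t, j - (8 * k + 14) ≤ t → t ≤ j + (10 * k + 15) → b (t + d) = a t) :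
    Window k b j' := by
  have digit {t t' : ℤ} (ht : j - (8 * k + 14) ≤ t) (ht' : t ≤ j + (10 * k + 15))
      (heq : t' = t + d) : b t' = a t := heq ▸ hab t ht ht'
  refine ⟨⟨h.right.block₁.congr (d := d) ?_ ?_ ?_ ?_, h.right.block₂.congr (d := d) ?_ ?_ ?_ ?_,
    h.right.block₃.congr (d := d) ?_ ?_ ?_ ?_, h.right.block₄.congr (d := d) ?_ ?_ ?_ ?_,
    h.right.block₅.congr (d := d) ?_ ?_ ?_ ?_, (digit ?_ ?_ ?_).trans h.right.two⟩,
    h.left.block₁.congr (d := d) ?_ ?_ ?_ ?_, h.left.block₂.congr (d := d) ?_ ?_ ?_ ?_,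
    h.left.block₃.congr (d := d) ?_ ?_ ?_ ?_, h.left.block₄.congr (d := d) ?_ ?_ ?_ ?_,
    (digit ?_ ?_ ?_).trans h.left.two⟩
  all_goals first
    | omega
    | exact fun t _ _ => hab t (by omega) (by omega)

namespace RightWindow

theorem f_eq (hw : RightWindow k a j) (h : TwoSidedCoords a f g) (hk : Scale k e) :
    f j = -e * oneMap (f (j + (2 * k + 2))) :=
  h.f_eq_of_twosBlock hw.block₁ hk.pow_A (by push_cast; ring)

theorem chain (hw : RightWindow k a j) (h : TwoSidedCoords a f g) (hk : Scale k e) :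
    RightChain e (f (j + (2 * k + 2))) (f (j + (4 * k + 5))) (f (j + (6 * k + 9)))
      (f (j + (8 * k + 11))) (f (j + (10 * k + 14))) := by
  have r₁ := h.rightStep_of_twosBlock hk.pow_A (by omega) hw.block₁ (by push_cast; ring)
    (hw.block₂.two _ (by omega) (by omega))
  have r₂ := h.rightStep_of_twosBlock hk.pow_B (by omega) hw.block₂ (by push_cast; ring)
    (hw.block₃.two _ (by omega) (by omega))
  have r₃ := h.rightStep_of_twosBlock hk.pow_C (by omega) hw.block₃ (by push_cast; ring)
    (hw.block₄.two _ (by omega) (by omega))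
  have r₄ := h.rightStep_of_twosBlock hk.pow_A (by omega) hw.block₄ (by push_cast; ring)
    (hw.block₅.two _ (by omega) (by omega))
  have r₅ := h.rightStep_of_twosBlock hk.pow_B (by omega) hw.block₅ (by push_cast; ring) hw.two
  exact ⟨r₂.f_eq, r₃.f_eq, r₄.f_eq, r₅.f_eq, r₁.mem_Icc, r₂.mem_Icc, r₃.mem_Icc, r₄.mem_Icc,
    r₅.mem_Icc⟩

end RightWindow

namespace LeftWindow

theorem g_eq (hw : LeftWindow k a j) (h : TwoSidedCoords a f g) (hk : Scale k e) :
    g j = -(e * rho ^ 2) * oneMap (g (j - (2 * k + 4))) :=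
  h.g_eq_of_twosBlock hw.block₁ hk.pow_C (by push_cast; ring)

theorem chain (hw : LeftWindow k a j) (h : TwoSidedCoords a f g) (hk : Scale k e) :
    LeftChain e (g (j - (2 * k + 4))) (g (j - (4 * k + 7))) (g (j - (6 * k + 9)))
      (g (j - (8 * k + 13))) := by
  have l₁ := h.leftStep_of_twosBlock hk.pow_C (by omega) hw.block₁ (by push_cast; ring)
    (hw.block₂.two _ (by omega) (by omega))
  have l₂ := h.leftStep_of_twosBlock hk.pow_B (by omega) hw.block₂ (by push_cast; ring)
    (hw.block₃.two _ (by omega) (by omega))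
  have l₃ := h.leftStep_of_twosBlock hk.pow_A (by omega) hw.block₃ (by push_cast; ring)
    (hw.block₄.two _ (by omega) (by omega))
  have l₄ := h.leftStep_of_twosBlock hk.pow_C (by omega) hw.block₄ (by push_cast; ring) hw.two
  exact ⟨l₂.g_eq, l₃.g_eq, l₄.g_eq, l₁.mem_Icc, l₂.mem_Icc, l₃.mem_Icc, l₄.mem_Icc⟩

end LeftWindow

end window

/-! ### Propagation of the window to the left -/

theorem RightChain.exists_sub_eq {e u₁ u₂ u₃ u₄ u₅ w₁ w₂ w₃ w₄ w₅ : ℝ}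
    (hu : RightChain e u₁ u₂ u₃ u₄ u₅) (hw : RightChain e w₁ w₂ w₃ w₄ w₅) :
    ∃ C, 0.027 ≤ C ∧ C ≤ 0.029 ∧ u₁ - w₁ = C * e ^ 4 * rho ^ 4 * (u₅ - w₅) := by
  obtain ⟨c₂, hc₂, hc₂', hsub₂⟩ := exists_oneMap_sub_eq_fine hu.mem₂ hw.mem₂
  obtain ⟨c₃, hc₃, hc₃', hsub₃⟩ := exists_oneMap_sub_eq_fine hu.mem₃ hw.mem₃
  obtain ⟨c₄, hc₄, hc₄', hsub₄⟩ := exists_oneMap_sub_eq_fine hu.mem₄ hw.mem₄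
  obtain ⟨c₅, hc₅, hc₅', hsub₅⟩ := exists_oneMap_sub_eq_fine hu.mem₅ hw.mem₅
  refine ⟨c₂ * c₃ * (c₄ * c₅), ?_, ?_, ?_⟩
  · calc (0.027 : ℝ) ≤ 0.409 * 0.409 * (0.409 * 0.409) := by norm_num
      _ ≤ c₂ * c₃ * (c₄ * c₅) := by gcongr
  · calc c₂ * c₃ * (c₄ * c₅) ≤ 0.411 * 0.411 * (0.411 * 0.411) := by gcongr
      _ ≤ 0.029 := by norm_num
  · calc u₁ - w₁ = e * rho * (oneMap u₂ - oneMap w₂) := by rw [hu.eq₁, hw.eq₁]; ring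
      _ = e ^ 2 * rho ^ 3 * c₂ * (oneMap u₃ - oneMap w₃) := by rw [hsub₂, hu.eq₂, hw.eq₂]; ring
      _ = e ^ 3 * rho ^ 3 * c₂ * c₃ * (oneMap u₄ - oneMap w₄) := by
        rw [hsub₃, hu.eq₃, hw.eq₃]; ring
      _ = -(e ^ 4 * rho ^ 4 * c₂ * c₃ * c₄) * (oneMap u₅ - oneMap w₅) := by
        rw [hsub₄, hu.eq₄, hw.eq₄]; ring
      _ = c₂ * c₃ * (c₄ * c₅) * e ^ 4 * rho ^ 4 * (u₅ - w₅) := by rw [hsub₅]; ring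

theorem LeftChain.exists_sub_eq {e v₁ v₂ v₃ v₄ w₁ w₂ w₃ w₄ : ℝ}
    (hv : LeftChain e v₁ v₂ v₃ v₄) (hw : LeftChain e w₁ w₂ w₃ w₄) :
    ∃ C, 0.068 ≤ C ∧ C ≤ 0.07 ∧ v₁ - w₁ = -(C * e ^ 3 * rho ^ 3) * (v₄ - w₄) := by
  obtain ⟨c₂, hc₂, hc₂', hsub₂⟩ := exists_oneMap_sub_eq_fine hv.mem₂ hw.mem₂
  obtain ⟨c₃, hc₃, hc₃', hsub₃⟩ := exists_oneMap_sub_eq_fine hv.mem₃ hw.mem₃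
  obtain ⟨c₄, hc₄, hc₄', hsub₄⟩ := exists_oneMap_sub_eq_fine hv.mem₄ hw.mem₄
  refine ⟨c₂ * c₃ * c₄, ?_, ?_, ?_⟩
  · calc (0.068 : ℝ) ≤ 0.409 * 0.409 * 0.409 := by norm_num
      _ ≤ c₂ * c₃ * c₄ := by gcongr
  · calc c₂ * c₃ * c₄ ≤ 0.411 * 0.411 * 0.411 := by gcongr
      _ ≤ 0.07 := by norm_num
  · calc v₁ - w₁ = e * rho * (oneMap v₂ - oneMap w₂) := by rw [hv.eq₁, hw.eq₁]; ring
      _ = e ^ 2 * rho * c₂ * (oneMap v₃ - oneMap w₃) := by rw [hsub₂, hv.eq₂, hw.eq₂]; ring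
      _ = e ^ 3 * rho ^ 3 * c₂ * c₃ * (oneMap v₄ - oneMap w₄) := by
        rw [hsub₃, hv.eq₃, hw.eq₃]; ring
      _ = -(c₂ * c₃ * c₄ * e ^ 3 * rho ^ 3) * (v₄ - w₄) := by rw [hsub₄]; ring

theorem sub_le_of_neg_le_oneMap_sub {s t p : ℝ} (hp : 0 ≤ p) (hs : s ∈ Set.Icc (-0.0006) 0.0031)
    (ht : t ∈ Set.Icc (-0.0006) 0.0031) (hle : -p ≤ oneMap s - oneMap t) : s - t ≤ 10 * p := by
  obtain ⟨c, hc, -, hsub⟩ := exists_oneMap_sub_eq_fine hs ht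
  by_contra!
  nlinarith

namespace ReferenceTails

variable {k : ℕ} {e θ : ℝ} {U V : ℕ → ℝ} {u₁ u₂ u₃ u₄ u₅ v₁ v₂ v₃ v₄ : ℝ}

theorem lt_of_chains (ht : ReferenceTails k e θ U V) (hu : RightChain e u₁ u₂ u₃ u₄ u₅)
    (hv : LeftChain e v₁ v₂ v₃ v₄)
    (hdev : deviation (-e * oneMap u₁) (-(e * rho ^ 2) * oneMap v₁) ≤ θ) : v₄ < 0.3088 * e := by
  obtain ⟨ρ, hρ, hrel⟩ := ht.exists_of_deviation_le hu.mem₁ hv.mem₁ hdev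
  obtain ⟨C, hC, hC', hsubu⟩ := hu.exists_sub_eq ht.right
  obtain ⟨D, hD, -, hsubv⟩ := hv.exists_sub_eq ht.left
  have he := ht.pos
  have := rho_pos
  have hsq := rho_sq_mem_Ioo.1
  have hrel' : 0 ≤ 2 * (C * e * (u₅ - U 5)) - ρ * D * rho ^ 2 * (v₄ - V 4) := by
    refine nonneg_of_mul_nonneg_right (a := e ^ 3 * rho ^ 4) ?_ (by positivity)
    rw [hsubu, hsubv] at hrel
    linear_combination hrel
  have hslope : 0.0019 ≤ ρ * D * rho ^ 2 := calc
    (0.0019 : ℝ) ≤ 0.99 * 0.068 * 0.0294372 := by norm_num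
    _ ≤ ρ * D * rho ^ 2 := by gcongr
  have hsmall : C * e * (u₅ - U 5) ≤ 0.029 * e * 0.0032 := calc
    C * e * (u₅ - U 5) ≤ C * e * 0.0032 := by gcongr; linarith [hu.mem₅.2, ht.u_five.1]
    _ ≤ 0.029 * e * 0.0032 := by gcongr
  by_contra!
  have : 0.0019 * (0.12 * e) ≤ ρ * D * rho ^ 2 * (v₄ - V 4) := by
    gcongr
    linarith [ht.v_four_mem_Icc.2]
  linarith

theorem ge_of_chain (ht : ReferenceTails k e θ U V) (hu : RightChain e u₁ u₂ u₃ u₄ u₅)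
    (hu₅ : u₅ ≤ 0) (hv : v₁ ∈ Set.Icc (-0.0006) 0.0031)
    (hdev : deviation (-e * oneMap u₁) (-(e * rho ^ 2) * oneMap v₁) ≤ θ) :
    -(0.00000001 * e ^ 4 * rho) ≤ v₁ - V 1 := by
  obtain ⟨ρ, hρ, hrel⟩ := ht.exists_of_deviation_le hu.mem₁ hv hdev
  obtain ⟨C, hC, hC', hsubu⟩ := hu.exists_sub_eq ht.right
  have := ht.pos
  have := rho_pos
  have hrel' : 0 ≤ 2 * (C * (u₅ - U 5) * (e ^ 4 * rho)) + ρ * (v₁ - V 1) := by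
    refine nonneg_of_mul_nonneg_right (a := rho ^ 3) ?_ (by positivity)
    rw [hsubu] at hrel
    linear_combination hrel
  have hsmall : C * (u₅ - U 5) * (e ^ 4 * rho) ≤ 0.029 * 0.0000001 * (e ^ 4 * rho) := calc
    C * (u₅ - U 5) * (e ^ 4 * rho) ≤ C * 0.0000001 * (e ^ 4 * rho) := by
      gcongr; linarith [ht.u_five.1]
    _ ≤ 0.029 * 0.0000001 * (e ^ 4 * rho) := by gcongr
  have : 0 < e ^ 4 * rho := by positivity
  by_contra!
  nlinarith

theorem sub_le_of_neg_le_sub_one (ht : ReferenceTails k e θ U V) (hv₁ : v₁ = e * rho * oneMap v₂)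
    (hv₂ : v₂ ∈ Set.Icc (-0.0006) 0.0031) (hle : -(0.00000001 * e ^ 4 * rho) ≤ v₁ - V 1) :
    v₂ - V 2 ≤ 0.0000001 * e ^ 3 := by
  have hpos := mul_pos ht.pos rho_pos
  have := ht.pos
  have hsub : -(0.00000001 * e ^ 3) ≤ oneMap v₂ - oneMap (V 2) := by
    refine le_of_mul_le_mul_left ?_ hpos
    rw [hv₁, ht.left.eq₁] at hle
    linear_combination hle
  linarith [sub_le_of_neg_le_oneMap_sub (by positivity) hv₂ ht.left.mem₂ hsub]

theorem sub_le_of_sub_two_le (ht : ReferenceTails k e θ U V) (hv₂ : v₂ = -e * oneMap v₃)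
    (hv₃ : v₃ ∈ Set.Icc (-0.0006) 0.0031) (hle : v₂ - V 2 ≤ 0.0000001 * e ^ 3) :
    v₃ - V 3 ≤ 0.000001 * e ^ 2 := by
  have := ht.pos
  have hsub : -(0.0000001 * e ^ 2) ≤ oneMap v₃ - oneMap (V 3) := by
    refine le_of_mul_le_mul_left ?_ ht.pos
    rw [hv₂, ht.left.eq₂] at hle
    linear_combination hle
  linarith [sub_le_of_neg_le_oneMap_sub (by positivity) hv₃ ht.left.mem₃ hsub]

end ReferenceTails

section propagation

variable {k : ℕ} {e θ : ℝ} {a : ℤ → ℕ} {f g : ℤ → ℝ} {U V : ℕ → ℝ} {j : ℤ}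

theorem TwosBlock.f_nonpos_of_blockC (h : TwoSidedCoords a f g) (hk : Scale k e) {i : ℤ}
    (hb : TwosBlock a i j) (hj : j = i + (2 * k + 4)) : f i ≤ 0 := by
  rw [h.f_eq_of_twosBlock hb hk.pow_C (by push_cast; omega)]
  have := (oneMap_mem_Icc_of_tail (h.f_mem_Icc j)).1
  have := hk.pos
  have : 0 ≤ e * rho ^ 2 * oneMap (f j) := by positivity
  linarith

namespace Window

theorem rightWindow_sub (hw : Window k a j) : RightWindow k a (j - (6 * k + 9)) := by
  have move {i i' l l' : ℤ} (hb : TwosBlock a i l) (hi : i' = i) (hl : l' = l) :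
      TwosBlock a i' l' := hi ▸ hl ▸ hb
  refine ⟨move hw.left.block₃ rfl (by ring), move hw.left.block₂ (by ring) (by ring),
    move hw.left.block₁ (by ring) (by ring), move hw.right.block₁ (by ring) (by ring),
    move hw.right.block₂ (by ring) (by ring), hw.right.block₃.two _ (by omega) (by omega)⟩

theorem deviation_le (hw : Window k a j) (h : AdmissibleCoords θ a f g) (hk : Scale k e) :
    deviation (-e * oneMap (f (j + (2 * k + 2))))
      (-(e * rho ^ 2) * oneMap (g (j - (2 * k + 4)))) ≤ θ := by
  rw [← hw.right.f_eq h.toTwoSidedCoords hk, ← hw.left.g_eq h.toTwoSidedCoords hk]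
  exact h.right_le j hw.right.block₁.left (hw.right.block₁.two _ (by omega) (by omega))

theorem g_le (hw : Window k a j) (h : AdmissibleCoords θ a f g) (ht : ReferenceTails k e θ U V) :
    g (j - (8 * k + 13)) ≤ 0.016163 * e :=
  (h.g_hasGaps _).le_B ht.toScale <| ht.lt_of_chains
    (hw.right.chain h.toTwoSidedCoords ht.toScale) (hw.left.chain h.toTwoSidedCoords ht.toScale)
    (hw.deviation_le h ht.toScale)

end Window

theorem AdmissibleCoords.leftWindow (h : AdmissibleCoords θ a f g)
    (ht : ReferenceTails k e θ U V) (hb : TwosBlock a (j - (2 * k + 4)) j)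
    (hlower : -(0.00000001 * e ^ 4 * rho) ≤ g (j - (2 * k + 4)) - V 1)
    (hupper : g (j - (2 * k + 4)) ≤ 0.016163 * e) : LeftWindow k a j := by
  have hk := ht.toScaledDeviation
  have he := hk.pos
  have he' := hk.le_small
  have hsq : e ^ 2 ≤ e := pow_le_of_le_one he.le (by linarith) two_ne_zero
  have hcube : e ^ 3 ≤ e := pow_le_of_le_one he.le (by linarith) three_ne_zero
  have hfour : e ^ 4 * rho ≤ e := (mul_le_of_le_one_right (by positivity) rho_lt_one.le).trans
    (pow_le_of_le_one he.le (by linarith) four_ne_zero)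
  have l₂ := h.leftStep_B (j' := j - (4 * k + 7)) hk.toScale hb.left (by ring)
    (by linarith [ht.v_one.1]) (by linarith)
  have hf₂ : f (j - (4 * k + 7)) ≤ 0.02 * e :=
    l₂.f_eq ▸ hk.mul_oneMap_le le_rfl (h.f_mem_Icc _)
  have hg₂ := ht.sub_le_of_neg_le_sub_one l₂.g_eq l₂.mem_Icc hlower
  have l₃ := h.leftStep_A (j' := j - (6 * k + 9)) hk.toScale l₂.block.left (by ring)
    (by linarith [h.g_ge_of_leftStep hk l₂ le_rfl]) (by linarith [ht.v_two.2])
  have hg₃ := ht.sub_le_of_sub_two_le l₃.g_eq l₃.mem_Icc hg₂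
  have l₄ := h.leftStep_C (j' := j - (8 * k + 13)) hk.toScale l₃.block.left (by ring)
    (by linarith [h.g_ge_of_f_eq hk l₃.block.left l₃.two_before l₃.f_eq hf₂ (h.f_mem_Icc _).1])
    (by linarith [ht.v_three.2])
  exact ⟨hb, l₂.block, l₃.block, l₄.block, l₄.two_after⟩

theorem Window.sub (hw : Window k a j) (h : AdmissibleCoords θ a f g)
    (ht : ReferenceTails k e θ U V) : Window k a (j - (6 * k + 9)) := by
  have hk := ht.toScale
  have hr := hw.rightWindow_sub
  have hb : TwosBlock a (j - (6 * k + 9) - (2 * k + 4)) (j - (6 * k + 9)) := by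
    convert hw.left.block₄ using 1; ring
  have hl := h.leftStep_of_twosBlock hk.pow_C (by omega) hb (by push_cast; ring)
    (by convert hw.left.two using 2; ring)
  have hdev := h.right_le _ hr.block₁.left (hr.block₁.two _ (by omega) (by omega))
  rw [hr.f_eq h.toTwoSidedCoords hk, hl.g_eq] at hdev
  have hneg := hw.right.block₃.f_nonpos_of_blockC h.toTwoSidedCoords hk (by ring)
  refine ⟨hr, h.leftWindow ht hb ?_ ?_⟩
  · refine ht.ge_of_chain (hr.chain h.toTwoSidedCoords hk) ?_ hl.mem_Icc hdev
    convert hneg using 2; ring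
  · convert hw.g_le h ht using 2; ring

theorem Window.ge_of_window_add (hw : Window k a (j + (6 * k + 9))) (h : TwoSidedCoords a f g)
    (hk : Scale k e) : -0.01 * e ≤ f (j + (10 * k + 14)) := by
  have hchain := hw.right.chain h hk
  have hf : f (j + (10 * k + 14)) = f (j + (6 * k + 9) + (4 * k + 5)) := by congr 1; ring
  rw [hf, hchain.eq₂]
  have := (oneMap_mem_Icc_of_two_two hchain.mem₃).2
  obtain ⟨hC, hC'⟩ := hk.mul_rho_sq_mem_Ioo
  nlinarith [hk.pos]

theorem AdmissibleCoords.false_of_windows (h : AdmissibleCoords θ a f g)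
    (ht : ReferenceTails k e θ U V) (hw : Window k a j) (hw' : Window k a (j + (6 * k + 9)))
    (hdev : deviation (f j) (g j) = θ) : False := by
  have hk := ht.toScale
  have h' := h.toTwoSidedCoords
  have he := hk.pos
  have := rho_pos
  have hr := hw.right.chain h' hk
  have hl := hw.left.chain h' hk
  have hl' := (hw.sub h ht).left.chain h' hk
  have hg : g (j - (8 * k + 13)) = g (j - (6 * k + 9) - (2 * k + 4)) := by congr 1; ring
  rw [hw.right.f_eq h' hk, hw.left.g_eq h' hk] at hdev
  obtain ⟨ρ, hρ, hρ', hrel⟩ := ht.tied_of_deviation_eq hr.mem₁ hl.mem₁ hdev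
  obtain ⟨C, hC, -, hsubu⟩ := hr.exists_sub_eq ht.right
  obtain ⟨D, hD, hD', hsubv⟩ := hl.exists_sub_eq ht.left
  obtain ⟨c, hc, hc', hsub⟩ := exists_oneMap_sub_eq_fine hl'.mem₂ (t := V 5)
    ⟨by linarith [ht.v_five.1], by linarith [ht.v_five.2]⟩
  rw [hsubu, hsubv, hg, hl'.eq₁, ht.v_four, ← mul_sub, hsub] at hrel
  have hx : 0.08 * e ≤ f (j + (10 * k + 14)) - U 5 := by
    linarith [hw'.ge_of_window_add h' hk, ht.u_five.2]
  have hy : -0.0942 * e ≤ g (j - (6 * k + 9) - (4 * k + 7)) - V 5 := by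
    have := (oneMap_mem_Icc_of_two_two hl'.mem₃).2
    rw [hl'.eq₂]
    nlinarith [ht.v_five.2]
  generalize f (j + (10 * k + 14)) - U 5 = x at *
  generalize g (j - (6 * k + 9) - (4 * k + 7)) - V 5 = y at *
  have hrel' : 2 * (C * x) = ρ * D * c * rho ^ 3 * -y := by
    refine mul_left_cancel₀ (show e ^ 4 * rho ^ 4 ≠ 0 by positivity) ?_
    linear_combination hrel
  have hslope : ρ * D * c * rho ^ 3 ≤ 1.01 * 0.07 * 0.411 * 0.0050507 := by
    have := rho_cube_mem_Ioo.2
    gcongr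
  have : ρ * D * c * rho ^ 3 * -y ≤ 0.01 * (0.0942 * e) := by
    calc ρ * D * c * rho ^ 3 * -y ≤ ρ * D * c * rho ^ 3 * (0.0942 * e) := by gcongr; linarith
      _ ≤ 0.01 * (0.0942 * e) := by gcongr; linarith
  have : 0.027 * (0.08 * e) ≤ C * x := by gcongr
  linarith

end propagation

/-! ### Critical values outside the Lagrange spectrum -/

section limsup

variable {u : ℕ → ℝ} {Λ M : ℝ}

theorem eventually_lt_of_limsup_ofReal_eq (hΛ : 0 ≤ Λ)
    (hu : limsup (fun n => ENNReal.ofReal (u n)) atTop = ENNReal.ofReal Λ) (hM : Λ < M) :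
    ∀ᶠ n in atTop, u n < M := by
  have hlt : limsup (fun n => ENNReal.ofReal (u n)) atTop < ENNReal.ofReal M :=
    hu ▸ (ENNReal.ofReal_lt_ofReal_iff_of_nonneg hΛ).2 hM
  filter_upwards [eventually_lt_of_limsup_lt hlt] with n hn
  exact (ENNReal.ofReal_lt_ofReal_iff'.1 hn).1

theorem exists_ultrafilter_tendsto_of_limsup_ofReal_eq (hΛ : 0 < Λ)
    (hu : limsup (fun n => ENNReal.ofReal (u n)) atTop = ENNReal.ofReal Λ) :
    ∃ F : Ultrafilter ℕ, (F : Filter ℕ) ≤ atTop ∧ Tendsto u F (𝓝 Λ) := by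
  rw [← mapClusterPt_iff_ultrafilter, mapClusterPt_iff_frequently]
  intro s hs
  obtain ⟨l, r, ⟨hl, hr⟩, hs⟩ := mem_nhds_iff_exists_Ioo_subset.1 hs
  have hlt : ENNReal.ofReal l < limsup (fun n => ENNReal.ofReal (u n)) atTop :=
    hu ▸ ENNReal.ofReal_lt_ofReal_iff'.2 ⟨hl, hΛ⟩
  refine ((frequently_lt_of_lt_limsup (by isBoundedDefault) hlt).and_eventually
    (eventually_lt_of_limsup_ofReal_eq hΛ.le hu hr)).mono fun n hn => hs ⟨?_, hn.2⟩
  exact (ENNReal.ofReal_lt_ofReal_iff'.1 hn.1).1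

end limsup

section ultrafilter

variable {F : Ultrafilter ℕ} {P : ℤ → Prop} {N p : ℤ}

theorem exists_ultrafilter_of_frequently {P : ℕ → Prop} (h : ∃ᶠ n in atTop, P n) :
    ∃ F : Ultrafilter ℕ, (F : Filter ℕ) ≤ atTop ∧ ∀ᶠ n in (F : Filter ℕ), P n :=
  have := frequently_iff_neBot.1 h
  ⟨Ultrafilter.of _, (Ultrafilter.of_le _).trans inf_le_left,
    (Ultrafilter.of_le _).trans inf_le_right (mem_principal_self _)⟩

theorem exists_eventually_emod_eq (F : Ultrafilter ℕ) (hp : p ≠ 0) :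
    ∃ r, ∀ᶠ n : ℕ in (F : Filter ℕ), (n : ℤ) % p = r := by
  obtain ⟨r, hr⟩ : ∃ r : Set.Ico 0 |p|, ∀ᶠ n : ℕ in (F : Filter ℕ), (n : ℤ) % p = r := by
    rw [← Ultrafilter.eventually_exists_iff]
    exact .of_forall fun n => ⟨⟨n % p, Int.emod_nonneg _ hp, Int.emod_lt_abs _ hp⟩, rfl⟩
  exact ⟨r, hr⟩

theorem add_mul_of_forall_add (hstep : ∀ m ≥ N, P m → P (m + p)) {m : ℤ} (hm : N ≤ m) (hP : P m)
    (t : ℕ) (ht : N ≤ m + p * t) : P (m + p * t) := by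
  induction t with
  | zero => simpa using hP
  | succ t ih =>
    have hle : N ≤ m + p * t := by
      push_cast at ht
      rcases le_total 0 p with hp | hp <;> nlinarith
    have := hstep _ hle (ih hle)
    rwa [add_assoc, ← mul_add_one] at this

/-- Along an ultrafilter all large indices lie in one residue class modulo `p`, so a property that
is inherited by `m + p` from `m` is also inherited in the opposite direction. -/
theorem eventually_sub_of_forall_add (hF : (F : Filter ℕ) ≤ atTop) (hp : p ≠ 0)
    (hstep : ∀ m ≥ N, P m → P (m + p)) {c : ℤ} (h : ∀ᶠ n : ℕ in (F : Filter ℕ), P (n + c)) :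
    ∀ᶠ n : ℕ in (F : Filter ℕ), P (n + c - p) := by
  obtain ⟨r, hr⟩ := exists_eventually_emod_eq F hp
  have large (M : ℤ) : ∀ᶠ n : ℕ in (F : Filter ℕ), M ≤ n :=
    hF (tendsto_natCast_atTop_atTop.eventually_ge_atTop M)
  have hgood := (hr.and h).and (large (N - c))
  have hlink : ∀ᶠ n : ℕ in (F : Filter ℕ), ∃ n' : ℕ, (((n' : ℤ) % p = r ∧ P (n' + c)) ∧
      N - c ≤ n') ∧ 0 ≤ (n - p - n') * p := by
    rcases hp.lt_or_gt with hneg | hpos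
    · refine .of_forall fun n => ?_
      obtain ⟨n', hn', hle⟩ := (hgood.and (large (n - p))).exists
      exact ⟨n', hn', mul_nonneg_of_nonpos_of_nonpos (by linarith) hneg.le⟩
    · obtain ⟨n', hn'⟩ := hgood.exists
      filter_upwards [large (n' + p)] with n hn
      exact ⟨n', hn', mul_nonneg (by linarith) hpos.le⟩
  filter_upwards [hr, hlink, large (N - c + p)] with n hn ⟨n', ⟨⟨hmod, hP⟩, hN⟩, hsign⟩ hlarge
  obtain ⟨t, ht⟩ : p ∣ n - p - n' := by
    rw [sub_right_comm]
    exact dvd_sub_self_right.2 (Int.ModEq.dvd (hmod.trans hn.symm))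
  have ht0 : 0 ≤ t := by
    rw [ht, mul_right_comm] at hsign
    exact nonneg_of_mul_nonneg_right hsign (mul_self_pos.2 hp)
  lift t to ℕ using ht0
  have heq : (n : ℤ) + c - p = n' + c + p * t := by linarith
  rw [heq]
  exact add_mul_of_forall_add hstep (by linarith) hP t (by linarith)

end ultrafilter

theorem AdmissibleCoords.exists_of_mul_self_eq_one {θ : ℝ} {a : ℤ → ℕ} {f g : ℤ → ℝ}
    (h : AdmissibleCoords θ a f g) {σ : ℤ} (hσ : σ * σ = 1) :
    ∃ f' g', AdmissibleCoords θ (fun i => a (σ * i)) f' g' := by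
  rcases mul_self_eq_one_iff.1 hσ with rfl | rfl
  · exact ⟨f, g, by simpa using h⟩
  · exact ⟨_, _, by simpa using h.reverse⟩

theorem three_lt_one_add {θ : ℝ} (hθ : 0 ≤ θ) : 3 < 1 + 3 / √2 + √2 * θ := by
  have := lt_sqrt_two
  have : 0 ≤ √2 * θ := by positivity
  rw [three_div_sqrt_two]
  linarith

theorem TwoSidedCF.exists_deviation_eq {a : ℤ → ℕ} {x y : ℤ → ℝ} (h : TwoSidedCF a x y) {θ : ℝ}
    (hθ : 0 ≤ θ)
    (hadm : AdmissibleCoords θ a (fun i => coord (x (i + 1))) (fun i => coord (y (i - 1))))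
    (hmax : height a x y 0 = 1 + 3 / √2 + √2 * θ) :
    ∃ σ : ℤ, σ * σ = 1 ∧ ∃ f g, AdmissibleCoords θ (fun i => a (σ * i)) f g ∧ a (σ * -1) = 1 ∧
      deviation (f (-1)) (g (-1)) = θ := by
  have hlt := three_lt_one_add hθ
  have cancel {t : ℝ} (ht : 1 + 3 / √2 + √2 * t = 1 + 3 / √2 + √2 * θ) : t = θ :=
    mul_left_cancel₀ (by positivity) (add_left_cancel ht)
  have hone : a (-1) = 1 ∨ a 1 = 1 := by
    by_contra! hne
    have hprev := (hadm.digit (-1)).resolve_left hne.1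
    have hnext := (hadm.digit 1).resolve_left hne.2
    rcases hadm.digit 0 with hzero | hzero
    · linarith [h.height_lt_three_of_one hzero]
    · linarith [h.height_lt_three_of_two hzero (by simpa using hprev) (by simpa using hnext)]
  rcases hone with hone | hone
  · refine ⟨1, one_mul 1, _, _, by simpa using hadm, by simpa using hone, cancel ?_⟩
    rw [← h.height_add_one hone, neg_add_cancel, hmax]
  · refine ⟨-1, by norm_num, _, _, by simpa using hadm.reverse, by simpa using hone, cancel ?_⟩
    rw [neg_neg, ← h.height_sub_one hone, sub_self, hmax]

/-- The window at the position `m` of the digit sequence read in the direction `σ = ± 1`. -/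
def SignedWindow (k : ℕ) (σ : ℤ) (a : ℤ → ℕ) (m : ℤ) : Prop :=
  Window k (fun i => a (σ * i)) (σ * m)

theorem signedWindow_iff_eventually {k : ℕ} {σ : ℤ} (hσ : σ * σ = 1) {a b : ℤ → ℕ}
    {F : Ultrafilter ℕ} (hb : ∀ i, ∀ᶠ n : ℕ in (F : Filter ℕ), a (n + i) = b i) (m : ℤ) :
    SignedWindow k σ b m ↔ ∀ᶠ n : ℕ in (F : Filter ℕ), SignedWindow k σ a (n + m) := by
  have hcoe : ∀ᶠ n : ℕ in (F : Filter ℕ),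
      ∀ t ∈ Set.Icc (σ * m - (8 * k + 14)) (σ * m + (10 * k + 15)), a (n + σ * t) = b (σ * t) :=
    (eventually_all_finite (Set.finite_Icc _ _)).2 fun t _ => hb (σ * t)
  have hmul (n t : ℤ) : σ * (t + σ * n) = n + σ * t := by linear_combination n * hσ
  constructor
  · intro h
    filter_upwards [hcoe] with n hn
    exact Window.congr h (d := σ * n) (by ring) fun t ht ht' => by
      rw [hmul, hn t ⟨ht, ht'⟩]
  · intro h
    obtain ⟨n, hn, hw⟩ := (hcoe.and h).exists
    refine Window.congr hw (d := σ * -n) (by ring) fun t ht ht' => ?_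
    have := hn (t + σ * -n) ⟨by linarith, by linarith⟩
    rw [hmul] at this ⊢
    rw [← this, add_neg_cancel_left]

namespace OneSidedCF

variable {a : ℕ → ℕ} {x y : ℕ → ℝ} {k : ℕ} {e θ : ℝ} {U V : ℕ → ℝ}

theorem exists_admissibleCoords_limit (h : OneSidedCF a x y) (hθ : 0 ≤ θ) (hθ' : θ ≤ 0.0004)
    (hlim : limsup (fun n => ENNReal.ofReal (height a x y n)) atTop =
      ENNReal.ofReal (1 + 3 / √2 + √2 * θ)) (F : Ultrafilter ℕ) (hF : (F : Filter ℕ) ≤ atTop) :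
    ∃ b X Y, TwoSidedCF b X Y ∧ (∀ i : ℤ, ∀ᶠ n : ℕ in (F : Filter ℕ), a (n + i).toNat = b i) ∧
      (∀ i : ℤ, Tendsto (fun n : ℕ => height a x y (n + i).toNat) F
        (𝓝 (TwoSidedCF.height b X Y i))) ∧
      AdmissibleCoords θ b (fun i => coord (X (i + 1))) (fun i => coord (Y (i - 1))) := by
  have hlt {M : ℝ} (hM : 1 + 3 / √2 + √2 * θ < M) : ∀ᶠ n in atTop, height a x y n < M :=
    eventually_lt_of_limsup_ofReal_eq (by linarith [three_lt_one_add hθ]) hlim hM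
  have hbounded : ∀ᶠ n in atTop, a n ≤ ⌈1 + 3 / √2 + √2 * θ + 1⌉₊ := by
    filter_upwards [hlt (lt_add_one _)] with n hn
    have := h.x_pos (n + 1)
    have := h.y_nonneg n
    rw [height] at hn
    exact_mod_cast (show (a n : ℝ) ≤ _ by linarith).trans (Nat.le_ceil _)
  obtain ⟨b, X, Y, hb, hdigit, hheight⟩ := h.exists_twoSidedCF_limit F hF hbounded
  refine ⟨b, X, Y, hb, hdigit, hheight,
    hb.admissibleCoords hθ' fun i => le_of_forall_gt_imp_ge_of_dense fun M hM => ?_⟩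
  obtain ⟨N, hN⟩ := eventually_atTop.1 (hlt hM)
  refine le_of_tendsto (hheight i) ?_
  filter_upwards [hF (eventually_ge_atTop (N + i.natAbs))] with n hn
  exact (hN _ (by omega)).le

theorem exists_forall_signedWindow_sub (h : OneSidedCF a x y) (ht : ReferenceTails k e θ U V)
    (hlim : limsup (fun n => ENNReal.ofReal (height a x y n)) atTop =
      ENNReal.ofReal (1 + 3 / √2 + √2 * θ)) {σ : ℤ} (hσ : σ * σ = 1) :
    ∃ N, ∀ m ≥ N, SignedWindow k σ (fun i => a i.toNat) m →
      SignedWindow k σ (fun i => a i.toNat) (m + -(σ * (6 * k + 9))) := by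
  by_contra! hne
  have hfreq : ∃ᶠ n : ℕ in atTop, SignedWindow k σ (fun i => a i.toNat) n ∧
      ¬SignedWindow k σ (fun i => a i.toNat) (n + -(σ * (6 * k + 9))) := by
    rw [frequently_atTop]
    intro N
    obtain ⟨m, hm, hw⟩ := hne N
    lift m to ℕ using by omega
    exact ⟨m, by omega, hw⟩
  obtain ⟨F, hF, hFw⟩ := exists_ultrafilter_of_frequently hfreq
  obtain ⟨b, X, Y, -, hdigit, -, hadm⟩ := h.exists_admissibleCoords_limit
    ht.nonneg (by linarith [ht.le_mul, ht.le_small]) hlim F hF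
  obtain ⟨f, g, hadm⟩ := hadm.exists_of_mul_self_eq_one hσ
  have hiff := signedWindow_iff_eventually (k := k) hσ (a := fun i => a i.toNat) hdigit
  have hzero : SignedWindow k σ b 0 := (hiff 0).2 (by simpa using hFw.mono fun n hn => hn.1)
  have hsub : SignedWindow k σ b (-(σ * (6 * k + 9))) := by
    have hshift : σ * -(σ * (6 * k + 9)) = σ * 0 - (6 * k + 9) := by
      linear_combination -(6 * k + 9) * hσ
    rw [SignedWindow, hshift]
    exact Window.sub hzero hadm ht
  obtain ⟨n, hn, hn'⟩ := (((hiff _).1 hsub).and hFw).exists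
  exact hn'.2 hn

end OneSidedCF

theorem ReferenceTails.notMem_lagrangeSpectrum {k : ℕ} {e θ : ℝ} {U V : ℕ → ℝ}
    (ht : ReferenceTails k e θ U V) : 1 + 3 / √2 + √2 * θ ∉ LagrangeSpectrum := by
  rintro ⟨α, hα, hfin, hval⟩
  obtain ⟨c, a, x, y, h, hy, rfl⟩ := OneSidedCF.exists_of_irrational hα
  rw [lagrangeVal_intCast_add, h.lagrangeVal_eq_limsup_height hy] at hfin hval
  have hlim := (ENNReal.ofReal_toReal hfin).symm
  rw [hval] at hlim
  have hθ := ht.nonneg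
  obtain ⟨F, hF, htendsto⟩ :=
    exists_ultrafilter_tendsto_of_limsup_ofReal_eq (by linarith [three_lt_one_add hθ]) hlim
  obtain ⟨b, X, Y, hb, hdigit, hheight, hadm⟩ := h.exists_admissibleCoords_limit hθ
    (by linarith [ht.le_mul, ht.le_small]) hlim F hF
  have hmax : TwoSidedCF.height b X Y 0 = 1 + 3 / √2 + √2 * θ :=
    tendsto_nhds_unique (hheight 0) (by simpa using htendsto)
  obtain ⟨σ, hσ, f, g, hadm, hone, hdev⟩ := hb.exists_deviation_eq hθ hadm hmax
  have hiff := signedWindow_iff_eventually (k := k) hσ (a := fun i => a i.toNat) hdigit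
  have hw := hadm.window ht hone hdev
  have hw' : SignedWindow k σ b (-σ) := by
    rw [SignedWindow, mul_neg, hσ]
    exact hw
  obtain ⟨N, hstep⟩ := h.exists_forall_signedWindow_sub ht hlim hσ
  have hσ0 : σ ≠ 0 := left_ne_zero_of_mul_eq_one hσ
  have hadd := eventually_sub_of_forall_add hF (by simp; omega) hstep ((hiff _).1 hw')
  simp_rw [add_sub_assoc] at hadd
  refine hadm.false_of_windows ht hw ?_ hdev
  have hshift : σ * (-σ - -(σ * (6 * k + 9))) = -1 + (6 * k + 9) := by
    linear_combination (6 * k + 8) * hσ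
  exact hshift ▸ (hiff _).2 hadd

/-! ### The sequences giving the points of the complement -/

theorem not_dvd_of_mul_lt_of_lt {p n x : ℤ} (hp : 0 < p) (hl : p * n < x) (hu : x < p * n + p) :
    ¬ p ∣ x := by
  rintro ⟨m, rfl⟩
  have := lt_of_mul_lt_mul_left hl hp.le
  have : m < n + 1 := lt_of_mul_lt_mul_left (by linarith) hp.le
  omega

/-- The positions of the digits `1` in the sequence obtained from the periodic sequence with blocks
of digits `2` of lengths `A = 2 * k + 1`, `B = 2 * k + 2`, `C = 2 * k + 3` by replacing everything
to the right of some block `B` by a block of length `A`, a digit `1` and digits `2`. -/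
def IsGammaOne (k : ℕ) (i : ℤ) : Prop :=
  (i ≤ 10 * k + 14 ∧ ((6 * k + 9 : ℤ) ∣ i ∨ (6 * k + 9 : ℤ) ∣ i - (2 * k + 2) ∨
    (6 * k + 9 : ℤ) ∣ i - (4 * k + 5))) ∨ i = 12 * k + 16

open Classical in
/-- The sequence of digits `1` and `2` with the digits `1` at the positions `IsGammaOne`. -/
noncomputable def gammaDigit (k : ℕ) (i : ℤ) : ℕ := if IsGammaOne k i then 1 else 2

theorem gammaDigit_eq_one {k : ℕ} {i : ℤ} : gammaDigit k i = 1 ↔ IsGammaOne k i := by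
  unfold gammaDigit; split_ifs with h <;> simp [h]

theorem gammaDigit_eq_two {k : ℕ} {i : ℤ} : gammaDigit k i = 2 ↔ ¬ IsGammaOne k i := by
  unfold gammaDigit; split_ifs with h <;> simp [h]

theorem gammaDigit_eq_one_or_two (k : ℕ) (i : ℤ) : gammaDigit k i = 1 ∨ gammaDigit k i = 2 := by
  unfold gammaDigit; split_ifs <;> simp

section gammaBlocks

variable {k : ℕ} {n t : ℤ}

theorem period_mul_le (hn : n ≤ 1) : (6 * k + 9) * n ≤ 6 * k + 9 :=
  mul_le_of_le_one_right (by omega) hn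

theorem isGammaOne_startA (hn : n ≤ 1) : IsGammaOne k ((6 * k + 9) * n) :=
  have := period_mul_le (k := k) hn
  .inl ⟨by omega, .inl (dvd_mul_right _ _)⟩

theorem isGammaOne_startB (hn : n ≤ 1) : IsGammaOne k ((6 * k + 9) * n + (2 * k + 2)) :=
  have := period_mul_le (k := k) hn
  .inl ⟨by omega, .inr (.inl ⟨n, by ring⟩)⟩

theorem isGammaOne_startC (hn : n ≤ 1) : IsGammaOne k ((6 * k + 9) * n + (4 * k + 5)) :=
  have := period_mul_le (k := k) hn
  .inl ⟨by omega, .inr (.inr ⟨n, by ring⟩)⟩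

theorem not_isGammaOne (ht : t ≠ 12 * k + 16) (hl : (6 * k + 9) * n < t)
    (hu : t < (6 * k + 9) * n + (6 * k + 9)) (hB : t ≠ (6 * k + 9) * n + (2 * k + 2))
    (hC : t ≠ (6 * k + 9) * n + (4 * k + 5)) : ¬ IsGammaOne k t := by
  have hp : (0 : ℤ) < 6 * k + 9 := by omega
  have not_dvd {c : ℤ} (hc : 0 < c) (hc' : c < 6 * k + 9) (hne : t ≠ (6 * k + 9) * n + c) :
      ¬ (6 * k + 9 : ℤ) ∣ t - c := by
    rcases lt_or_gt_of_ne hne with hlt | hgt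
    · exact not_dvd_of_mul_lt_of_lt (n := n - 1) hp (by rw [mul_sub]; omega)
        (by rw [mul_sub]; omega)
    · exact not_dvd_of_mul_lt_of_lt (n := n) hp (by omega) (by omega)
  rintro (⟨-, hdvd | hdvd | hdvd⟩ | heq)
  · exact not_dvd_of_mul_lt_of_lt hp hl hu hdvd
  · exact not_dvd (by omega) (by omega) hB hdvd
  · exact not_dvd (by omega) (by omega) hC hdvd
  · exact ht heq

theorem isGammaOne_sub_period_iff {i : ℤ} (hi : i ≤ 10 * k + 14) :
    IsGammaOne k (i - (6 * k + 9)) ↔ IsGammaOne k i := by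
  have hdvd (c : ℤ) : (6 * k + 9 : ℤ) ∣ i - (6 * k + 9) - c ↔ (6 * k + 9 : ℤ) ∣ i - c := by
    rw [sub_right_comm, dvd_sub_self_right]
  have hle : i - (6 * k + 9) ≤ 10 * k + 14 := by omega
  have hne : i - (6 * k + 9) ≠ 12 * k + 16 := by omega
  have hne' : i ≠ 12 * k + 16 := by omega
  simp only [IsGammaOne, hdvd, dvd_sub_self_right, hi, hle, hne, hne', true_and, or_false]

theorem IsGammaOne.exists_eq {j : ℤ} (hj : IsGammaOne k j) :
    (∃ n ≤ 1, j = (6 * k + 9) * n) ∨ (∃ n ≤ 1, j = (6 * k + 9) * n + (2 * k + 2)) ∨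
      (∃ n ≤ 0, j = (6 * k + 9) * n + (4 * k + 5)) ∨ j = 10 * k + 14 ∨ j = 12 * k + 16 := by
  rcases hj with ⟨h, ⟨n, hn⟩ | ⟨n, hn⟩ | ⟨n, hn⟩⟩ | h
  · exact .inl ⟨n, by by_contra! hc; nlinarith, hn⟩
  · exact .inr (.inl ⟨n, by by_contra! hc; nlinarith, by linarith⟩)
  · have hn1 : n ≤ 1 := by by_contra! hc; nlinarith
    obtain hn0 | rfl : n ≤ 0 ∨ n = 1 := by omega
    · exact .inr (.inr (.inl ⟨n, hn0, by linarith⟩))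
    · exact .inr (.inr (.inr (.inl (by linarith))))
  · exact .inr (.inr (.inr (.inr h)))

/-- The block structure of `gammaDigit`: blocks `A`, `B`, `C` start at each multiple of the period
`6 * k + 9` up to the last period, which ends with the blocks `A`, `B`, `A` and digits `2`. -/
structure GammaBlocks (k : ℕ) (a : ℤ → ℕ) : Prop where
  blockA : ∀ n ≤ 1, TwosBlock a ((6 * k + 9) * n) ((6 * k + 9) * n + (2 * k + 2))
  blockB : ∀ n ≤ 1,
    TwosBlock a ((6 * k + 9) * n + (2 * k + 2)) ((6 * k + 9) * n + (4 * k + 5))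
  blockC : ∀ n ≤ 0, TwosBlock a ((6 * k + 9) * n + (4 * k + 5)) ((6 * k + 9) * (n + 1))
  last : TwosBlock a (10 * k + 14) (12 * k + 16)
  two_of_gt : ∀ i : ℤ, 12 * k + 16 < i → a i = 2
  isGammaOne : ∀ j, a j = 1 → IsGammaOne k j
  periodic : ∀ i : ℤ, i ≤ 10 * k + 14 → a (i - (6 * k + 9)) = a i

theorem twosBlock_gammaDigit {i j : ℤ} (hi : IsGammaOne k i) (hj : IsGammaOne k j)
    (hij : ∀ t, i < t → t < j → ¬ IsGammaOne k t) : TwosBlock (gammaDigit k) i j :=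
  ⟨gammaDigit_eq_one.2 hi, fun t ht ht' => gammaDigit_eq_two.2 (hij t ht ht'),
    gammaDigit_eq_one.2 hj⟩

theorem gammaBlocks_gammaDigit (k : ℕ) : GammaBlocks k (gammaDigit k) where
  blockA n hn := by
    have := period_mul_le (k := k) hn
    exact twosBlock_gammaDigit (isGammaOne_startA hn) (isGammaOne_startB hn) fun t ht ht' =>
      not_isGammaOne (n := n) (by omega) ht (by omega) (by omega) (by omega)
  blockB n hn := by
    have := period_mul_le (k := k) hn
    exact twosBlock_gammaDigit (isGammaOne_startB hn) (isGammaOne_startC hn) fun t ht ht' =>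
      not_isGammaOne (n := n) (by omega) (by omega) (by omega) (by omega) (by omega)
  blockC n hn := by
    have hle : (6 * k + 9) * n ≤ 0 := mul_nonpos_of_nonneg_of_nonpos (by omega) hn
    refine twosBlock_gammaDigit (isGammaOne_startC (by omega)) (isGammaOne_startA (by omega))
      fun t ht ht' => ?_
    rw [mul_add_one] at ht'
    exact not_isGammaOne (n := n) (by omega) (by omega) (by omega) (by omega) (by omega)
  last := by
    refine twosBlock_gammaDigit ?_ (.inr rfl) fun t ht ht' => ?_
    · convert isGammaOne_startC (k := k) le_rfl using 1
      ring
    · rintro (⟨h, -⟩ | h) <;> omega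
  two_of_gt i hi := gammaDigit_eq_two.2 (by rintro (⟨h, -⟩ | h) <;> omega)
  isGammaOne _ hj := gammaDigit_eq_one.1 hj
  periodic _ hi := by classical exact if_congr (isGammaOne_sub_period_iff hi) rfl rfl

end gammaBlocks

namespace TwoSidedCoords

variable {a : ℤ → ℕ} {f g : ℤ → ℝ}

theorem f_eq_zero (h : TwoSidedCoords a f g) {j : ℤ} (htwo : ∀ t, j < t → a t = 2) : f j = 0 := by
  have hzero : TailCoords (fun _ => 2) (fun _ => (0 : ℝ)) := by constructor <;> norm_num
  simpa using (h.tail j).eq_of_digits_eq hzero fun n => htwo _ (by omega)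

theorem g_eq_zero (h : TwoSidedCoords a f g) {j : ℤ} (htwo : ∀ t, t < j → a t = 2) : g j = 0 := by
  simpa using h.reverse.f_eq_zero (j := -j) fun t ht => htwo _ (by omega)

theorem g_eq_of_digits_eq (h : TwoSidedCoords a f g) {i j : ℤ}
    (hij : ∀ n : ℕ, a (i - 1 - n) = a (j - 1 - n)) : g i = g j := by
  simpa using (h.reverse.tail (-i)).eq_of_digits_eq (h.reverse.tail (-j)) fun n => by
    convert hij n using 2 <;> ring

end TwoSidedCoords

theorem Scale.neg_rho_pow_mul_oneMap_mem_Icc {k m : ℕ} {e s : ℝ} (hk : Scale k e)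
    (hm : 2 * k + 1 ≤ m) (hs : s ∈ Set.Icc (-0.0183) 0.1062) :
    (-rho) ^ m * oneMap s ∈ Set.Icc (-0.0000001) 0.0000001 := by
  obtain ⟨hl, hu⟩ := oneMap_mem_Icc_of_tail hs
  have hpow : |(-rho) ^ m| ≤ e := by
    rw [abs_pow, abs_neg, abs_of_pos rho_pos, ← hk.rho_pow]
    exact pow_le_pow_of_le_one rho_pos.le rho_lt_one.le hm
  have := hk.le_small
  rw [Set.mem_Icc, ← abs_le, abs_mul, abs_of_pos (a := oneMap s) (by linarith)]
  nlinarith [abs_nonneg ((-rho) ^ m)]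

namespace GammaBlocks

variable {k : ℕ} {a : ℤ → ℕ} {f g : ℤ → ℝ} {e : ℝ} {j : ℤ}

theorem exists_block_left (h : GammaBlocks k a) (hj : a j = 1) :
    ∃ i, ∃ m : ℕ, 2 * k + 1 ≤ m ∧ TwosBlock a i j ∧ j = i + m + 1 := by
  rcases (h.isGammaOne j hj).exists_eq with ⟨n, hn, rfl⟩ | ⟨n, hn, rfl⟩ | ⟨n, hn, rfl⟩ | rfl | rfl
  · exact ⟨_, 2 * k + 3, by omega, by simpa using h.blockC (n - 1) (by omega), by push_cast; ring⟩
  · exact ⟨_, 2 * k + 1, by omega, h.blockA n hn, by push_cast; ring⟩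
  · exact ⟨_, 2 * k + 2, by omega, h.blockB n (by omega), by push_cast; ring⟩
  · exact ⟨_, 2 * k + 2, by omega, by convert h.blockB 1 le_rfl using 1; ring, by push_cast; ring⟩
  · exact ⟨_, 2 * k + 1, by omega, h.last, by push_cast; ring⟩

theorem exists_block_right (h : GammaBlocks k a) (hj : a j = 1) :
    (∃ i, ∃ m : ℕ, 2 * k + 1 ≤ m ∧ TwosBlock a j i ∧ i = j + m + 1) ∨ j = 12 * k + 16 := by
  rcases (h.isGammaOne j hj).exists_eq with ⟨n, hn, rfl⟩ | ⟨n, hn, rfl⟩ | ⟨n, hn, rfl⟩ | rfl | rfl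
  · exact .inl ⟨_, 2 * k + 1, by omega, h.blockA n hn, by push_cast; ring⟩
  · exact .inl ⟨_, 2 * k + 2, by omega, h.blockB n hn, by push_cast; ring⟩
  · exact .inl ⟨_, 2 * k + 3, by omega, h.blockC n hn, by push_cast; ring⟩
  · exact .inl ⟨_, 2 * k + 1, by omega, h.last, by push_cast; ring⟩
  · exact .inr rfl

theorem two_right (h : GammaBlocks k a) (hj : a j = 1) {t : ℤ} (ht : j < t)
    (ht' : t ≤ j + (2 * k + 1)) : a t = 2 := by
  rcases h.exists_block_right hj with ⟨i, m, hm, hb, hi⟩ | rfl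
  · exact hb.two t ht (by omega)
  · exact h.two_of_gt t ht

theorem f_mem_Icc_small (h : GammaBlocks k a) (hc : TwoSidedCoords a f g) (hk : Scale k e)
    (hj : a j = 1) : f j ∈ Set.Icc (-0.0000001) 0.0000001 := by
  rcases h.exists_block_right hj with ⟨i, m, hm, hb, hi⟩ | rfl
  · rw [hc.f_eq_of_twosBlock hb rfl hi]
    exact hk.neg_rho_pow_mul_oneMap_mem_Icc hm (hc.f_mem_Icc _)
  · rw [hc.f_eq_zero h.two_of_gt]
    norm_num

theorem g_mem_Icc_small (h : GammaBlocks k a) (hc : TwoSidedCoords a f g) (hk : Scale k e)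
    (hj : a j = 1) : g j ∈ Set.Icc (-0.0000001) 0.0000001 := by
  obtain ⟨i, m, hm, hb, hi⟩ := h.exists_block_left hj
  rw [hc.g_eq_of_twosBlock hb rfl hi]
  exact hk.neg_rho_pow_mul_oneMap_mem_Icc hm (hc.g_mem_Icc _)

theorem rightWindow (h : GammaBlocks k a) : RightWindow k a 0 where
  block₁ := by simpa using h.blockA 0 zero_le_one
  block₂ := by simpa using h.blockB 0 zero_le_one
  block₃ := by simpa using h.blockC 0 le_rfl
  block₄ := by convert h.blockA 1 le_rfl using 1 <;> ring
  block₅ := by convert h.blockB 1 le_rfl using 1 <;> ring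
  two := h.last.two _ (by omega) (by omega)

theorem leftWindow (h : GammaBlocks k a) : LeftWindow k a 0 where
  block₁ := by convert h.blockC (-1) (by norm_num) using 1 <;> ring
  block₂ := by convert h.blockB (-1) (by norm_num) using 1 <;> ring
  block₃ := by convert h.blockA (-1) (by norm_num) using 1 <;> ring
  block₄ := by convert h.blockC (-2) (by norm_num) using 1 <;> ring
  two := (h.blockB (-2) (by norm_num)).two _ (by omega) (by omega)

theorem f_last_mem_Icc (h : GammaBlocks k a) (hc : TwoSidedCoords a f g) (hk : Scale k e) :
    f (10 * k + 14) ∈ Set.Icc (-0.0000001) (-0.09 * e) := by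
  refine ⟨(h.f_mem_Icc_small hc hk h.last.left).1, ?_⟩
  rw [hc.f_eq_of_twosBlock h.last hk.pow_A (by push_cast; ring), hc.f_eq_zero h.two_of_gt]
  nlinarith [oneMap_zero_mem_Icc.1, hk.pos]

theorem g_mem_Icc_zero (h : GammaBlocks k a) (hc : TwoSidedCoords a f g) (hk : Scale k e) :
    g (-(10 * k + 16)) ∈ Set.Icc (-0.0000001) 0 := by
  have hb : TwosBlock a (-(12 * k + 18)) (-(10 * k + 16)) := by
    convert h.blockA (-2) (by norm_num) using 1 <;> ring
  refine ⟨(h.g_mem_Icc_small hc hk hb.right).1, ?_⟩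
  rw [hc.g_eq_of_twosBlock hb hk.pow_A (by push_cast; ring)]
  nlinarith [(oneMap_mem_Icc_of_tail (hc.g_mem_Icc (-(12 * k + 18)))).1, hk.pos]

theorem exists_referenceTails (h : GammaBlocks k a) (hc : TwoSidedCoords a f g)
    (hk : ScaledDeviation k e (deviation (f 0) (g 0))) :
    ∃ u v, ReferenceTails k e (deviation (f 0) (g 0)) u v := by
  have hB : TwosBlock a (-(10 * k + 16)) (-(8 * k + 13)) := by
    convert h.blockB (-2) (by norm_num) using 1 <;> ring
  have hf := h.rightWindow.f_eq hc hk.toScale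
  have hg := h.leftWindow.g_eq hc hk.toScale
  have hr := h.rightWindow.chain hc hk.toScale
  have hl := h.leftWindow.chain hc hk.toScale
  simp only [zero_add] at hf hr
  simp only [zero_sub] at hg hl
  exact ⟨fun n => f (match n with
      | 1 => 2 * k + 2 | 2 => 4 * k + 5 | 3 => 6 * k + 9 | 4 => 8 * k + 11 | _ => 10 * k + 14),
    fun n => g (match n with
      | 1 => -(2 * k + 4) | 2 => -(4 * k + 7) | 3 => -(6 * k + 9) | 4 => -(8 * k + 13)
      | _ => -(10 * k + 16)),
    { toScaledDeviation := hk
      deviation_eq := (congrArg₂ deviation hf hg).symm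
      right := hr
      left := hl
      v_four := hc.g_eq_of_twosBlock hB hk.pow_B (by push_cast; ring)
      u_five := h.f_last_mem_Icc hc hk.toScale
      v_five := h.g_mem_Icc_zero hc hk.toScale }⟩

end GammaBlocks

/-! ### The points of the complement belong to the Markov spectrum -/

theorem deviation_le_deviation {u v u' v' : ℝ} (hu : -0.0183 ≤ u) (hv : -0.0183 ≤ v)
    (huu : u ≤ u') (hvv : v ≤ v') : deviation u' v' ≤ deviation u v := by
  have hrho := lt_rho
  have hu : u / (rho + u) ≤ u' / (rho + u') := by
    rw [div_le_div_iff₀ (by linarith) (by linarith)]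
    nlinarith
  have hv : v / (1 + v) ≤ v' / (1 + v') := by
    rw [div_le_div_iff₀ (by linarith) (by linarith)]
    nlinarith
  unfold deviation
  rw [mul_div_assoc, mul_div_assoc]
  linarith

section

variable {e u v : ℝ}

theorem deviation_le_of_nonneg_right (he : 0 < e) (he' : e ≤ 0.0000001)
    (hu : -0.0938372 * e ≤ u) (hv : 0 ≤ v) : deviation u v ≤ 1.0965 * e := by
  refine (deviation_le_deviation (by nlinarith) (by norm_num) hu hv).trans ?_
  have := lt_rho
  unfold deviation
  rw [zero_div, sub_zero, div_le_iff₀ (by linarith)]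
  nlinarith

theorem deviation_le_of_ge_left (he : 0 < e) (he' : e ≤ 0.0000001)
    (hu : -0.0028 * e ≤ u) (hv : -0.0938372 * e ≤ v) : deviation u v ≤ 1.0965 * e := by
  refine (deviation_le_deviation (by nlinarith) (by nlinarith) hu hv).trans ?_
  have := lt_rho
  have hleft : -2 * (-0.0028 * e) / (rho + -0.0028 * e) ≤ 0.1 * e := by
    rw [div_le_iff₀ (by linarith)]
    nlinarith
  have hright : -0.1 * e ≤ -0.0938372 * e / (1 + -0.0938372 * e) := by
    rw [le_div_iff₀ (by linarith)]
    nlinarith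
  unfold deviation
  linarith

theorem deviation_le_of_nonneg (he : 0 < e) (he' : e ≤ 0.0000001) (hu : -0.0938372 * e ≤ u)
    (hv : -0.0938372 * e ≤ v) (h : 0 ≤ u ∨ 0 ≤ v) :
    deviation u v ≤ 1.0965 * e ∧ deviation v u ≤ 1.0965 * e := by
  rcases h with h | h
  · exact ⟨deviation_le_of_ge_left he he' (by linarith) hv,
      deviation_le_of_nonneg_right he he' hv h⟩
  · exact ⟨deviation_le_of_nonneg_right he he' hu h,
      deviation_le_of_ge_left he he' (by linarith) hu⟩

theorem deviation_mem_Icc (he : 0 < e) (he' : e ≤ 0.0000001)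
    (hu : u ∈ Set.Icc (-0.0938372 * e) (-0.0938358 * e))
    (hv : v ∈ Set.Icc (-0.0027624 * e) (-0.0027622 * e)) :
    deviation u v ∈ Set.Icc (1.0965 * e) (1.0967 * e) := by
  have hlt := lt_rho
  have hlt' := rho_lt
  constructor
  · refine le_trans ?_
      (deviation_le_deviation (by linarith [hu.1]) (by linarith [hv.1]) hu.2 hv.2)
    have hleft : 1.09382 * e ≤ -2 * (-0.0938358 * e) / (rho + -0.0938358 * e) := by
      rw [le_div_iff₀ (by linarith)]
      nlinarith
    have hright := div_one_add_le_self (v := -0.0027622 * e) (by linarith)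
    unfold deviation
    linarith
  · refine (deviation_le_deviation (by linarith) (by linarith) hu.1 hv.1).trans ?_
    have hleft : -2 * (-0.0938372 * e) / (rho + -0.0938372 * e) ≤ 1.0939 * e := by
      rw [div_le_iff₀ (by linarith)]
      nlinarith
    have hright : -0.00277 * e ≤ -0.0027624 * e / (1 + -0.0027624 * e) := by
      rw [le_div_iff₀ (by linarith)]
      nlinarith
    unfold deviation
    linarith

theorem neg_mul_oneMap_mul_oneMap_le (he : 0 < e) {r s : ℝ} (hr : -0.0000001 ≤ r) (hrs : r ≤ s)
    (hs : s ≤ 0.0000001) :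
    -e * oneMap (e * rho * oneMap s) ≤ -e * oneMap (e * rho * oneMap r) := by
  have hB : 0 < e * rho := mul_pos he rho_pos
  have hle : e * rho * oneMap s ≤ e * rho * oneMap r := by
    gcongr
    exact oneMap_le_oneMap (by linarith) hrs
  have hnonneg : 0 ≤ e * rho * oneMap s :=
    mul_nonneg hB.le (by linarith [le_oneMap_of_le_small (s := s) (by linarith) hs])
  nlinarith [oneMap_le_oneMap (by linarith) hle]

end

namespace GammaBlocks

variable {k : ℕ} {a : ℤ → ℕ} {f g : ℤ → ℝ} {e : ℝ} {i j n : ℤ}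

theorem blockA_coords (h : GammaBlocks k a) (hc : TwoSidedCoords a f g) (hk : Scale k e)
    (hb : TwosBlock a i j) (hj : j = i + (2 * k + 1 : ℕ) + 1) :
    f i ∈ Set.Icc (-0.0938372 * e) (-0.0938358 * e) ∧
      g j ∈ Set.Icc (-0.0938372 * e) (-0.0938358 * e) := by
  have hf := h.f_mem_Icc_small hc hk hb.right
  have hg := h.g_mem_Icc_small hc hk hb.left
  rw [hc.f_eq_of_twosBlock hb hk.pow_A hj, hc.g_eq_of_twosBlock hb hk.pow_A hj]
  exact ⟨hk.blockA_mem_Icc hf.1 hf.2, hk.blockA_mem_Icc hg.1 hg.2⟩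

theorem blockB_coords (h : GammaBlocks k a) (hc : TwoSidedCoords a f g) (hk : Scale k e)
    (hb : TwosBlock a i j) (hj : j = i + (2 * k + 2 : ℕ) + 1) :
    f i ∈ Set.Icc (0.016099 * e) (0.016101 * e) ∧
      g j ∈ Set.Icc (0.016099 * e) (0.016101 * e) := by
  have hf := h.f_mem_Icc_small hc hk hb.right
  have hg := h.g_mem_Icc_small hc hk hb.left
  rw [hc.f_eq_of_twosBlock hb hk.pow_B hj, hc.g_eq_of_twosBlock hb hk.pow_B hj]
  exact ⟨hk.blockB_mem_Icc hf.1 hf.2, hk.blockB_mem_Icc hg.1 hg.2⟩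

theorem blockC_coords (h : GammaBlocks k a) (hc : TwoSidedCoords a f g) (hk : Scale k e)
    (hb : TwosBlock a i j) (hj : j = i + (2 * k + 3 : ℕ) + 1) :
    f i ∈ Set.Icc (-0.0027624 * e) (-0.0027622 * e) ∧
      g j ∈ Set.Icc (-0.0027624 * e) (-0.0027622 * e) := by
  have hf := h.f_mem_Icc_small hc hk hb.right
  have hg := h.g_mem_Icc_small hc hk hb.left
  rw [hc.f_eq_of_twosBlock hb hk.pow_C hj, hc.g_eq_of_twosBlock hb hk.pow_C hj]
  exact ⟨hk.blockC_mem_Icc hf.1 hf.2, hk.blockC_mem_Icc hg.1 hg.2⟩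

theorem g_zero_mem_Icc (h : GammaBlocks k a) (hc : TwoSidedCoords a f g) (hk : Scale k e) :
    g 0 ∈ Set.Icc (-0.0027624 * e) (-0.0027622 * e) :=
  (h.blockC_coords hc hk h.leftWindow.block₁ (by push_cast; ring)).2

theorem scaledDeviation (h : GammaBlocks k a) (hc : TwoSidedCoords a f g) (hk : Scale k e) :
    ScaledDeviation k e (deviation (f 0) (g 0)) :=
  have := deviation_mem_Icc hk.pos hk.le_small
    (h.blockA_coords hc hk h.rightWindow.block₁ (by push_cast; ring)).1 (h.g_zero_mem_Icc hc hk)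
  { toScale := hk, mul_le := this.1, le_mul := this.2 }

theorem sub_period_mul (h : GammaBlocks k a) (hi : i ≤ 10 * k + 14) (t : ℕ) :
    a (i - (6 * k + 9) * t) = a i := by
  induction t with
  | zero => simp
  | succ t ih =>
    rw [← ih, ← h.periodic (i - (6 * k + 9) * t) (by nlinarith)]
    congr 1
    push_cast
    ring

theorem g_period_mul (h : GammaBlocks k a) (hc : TwoSidedCoords a f g) (hn : n ≤ 1) :
    g ((6 * k + 9) * n) = g 0 := by
  have eq_last (t : ℕ) : g (6 * k + 9 - (6 * k + 9) * t) = g (6 * k + 9) :=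
    hc.g_eq_of_digits_eq fun m => by
      rw [← h.sub_period_mul (i := 6 * k + 9 - 1 - m) (by omega) t]
      congr 1
      ring
  obtain ⟨t, rfl⟩ : ∃ t : ℕ, n = 1 - t := ⟨(1 - n).toNat, by omega⟩
  rw [mul_sub, mul_one, eq_last t]
  simpa using (eq_last 1).symm

theorem f_eq_neg_mul_oneMap_mul_oneMap (h : GammaBlocks k a) (hc : TwoSidedCoords a f g)
    (hk : Scale k e) (hn : n ≤ 1) : f ((6 * k + 9) * n) =
      -e * oneMap (e * rho * oneMap (f ((6 * k + 9) * n + (4 * k + 5)))) := by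
  rw [hc.f_eq_of_twosBlock (h.blockA n hn) hk.pow_A (by push_cast; ring),
    hc.f_eq_of_twosBlock (h.blockB n hn) hk.pow_B (by push_cast; ring)]

theorem f_period_mul_le_last (h : GammaBlocks k a) (hc : TwoSidedCoords a f g) (hk : Scale k e)
    (hn : n ≤ 0) : f ((6 * k + 9) * n) ≤ f ((6 * k + 9) * 1) := by
  have hlast := (h.blockA_coords hc hk h.last (by push_cast; ring)).1
  have hC := (h.blockC_coords hc hk (h.blockC n hn) (by push_cast; ring)).1
  rw [h.f_eq_neg_mul_oneMap_mul_oneMap hc hk (hn.trans zero_le_one),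
    h.f_eq_neg_mul_oneMap_mul_oneMap hc hk le_rfl,
    show (6 * k + 9 : ℤ) * 1 + (4 * k + 5) = 10 * k + 14 by ring]
  have := hk.pos
  have := hk.le_small
  exact neg_mul_oneMap_mul_oneMap_le hk.pos (by linarith [hlast.1]) (by linarith [hlast.2, hC.1])
    (by linarith [hC.2])

theorem f_zero_le_f_period_mul (h : GammaBlocks k a) (hc : TwoSidedCoords a f g) (hk : Scale k e)
    (hn : n ≤ 1) : f 0 ≤ f ((6 * k + 9) * n) := by
  have := hk.pos
  have := hk.le_small
  rw [← mul_zero (6 * k + 9 : ℤ)]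
  obtain rfl | rfl | hneg : n = 1 ∨ n = 0 ∨ n < 0 := by omega
  · exact h.f_period_mul_le_last hc hk le_rfl
  · exact le_rfl
  have hC := (h.blockC_coords hc hk (h.blockC n hneg.le) (by push_cast; ring)).1
  have hC₀ := (h.blockC_coords hc hk (h.blockC 0 le_rfl) (by push_cast; ring)).1
  rw [h.f_eq_neg_mul_oneMap_mul_oneMap hc hk zero_le_one,
    h.f_eq_neg_mul_oneMap_mul_oneMap hc hk hn]
  refine neg_mul_oneMap_mul_oneMap_le hk.pos (by linarith [hC.1]) ?_ (by linarith [hC₀.2])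
  rw [hc.f_eq_of_twosBlock (h.blockC n hneg.le) hk.pow_C (by push_cast; ring),
    hc.f_eq_of_twosBlock (h.blockC 0 le_rfl) hk.pow_C (by push_cast; ring), zero_add,
    neg_mul, neg_mul, neg_le_neg_iff]
  gcongr
  exact oneMap_le_oneMap (by linarith [(hc.f_mem_Icc ((6 * k + 9) * (n + 1))).1])
    (h.f_period_mul_le_last hc hk (by omega))

theorem deviation_le (h : GammaBlocks k a) (hc : TwoSidedCoords a f g) (hk : Scale k e)
    (hj : a j = 1) : deviation (f j) (g j) ≤ deviation (f 0) (g 0) ∧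
      deviation (g j) (f j) ≤ deviation (f 0) (g 0) := by
  have he := hk.pos
  have hθ := (h.scaledDeviation hc hk).mul_le
  have of_nonneg (hf : -0.0938372 * e ≤ f j) (hg : -0.0938372 * e ≤ g j)
      (hnonneg : 0 ≤ f j ∨ 0 ≤ g j) : deviation (f j) (g j) ≤ deviation (f 0) (g 0) ∧
        deviation (g j) (f j) ≤ deviation (f 0) (g 0) :=
    (deviation_le_of_nonneg he hk.le_small hf hg hnonneg).imp (·.trans hθ) (·.trans hθ)
  rcases (h.isGammaOne j hj).exists_eq with
    ⟨n, hn, rfl⟩ | ⟨n, hn, rfl⟩ | ⟨n, hn, rfl⟩ | rfl | rfl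
  · rw [h.g_period_mul hc hn]
    have hf := (h.blockA_coords hc hk (h.blockA n hn) (by push_cast; ring)).1.1
    have hg := (h.g_zero_mem_Icc hc hk).1
    exact ⟨deviation_le_deviation (hc.f_mem_Icc _).1 (hc.g_mem_Icc _).1
        (h.f_zero_le_f_period_mul hc hk hn) le_rfl,
      (deviation_le_of_ge_left he hk.le_small (by linarith) hf).trans hθ⟩
  · have hf := (h.blockB_coords hc hk (h.blockB n hn) (by push_cast; ring)).1.1
    have hg := (h.blockA_coords hc hk (h.blockA n hn) (by push_cast; ring)).2.1
    exact of_nonneg (by linarith) hg (.inl (by linarith))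
  · have hf := (h.blockC_coords hc hk (h.blockC n hn) (by push_cast; ring)).1.1
    have hg := (h.blockB_coords hc hk (h.blockB n (by omega)) (by push_cast; ring)).2.1
    exact of_nonneg (by linarith) (by linarith) (.inr (by linarith))
  · have hf := (h.blockA_coords hc hk h.last (by push_cast; ring)).1.1
    have hb : TwosBlock a (8 * k + 11) (10 * k + 14) := by simpa using h.rightWindow.block₅
    have hg := (h.blockB_coords hc hk hb (by push_cast; ring)).2.1
    exact of_nonneg hf (by linarith) (.inr (by linarith))
  · have hf := hc.f_eq_zero h.two_of_gt
    have hg := (h.blockA_coords hc hk h.last (by push_cast; ring)).2.1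
    exact of_nonneg (by linarith) hg (.inl hf.ge)

end GammaBlocks

theorem TwoSidedCF.height_le_of_deviation_le {a : ℤ → ℕ} {x y : ℤ → ℝ} (h : TwoSidedCF a x y)
    (hdigit : ∀ i, a i = 1 ∨ a i = 2) {θ : ℝ} (hθ : 0 ≤ θ)
    (hj : ∀ j, a j = 1 → deviation (coord (x (j + 1))) (coord (y (j - 1))) ≤ θ ∧
      deviation (coord (y (j - 1))) (coord (x (j + 1))) ≤ θ) (i : ℤ) :
    height a x y i ≤ 1 + 3 / √2 + √2 * θ := by
  have hthree := three_lt_one_add hθ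
  rcases hdigit i with hi | hi
  · exact ((h.height_lt_three_of_one hi).trans hthree).le
  rcases hdigit (i - 1) with hprev | hprev
  · rw [← sub_add_cancel i 1, h.height_add_one hprev]
    gcongr
    exact (hj _ hprev).1
  rcases hdigit (i + 1) with hnext | hnext
  · rw [← add_sub_cancel_right i 1, h.height_sub_one hnext]
    gcongr
    exact (hj _ hnext).2
  exact ((h.height_lt_three_of_two hi hprev hnext).trans hthree).le

theorem exists_scaledDeviation_mem_diff {k : ℕ} (hk : Scale k (rho ^ (2 * k + 1))) :
    ∃ θ, ScaledDeviation k (rho ^ (2 * k + 1)) θ ∧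
      1 + 3 / √2 + √2 * θ ∈ MarkovSpectrum \ LagrangeSpectrum := by
  have hG := gammaBlocks_gammaDigit k
  have hdigit := gammaDigit_eq_one_or_two k
  obtain ⟨x, y, h⟩ := TwoSidedCF.exists (a := gammaDigit k) fun i => by
    rcases hdigit i with h | h <;> omega
  have hc := h.twoSidedCoords hdigit fun i hone _ =>
    hG.two_right hone (by omega) (by linarith [hk.one_le])
  have hdev := hG.scaledDeviation hc hk
  obtain ⟨u, v, ht⟩ := hG.exists_referenceTails hc hdev
  refine ⟨_, hdev, ?_, ht.notMem_lagrangeSpectrum⟩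
  have hle := h.height_le_of_deviation_le hdigit hdev.nonneg
    fun j hj => hG.deviation_le hc hk hj
  refine (h.shift 1).mem_markovSpectrum (fun i => ?_) ?_
  · rw [TwoSidedCF.height_shift]
    exact hle _
  · rw [TwoSidedCF.height_shift, h.height_add_one hG.rightWindow.block₁.left]

/-! ### The accumulation point -/

open Classical in
/-- The digits of a number of Lagrange value `1 + 3 / √2`: the digit `1` occurs exactly at the
squares, hence at most once in every limit of the shifted sequence. -/
noncomputable def squareDigit (n : ℕ) : ℕ := if IsSquare n then 1 else 2

theorem squareDigit_eq_one {n : ℕ} : squareDigit n = 1 ↔ IsSquare n := by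
  unfold squareDigit
  split_ifs with h <;> simp [h]

theorem squareDigit_eq_one_or_two (n : ℕ) : squareDigit n = 1 ∨ squareDigit n = 2 := by
  unfold squareDigit
  split_ifs <;> simp

theorem one_le_squareDigit (n : ℕ) : 1 ≤ squareDigit n := by
  rcases squareDigit_eq_one_or_two n with h | h <;> omega

theorem le_mul_self_of_isSquare_of_lt {m n d : ℕ} (hm : IsSquare m) (hn : IsSquare n) (h : m < n)
    (hd : n ≤ m + d) : m ≤ d * d := by
  obtain ⟨s, rfl⟩ := hm
  obtain ⟨t, rfl⟩ := hn
  have hst : s < t := Nat.mul_self_lt_mul_self_iff.1 h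
  exact Nat.mul_self_le_mul_self (by nlinarith)

section limit

variable {b : ℤ → ℕ} {X Y : ℤ → ℝ} {F : Ultrafilter ℕ}

theorem eq_of_squareDigit_limit (hF : (F : Filter ℕ) ≤ atTop)
    (hb : ∀ i : ℤ, ∀ᶠ n : ℕ in (F : Filter ℕ), squareDigit (n + i).toNat = b i) {i j : ℤ}
    (hi : b i = 1) (hj : b j = 1) : i = j := by
  by_contra hne
  wlog hij : i < j generalizing i j
  · exact this hj hi (Ne.symm hne) (by omega)
  have hlarge : ∀ᶠ n : ℕ in (F : Filter ℕ), (j - i).toNat * (j - i).toNat + 1 + i.natAbs ≤ n :=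
    hF (eventually_ge_atTop _)
  obtain ⟨n, ⟨hni, hnj⟩, hn⟩ := (((hb i).and (hb j)).and hlarge).exists
  rw [hi, squareDigit_eq_one] at hni
  rw [hj, squareDigit_eq_one] at hnj
  have := le_mul_self_of_isSquare_of_lt hni hnj (by omega) (d := (j - i).toNat) (by omega)
  omega

namespace TwoSidedCF

theorem twoSidedCoords_of_subsingleton (h : TwoSidedCF b X Y) (hdigit : ∀ i, b i = 1 ∨ b i = 2)
    (hone : {i | b i = 1}.Subsingleton) :
    TwoSidedCoords b (fun i => coord (X (i + 1))) (fun i => coord (Y (i - 1))) :=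
  h.twoSidedCoords hdigit fun i hi _ =>
    (hdigit _).resolve_left fun hi' => by have := hone hi hi'; omega

theorem deviation_eq_zero_of_subsingleton (h : TwoSidedCF b X Y)
    (hdigit : ∀ i, b i = 1 ∨ b i = 2) (hone : {i | b i = 1}.Subsingleton) {j : ℤ}
    (hj : b j = 1) : deviation (coord (X (j + 1))) (coord (Y (j - 1))) = 0 ∧
      deviation (coord (Y (j - 1))) (coord (X (j + 1))) = 0 := by
  have hc := h.twoSidedCoords_of_subsingleton hdigit hone
  have htwo (t : ℤ) (ht : t ≠ j) : b t = 2 :=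
    (hdigit t).resolve_left fun ht' => ht (hone ht' hj)
  have hf : coord (X (j + 1)) = 0 := hc.f_eq_zero fun t ht => htwo t ht.ne'
  have hg : coord (Y (j - 1)) = 0 := hc.g_eq_zero fun t ht => htwo t ht.ne
  rw [hf, hg]
  simp [deviation]

theorem height_le_of_subsingleton (h : TwoSidedCF b X Y) (hdigit : ∀ i, b i = 1 ∨ b i = 2)
    (hone : {i | b i = 1}.Subsingleton) (i : ℤ) : height b X Y i ≤ 1 + 3 / √2 := by
  simpa using h.height_le_of_deviation_le hdigit le_rfl
    (fun j hj => (h.deviation_eq_zero_of_subsingleton hdigit hone hj).imp Eq.le Eq.le) i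

theorem height_eq_of_subsingleton (h : TwoSidedCF b X Y) (hdigit : ∀ i, b i = 1 ∨ b i = 2)
    (hone : {i | b i = 1}.Subsingleton) {j : ℤ} (hj : b j = 1) :
    height b X Y (j + 1) = 1 + 3 / √2 := by
  rw [h.height_add_one hj, (h.deviation_eq_zero_of_subsingleton hdigit hone hj).1, mul_zero,
    add_zero]

end TwoSidedCF

end limit

namespace OneSidedCF

variable {x y : ℕ → ℝ}

theorem exists_tendsto_height_squareDigit (h : OneSidedCF squareDigit x y) (F : Ultrafilter ℕ)
    (hF : (F : Filter ℕ) ≤ atTop) :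
    ∃ L : ℝ, Tendsto (height squareDigit x y) F (𝓝 L) ∧ L ≤ 1 + 3 / √2 ∧
      ((∀ᶠ n : ℕ in (F : Filter ℕ), squareDigit (n - 1) = 1) → L = 1 + 3 / √2) := by
  obtain ⟨b, X, Y, hB, hdigit, hheight⟩ := h.exists_twoSidedCF_limit F hF (B := 2) <|
    .of_forall fun n => by rcases squareDigit_eq_one_or_two n with h | h <;> omega
  have hone : {i | b i = 1}.Subsingleton := fun _ hi _ hj =>
    eq_of_squareDigit_limit hF hdigit hi hj
  have hb (i : ℤ) : b i = 1 ∨ b i = 2 := by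
    obtain ⟨n, hn⟩ := (hdigit i).exists
    exact hn ▸ squareDigit_eq_one_or_two _
  refine ⟨TwoSidedCF.height b X Y 0, by simpa using hheight 0,
    hB.height_le_of_subsingleton hb hone 0, fun hprev => ?_⟩
  have hprev : b (-1) = 1 := by
    obtain ⟨n, ⟨hn, hn'⟩, -⟩ :=
      (((hdigit (-1)).and hprev).and (hF (eventually_ge_atTop 1))).exists
    rw [← hn, ← hn']
    congr 1
    omega
  simpa using hB.height_eq_of_subsingleton hb hone hprev

theorem limsup_height_squareDigit_le (h : OneSidedCF squareDigit x y) :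
    limsup (fun n => ENNReal.ofReal (height squareDigit x y n)) atTop ≤
      ENNReal.ofReal (1 + 3 / √2) := by
  by_contra! hlt
  obtain ⟨c, hc, hlt⟩ := exists_between hlt
  obtain ⟨F, hF, hfreq⟩ := exists_ultrafilter_of_frequently
    (frequently_lt_of_lt_limsup (by isBoundedDefault) hlt)
  obtain ⟨L, hL, hle, -⟩ := h.exists_tendsto_height_squareDigit F hF
  have hcL := ge_of_tendsto (ENNReal.tendsto_ofReal hL) (hfreq.mono fun _ hn => hn.le)
  exact (hc.trans_le hcL).not_ge (ENNReal.ofReal_le_ofReal hle)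

theorem le_limsup_height_squareDigit (h : OneSidedCF squareDigit x y) :
    ENNReal.ofReal (1 + 3 / √2) ≤
      limsup (fun n => ENNReal.ofReal (height squareDigit x y n)) atTop := by
  by_contra! hlt
  obtain ⟨c, hlt, hc⟩ := exists_between hlt
  obtain ⟨F, hF, hsquare⟩ := exists_ultrafilter_of_frequently
    (P := fun n => squareDigit (n - 1) = 1) <| frequently_atTop.2 fun N =>
      ⟨N * N + 1, by nlinarith, squareDigit_eq_one.2 ⟨N, rfl⟩⟩
  obtain ⟨L, hL, -, heq⟩ := h.exists_tendsto_height_squareDigit F hF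
  have hLc := le_of_tendsto (ENNReal.tendsto_ofReal hL)
    (((eventually_lt_of_limsup_lt hlt).filter_mono hF).mono fun _ hn => hn.le)
  exact hc.not_ge (heq hsquare ▸ hLc)

theorem exists_of_one_le {a : ℕ → ℕ} (ha : ∀ n, 1 ≤ a n) :
    ∃ x y, OneSidedCF a x y ∧ y 0 = 0 := by
  obtain ⟨x, hx⟩ := exists_mul_eq_one (a := fun i => a i.toNat) fun i => ha _
  exact ⟨fun n => x n, backward a,
    { one_le := ha
      x_pos := fun n => (hx n).1
      x_lt_one := fun n => (hx n).2.1
      x_mul := fun n => mod_cast (hx n).2.2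
      y_nonneg := backward_nonneg a
      y_mul := backward_succ_mul ha }, rfl⟩

end OneSidedCF

theorem one_add_mem_lagrangeSpectrum : 1 + 3 / √2 ∈ LagrangeSpectrum := by
  obtain ⟨x, y, h, hy⟩ := OneSidedCF.exists_of_one_le one_le_squareDigit
  have hval : lagrangeVal (x 0) = ENNReal.ofReal (1 + 3 / √2) := by
    rw [h.lagrangeVal_eq_limsup_height hy]
    exact h.limsup_height_squareDigit_le.antisymm h.le_limsup_height_squareDigit
  refine ⟨x 0, h.irrational, ?_, ?_⟩
  · rw [hval]
    exact ENNReal.ofReal_ne_top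
  · rw [hval, ENNReal.toReal_ofReal (by positivity)]

theorem one_add_mem_closure : 1 + 3 / √2 ∈ closure (MarkovSpectrum \ LagrangeSpectrum) := by
  have hscale : Tendsto (fun k : ℕ => rho ^ (2 * k + 1)) atTop (𝓝 0) :=
    (tendsto_pow_atTop_nhds_zero_of_lt_one rho_pos.le rho_lt_one).comp
      (tendsto_atTop_mono (fun k => (by omega : k ≤ 2 * k + 1)) tendsto_id)
  rw [Metric.mem_closure_iff]
  intro ε hε
  obtain ⟨k, ⟨hk, hsmall⟩, hkε⟩ := (((eventually_ge_atTop 1).and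
    (hscale.eventually_le_const (by norm_num : (0 : ℝ) < 0.0000001))).and
      (hscale.eventually_lt_const (half_pos hε))).exists
  obtain ⟨θ, hθ, hmem⟩ := exists_scaledDeviation_mem_diff ⟨hk, rfl, hsmall⟩
  refine ⟨_, hmem, ?_⟩
  have hpos := hθ.nonneg
  have hle := hθ.le_mul
  have := sqrt_two_lt
  rw [Real.dist_eq, sub_add_cancel_left, abs_neg, abs_of_nonneg (by positivity)]
  nlinarith

end MarkovLagrange

/-- `1 + 3/√2` belongs to `L` and to the closure of `M ∖ L`; consequently `M ∖ L` is not
closed. -/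
theorem M_diff_L_not_closed :
    (1 + 3 / Real.sqrt 2) ∈ LagrangeSpectrum ∧
    (1 + 3 / Real.sqrt 2) ∈ closure (MarkovSpectrum \ LagrangeSpectrum) ∧
    ¬ IsClosed (MarkovSpectrum \ LagrangeSpectrum) := by
  refine ⟨MarkovLagrange.one_add_mem_lagrangeSpectrum, MarkovLagrange.one_add_mem_closure,
    fun hclosed => ?_⟩
  have hmem := MarkovLagrange.one_add_mem_closure
  rw [hclosed.closure_eq] at hmem
  exact hmem.2 MarkovLagrange.one_add_mem_lagrangeSpectrum
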